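/- arXiv:1711.00998 — 3 statements merged into one kernel-verified Lean document; each statement's English description precedes it below -/
import Mathlib

section
/- Fix a k-dimensional subspace E of ℝ^n (1 ≤ k ≤ n), a unit vector θ ∈ E ∩ S^{n-1}, and γ ∈ (0,∞). Let f : ℝ^n → [0,∞) be a γ-concave function with 0 < ∫_{ℝ^n} f(x) dx < ∞ and centroid at the origin. Then ∫_{E ∩ θ^+} f(x) dx ≥ ((kγ+1)/((n+1)γ+1))^{(kγ+1)/γ} · ∫_E f(x) dx, where the integrals over E and E ∩ θ^+ are with respect to k-dimensional Lebesgue measure on E. -/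
open MeasureTheory Set
open scoped RealInnerProductSpace
open Filter Topology Module
open scoped ENNReal NNReal Pointwise

/-!
Let `φ` be `γ`-concave on an `n`-dimensional space with centroid `0`, let `E` be a `k`-dimensional
subspace and `u` a linear functional on `E`. Consider `S x = ∫_E φ (x + z) dz` and
`R x = ∫_{E ∩ {u ≥ 0}} φ (x + z) dz`, both `q`-concave for `q = γ / (1 + k γ)` by the
Borell–Brascamp–Lieb inequality.

* Jensen's inequality for the concave function `R ^ q` gives `∫ R ^ q φ ≤ R(0) ^ q ∫ φ`.
* On each translate of `E`, integrating the `q`-th power of the tail of `φ` in direction `u`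
  gives `S ^ (1 + q) ≤ (1 + q) ∫_E R ^ q φ`.
* On a complement `W` of `E`, of dimension `d = n - k`, concavity of `S ^ q` bounds `S` from below
  along each ray. Comparing the integral of `S` with those of its dilations gives
  `(1 + q) S(0) ^ q ∫_W S ≤ (1 + q (d + 1)) ∫_W S ^ (1 + q)`.

Since `∫_W S = ∫ φ`, combining the three gives `S(0) ^ q ≤ (1 + q (d + 1)) R(0) ^ q`.
-/

section PowConcave

variable {X Y : Type*} [AddCommGroup X] [Module ℝ X] [AddCommGroup Y] [Module ℝ Y]

/-- `γ`-concavity of an extended nonnegative function, for `γ > 0`: its `γ`-th power is concave on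
its support. Weights are taken in `ℝ≥0`, the scalars that act on `ℝ≥0∞`. -/
def PowConcave (γ : ℝ) (f : X → ℝ≥0∞) : Prop :=
  ConcaveOn ℝ≥0 (Function.support f) fun x => f x ^ γ

lemma powConcave_iff {γ : ℝ} (hγ : 0 < γ) {f : X → ℝ≥0∞} :
    PowConcave γ f ↔ ∀ ⦃x y⦄, f x ≠ 0 → f y ≠ 0 → ∀ ⦃a b : ℝ≥0⦄, 0 < a → 0 < b → a + b = 1 →
      a * f x ^ γ + b * f y ^ γ ≤ f (a • x + b • y) ^ γ := by
  rw [PowConcave, concaveOn_iff_forall_pos]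
  refine ⟨fun h x y hx hy a b ha hb hab => h.2 hx hy ha hb hab,
    fun h => ⟨convex_iff_forall_pos.2 fun x hx y hy a b ha hb hab hxy => ?_,
      fun x hx y hy a b ha hb hab => h hx hy ha hb hab⟩⟩
  have := h hx hy ha hb hab
  simp_all [ENNReal.zero_rpow_of_pos, ENNReal.rpow_eq_zero_iff, hγ.not_gt, ha.ne']

namespace PowConcave

variable {γ : ℝ} {f : X → ℝ≥0∞}

lemma convex_support (hf : PowConcave γ f) : Convex ℝ (Function.support f) :=
  NNReal.convex_iff.1 hf.1

lemma convex_superlevel (hf : PowConcave γ f) (hγ : 0 < γ) (c : ℝ≥0∞) :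
    Convex ℝ {x | c ≤ f x} := by
  rcases eq_or_ne c 0 with rfl | hc
  · simpa using convex_univ
  convert NNReal.convex_iff.1 (ConcaveOn.convex_ge hf (c ^ γ)) using 1
  ext x
  simp only [mem_ofPred_eq, Function.mem_support, ENNReal.rpow_le_rpow_iff hγ]
  exact ⟨fun h => ⟨(hc.bot_lt.trans_le h).ne', h⟩, And.right⟩

lemma comp_linearMap (hf : PowConcave γ f) (L : Y →ₗ[ℝ] X) : PowConcave γ (f ∘ L) :=
  ConcaveOn.comp_linearMap hf (L.restrictScalars ℝ≥0)

lemma comp_add_left (hf : PowConcave γ f) (x₀ : X) : PowConcave γ fun x => f (x₀ + x) :=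
  ConcaveOn.translate_right hf x₀

lemma indicator (hf : PowConcave γ f) {C : Set X} (hC : Convex ℝ C) :
    PowConcave γ (C.indicator f) := by
  rw [PowConcave, support_indicator]
  refine (hf.subset inter_subset_right ?_).congr fun x hx => ?_
  · exact NNReal.convex_iff.2 (hC.inter hf.convex_support)
  · simp [indicator_of_mem hx.1]

lemma const_mul {F : X → ℝ≥0∞} (hF : PowConcave γ F) (hγ : 0 < γ) (c : ℝ≥0∞) :
    PowConcave γ fun x => c * F x := by
  rw [powConcave_iff hγ] at hF ⊢
  intro x y hx hy a b ha hb hab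
  simp only [ENNReal.mul_rpow_of_nonneg _ _ hγ.le]
  calc a * (c ^ γ * F x ^ γ) + b * (c ^ γ * F y ^ γ) = c ^ γ * (a * F x ^ γ + b * F y ^ γ) := by
        ring
    _ ≤ c ^ γ * F (a • x + b • y) ^ γ := by
        gcongr
        exact hF (right_ne_zero_of_mul hx) (right_ne_zero_of_mul hy) ha hb hab

lemma comp_prodMk {F : X × Y → ℝ≥0∞} (hF : PowConcave γ F) (x : X) :
    PowConcave γ fun y => F (x, y) := by
  simpa [Function.comp_def] using (hF.comp_add_left (x, 0)).comp_linearMap (LinearMap.inr ℝ X Y)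

lemma comp_add_coe (hf : PowConcave γ f) (E : Submodule ℝ X) :
    PowConcave γ fun p : X × E => f (p.1 + p.2) := by
  simpa [Function.comp_def] using
    hf.comp_linearMap (LinearMap.coprod (LinearMap.id : X →ₗ[ℝ] X) E.subtype)

lemma aemeasurable {V : Type*} [NormedAddCommGroup V] [NormedSpace ℝ V] [FiniteDimensional ℝ V]
    [MeasurableSpace V] [BorelSpace V] {f : V → ℝ≥0∞} (hf : PowConcave γ f) (hγ : 0 < γ)
    (μ : Measure V) [μ.IsAddHaarMeasure] : AEMeasurable f μ :=
  NullMeasurable.aemeasurable <| show @Measurable (NullMeasurableSpace V μ) _ _ _ f from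
    measurable_of_Ici fun c => (hf.convex_superlevel hγ c).nullMeasurableSet μ

end PowConcave

end PowConcave

section RealLine

lemma ediam_le_volume_of_ordConnected {C : Set ℝ} (hC : C.OrdConnected) :
    Metric.ediam C ≤ volume C :=
  Metric.ediam_le fun x hx y hy => by
    rw [edist_comm, edist_dist, Real.dist_eq, ← Real.volume_interval]
    exact measure_mono (hC.uIcc_subset hx hy)

/-- Diameters are additive under sums of sets of reals, bound volumes of all sets, and equal the
volume for intervals. -/
lemma volume_add_volume_le {A B C : Set ℝ} (hA : A.Nonempty) (hB : B.Nonempty)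
    (hC : C.OrdConnected) (h : A + B ⊆ C) : volume A + volume B ≤ volume C := by
  have edist_add_edist_le : ∀ p ∈ A ×ˢ A, ∀ r ∈ B ×ˢ B,
      edist p.1 p.2 + edist r.1 r.2 ≤ Metric.ediam C := by
    rintro ⟨x, y⟩ ⟨hx, hy⟩ ⟨z, w⟩ ⟨hz, hw⟩
    have habs : |x - y| + |z - w| = max |x + z - (y + w)| |x + w - (y + z)| := by
      rw [show x + z - (y + w) = (x - y) + (z - w) by ring,
        show x + w - (y + z) = (x - y) - (z - w) by ring]
      grind
    simp only [edist_dist, Real.dist_eq]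
    rw [← ENNReal.ofReal_add (abs_nonneg _) (abs_nonneg _), habs, ENNReal.ofReal_max]
    simp only [← Real.dist_eq, ← edist_dist]
    exact max_le (Metric.edist_le_ediam_of_mem (h (add_mem_add hx hz)) (h (add_mem_add hy hw)))
      (Metric.edist_le_ediam_of_mem (h (add_mem_add hx hw)) (h (add_mem_add hy hz)))
  have ediam_eq : ∀ S : Set ℝ, Metric.ediam S = ⨆ p ∈ S ×ˢ S, edist p.1 p.2 := fun S => by
    rw [Metric.ediam, biSup_prod]
  calc volume A + volume B ≤ Metric.ediam A + Metric.ediam B := by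
        gcongr <;> exact Real.volume_le_diam _
    _ ≤ Metric.ediam C := by
        rw [ediam_eq A, ediam_eq B]
        exact ENNReal.biSup_add_biSup_le (hA.prod hA) (hB.prod hB) edist_add_edist_le
    _ ≤ volume C := ediam_le_volume_of_ordConnected hC

lemma smul_volume_add_smul_volume_le {A B C : Set ℝ} (hA : A.Nonempty) (hB : B.Nonempty)
    (hC : C.OrdConnected) {a b : ℝ≥0} (h : a • A + b • B ⊆ C) :
    a * volume A + b * volume B ≤ volume C := by
  simpa [Measure.addHaar_nnreal_smul] using
    volume_add_volume_le (hA.smul_set (a := a)) (hB.smul_set (a := b)) hC h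

lemma lintegral_min_one_eq {α : Type*} [MeasurableSpace α] {μ : Measure α} {ψ : α → ℝ≥0∞}
    (hψ : AEMeasurable ψ μ) :
    ∫⁻ x, min (ψ x) 1 ∂μ = ∫⁻ τ in Ioo (0 : ℝ) 1, μ {x | ENNReal.ofReal τ ≤ ψ x} := by
  have hle : ∀ τ x, τ ≤ (min (ψ x) 1).toReal ↔ τ ≤ 1 ∧ ENNReal.ofReal τ ≤ ψ x := by
    intro τ x
    rw [← ENNReal.ofReal_le_iff_le_toReal (by simp), le_min_iff, ENNReal.ofReal_le_one, and_comm]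
  have hcake := lintegral_eq_lintegral_meas_le μ (f := fun x => (min (ψ x) 1).toReal)
    (Eventually.of_forall fun _ => ENNReal.toReal_nonneg) (by fun_prop)
  simp only [ne_eq, min_eq_top, ENNReal.one_ne_top, and_false, not_false_eq_true,
    ENNReal.ofReal_toReal] at hcake
  rw [hcake, setLIntegral_congr Ioo_ae_eq_Ioc, ← Ioc_union_Ioi_eq_Ioi zero_le_one,
    lintegral_union measurableSet_Ioi Ioc_disjoint_Ioi_same,
    setLIntegral_congr_fun (g := 0) measurableSet_Ioi, lintegral_zero_fun, add_zero]
  · refine setLIntegral_congr_fun measurableSet_Ioc fun τ hτ => ?_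
    simp only [hle τ, hτ.2, true_and]
  · intro τ hτ
    simp [hle τ, not_le.2 (mem_Ioi.1 hτ)]

lemma tendsto_lintegral_min {α : Type*} [MeasurableSpace α] {μ : Measure α} {ψ : α → ℝ≥0∞}
    (hψ : AEMeasurable ψ μ) :
    Tendsto (fun n : ℕ => ∫⁻ x, min (ψ x) n ∂μ) atTop (𝓝 (∫⁻ x, ψ x ∂μ)) := by
  refine lintegral_tendsto_of_tendsto_of_monotone (fun n => by fun_prop)
    (Eventually.of_forall fun x m n hmn => ?_) (Eventually.of_forall fun x => ?_)
  · dsimp only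
    gcongr
  · simpa using (tendsto_const_nhds (x := ψ x)).min ENNReal.tendsto_nat_nhds_top

lemma lintegral_min_one_add_le {ψ₀ ψ₁ ψ : ℝ → ℝ≥0∞} (hψ₀ : Measurable ψ₀) (hψ₁ : Measurable ψ₁)
    (hψ : ∀ c, OrdConnected {x | c ≤ ψ x}) {a b : ℝ≥0}
    (h : ∀ x y, min (ψ₀ x) (ψ₁ y) ≤ ψ (a • x + b • y))
    (h₀ : 1 ≤ ⨆ x, ψ₀ x) (h₁ : 1 ≤ ⨆ x, ψ₁ x) :
    a * (∫⁻ x, min (ψ₀ x) 1) + b * (∫⁻ x, min (ψ₁ x) 1) ≤ ∫⁻ x, ψ x := by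
  have hmeas : Measurable ψ := measurable_of_Ici fun c => (hψ c).measurableSet
  have nonempty_superlevel : ∀ φ : ℝ → ℝ≥0∞, 1 ≤ ⨆ x, φ x → ∀ τ ∈ Ioo (0 : ℝ) 1,
      {x | ENNReal.ofReal τ ≤ φ x}.Nonempty := fun φ hφ τ hτ =>
    (lt_iSup_iff.1 ((ENNReal.ofReal_lt_one.2 hτ.2).trans_le hφ)).imp fun _ => le_of_lt
  calc a * (∫⁻ x, min (ψ₀ x) 1) + b * (∫⁻ x, min (ψ₁ x) 1)
      ≤ ∫⁻ τ in Ioo (0 : ℝ) 1, (a * volume {x | ENNReal.ofReal τ ≤ ψ₀ x}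
          + b * volume {x | ENNReal.ofReal τ ≤ ψ₁ x}) := by
        rw [lintegral_min_one_eq hψ₀.aemeasurable, lintegral_min_one_eq hψ₁.aemeasurable]
        refine le_trans ?_ (le_lintegral_add _ _)
        gcongr <;> exact lintegral_const_mul_le _ _
    _ ≤ ∫⁻ τ in Ioo (0 : ℝ) 1, volume {x | ENNReal.ofReal τ ≤ ψ x} := by
        refine setLIntegral_mono' measurableSet_Ioo fun τ hτ =>
          smul_volume_add_smul_volume_le (nonempty_superlevel ψ₀ h₀ τ hτ)
            (nonempty_superlevel ψ₁ h₁ τ hτ) (hψ _) ?_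
        rintro _ ⟨_, ⟨x, hx, rfl⟩, _, ⟨y, hy, rfl⟩, rfl⟩
        exact (le_min hx hy).trans (h x y)
    _ = ∫⁻ x, min (ψ x) 1 := (lintegral_min_one_eq hmeas.aemeasurable).symm
    _ ≤ ∫⁻ x, ψ x := lintegral_mono fun x => min_le_left _ _

lemma add_mul_rpow_mul_rpow_le (a b : ℝ≥0∞) (x₀ x₁ y₀ y₁ : ℝ≥0∞) {p q : ℝ} (hp : 0 ≤ p)
    (hq : 0 ≤ q) (hpq : p + q = 1) :
    a * (x₀ ^ p * y₀ ^ q) + b * (x₁ ^ p * y₁ ^ q) ≤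
      (a * x₀ + b * x₁) ^ p * (a * y₀ + b * y₁) ^ q := by
  have := ENNReal.lintegral_mul_norm_pow_le (μ := a • Measure.dirac 0 + b • Measure.dirac 1)
    (f := ![x₀, x₁]) (g := ![y₀, y₁]) (measurable_of_finite _).aemeasurable
    (measurable_of_finite _).aemeasurable hp hq hpq
  simpa [lintegral_add_measure, lintegral_smul_measure] using this

section BorellBrascampLieb

variable {γ : ℝ} {φ₀ φ₁ φ : ℝ → ℝ≥0∞} {a b : ℝ≥0}

lemma mul_lintegral_min_div_add_le (hγ : 0 < γ) (hφ₀ : Measurable φ₀) (hφ₁ : Measurable φ₁)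
    (hφ : ∀ c, OrdConnected {x | c ≤ φ x})
    (h : ∀ x y, φ₀ x ≠ 0 → φ₁ y ≠ 0 → a * φ₀ x ^ γ + b * φ₁ y ^ γ ≤ φ (a • x + b • y) ^ γ)
    {M₀ M₁ M : ℝ≥0∞} (hM₀ : M₀ ≠ 0) (hM₀' : M₀ ≠ ∞) (hM₁ : M₁ ≠ 0) (hM₁' : M₁ ≠ ∞)
    (hM : M ≠ 0) (hM' : M ≠ ∞) (hMγ : a * M₀ ^ γ + b * M₁ ^ γ = M ^ γ)
    (hM₀φ : M₀ ≤ ⨆ x, φ₀ x) (hM₁φ : M₁ ≤ ⨆ x, φ₁ x) :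
    M * (a * (∫⁻ x, min (φ₀ x / M₀) 1) + b * ∫⁻ x, min (φ₁ x / M₁) 1) ≤ ∫⁻ x, φ x := by
  have le_div_iff : ∀ {N : ℝ≥0∞} (c d : ℝ≥0∞), N ≠ 0 → N ≠ ∞ → (c ≤ d / N ↔ c * N ≤ d) :=
    fun c d hN hN' => ENNReal.le_div_iff_mul_le (.inl hN) (.inl hN')
  have hnormalized : a * (∫⁻ x, min (φ₀ x / M₀) 1) + b * (∫⁻ x, min (φ₁ x / M₁) 1) ≤
      ∫⁻ x, φ x / M := by
    refine lintegral_min_one_add_le (by fun_prop) (by fun_prop) (fun c => ?_) (fun x y => ?_) ?_ ?_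
    · simpa only [le_div_iff c _ hM hM'] using hφ (c * M)
    · set t := min (φ₀ x / M₀) (φ₁ y / M₁)
      have ht₀ : t * M₀ ≤ φ₀ x := (le_div_iff _ _ hM₀ hM₀').1 (min_le_left _ _)
      have ht₁ : t * M₁ ≤ φ₁ y := (le_div_iff _ _ hM₁ hM₁').1 (min_le_right _ _)
      rw [le_div_iff _ _ hM hM']
      rcases eq_or_ne t 0 with h0 | h0
      · simp [h0]
      refine (ENNReal.rpow_le_rpow_iff hγ).1 ?_
      calc (t * M) ^ γ = a * (t * M₀) ^ γ + b * (t * M₁) ^ γ := by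
            simp only [ENNReal.mul_rpow_of_nonneg _ _ hγ.le, ← hMγ]
            ring
        _ ≤ a * φ₀ x ^ γ + b * φ₁ y ^ γ := by gcongr
        _ ≤ φ (a • x + b • y) ^ γ :=
          h x y ((mul_ne_zero h0 hM₀).bot_lt.trans_le ht₀).ne'
            ((mul_ne_zero h0 hM₁).bot_lt.trans_le ht₁).ne'
    · rwa [← ENNReal.iSup_div, le_div_iff _ _ hM₀ hM₀', one_mul]
    · rwa [← ENNReal.iSup_div, le_div_iff _ _ hM₁ hM₁', one_mul]
  refine (mul_le_mul_right hnormalized M).trans_eq ?_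
  rw [← lintegral_const_mul' _ _ hM']
  simp only [ENNReal.mul_div_cancel hM hM']

lemma rpow_lintegral_min_add_le (hγ : 0 < γ) (hφ₀ : Measurable φ₀) (hφ₁ : Measurable φ₁)
    (hφ : ∀ c, OrdConnected {x | c ≤ φ x}) (ha : 0 < a)
    (h : ∀ x y, φ₀ x ≠ 0 → φ₁ y ≠ 0 → a * φ₀ x ^ γ + b * φ₁ y ^ γ ≤ φ (a • x + b • y) ^ γ)
    {M₀ M₁ : ℝ≥0∞} (hM₀ : M₀ ≠ 0) (hM₀' : M₀ ≠ ∞) (hM₁ : M₁ ≠ 0) (hM₁' : M₁ ≠ ∞)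
    (hM₀φ : M₀ ≤ ⨆ x, φ₀ x) (hM₁φ : M₁ ≤ ⨆ x, φ₁ x) :
    a * (∫⁻ x, min (φ₀ x) M₀) ^ (γ / (1 + γ)) + b * (∫⁻ x, min (φ₁ x) M₁) ^ (γ / (1 + γ)) ≤
      (∫⁻ x, φ x) ^ (γ / (1 + γ)) := by
  have hK : a * M₀ ^ γ + b * M₁ ^ γ ≠ 0 := by
    simp [ha.ne', (ENNReal.rpow_pos hM₀.bot_lt hM₀').ne']
  obtain ⟨M, hMγ⟩ : ∃ M : ℝ≥0∞, a * M₀ ^ γ + b * M₁ ^ γ = M ^ γ :=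
    ⟨_, (ENNReal.rpow_inv_rpow hγ.ne' _).symm⟩
  have hM : M ≠ 0 := by
    rintro rfl
    exact hK (hMγ.trans (ENNReal.zero_rpow_of_pos hγ))
  have hM' : M ≠ ∞ := by
    rintro rfl
    exact (by finiteness : a * M₀ ^ γ + b * M₁ ^ γ ≠ ∞)
      (hMγ.trans (ENNReal.top_rpow_of_pos hγ))
  have rpow_split : ∀ N u : ℝ≥0∞,
      (N * u) ^ (γ / (1 + γ)) = (N ^ γ) ^ (1 / (1 + γ)) * u ^ (γ / (1 + γ)) := fun N u => by
    rw [ENNReal.mul_rpow_of_nonneg _ _ (by positivity), ← ENNReal.rpow_mul, mul_one_div]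
  have lintegral_min_eq : ∀ {N : ℝ≥0∞} (ψ : ℝ → ℝ≥0∞), N ≠ 0 → N ≠ ∞ →
      ∫⁻ x, min (ψ x) N = N * ∫⁻ x, min (ψ x / N) 1 := fun ψ hN hN' => by
    simp only [← lintegral_const_mul' _ _ hN', mul_min, ENNReal.mul_div_cancel hN hN', mul_one]
  calc a * (∫⁻ x, min (φ₀ x) M₀) ^ (γ / (1 + γ)) + b * (∫⁻ x, min (φ₁ x) M₁) ^ (γ / (1 + γ))
      ≤ (M ^ γ) ^ (1 / (1 + γ)) *
          (a * (∫⁻ x, min (φ₀ x / M₀) 1) + b * ∫⁻ x, min (φ₁ x / M₁) 1) ^ (γ / (1 + γ)) := by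
        rw [lintegral_min_eq φ₀ hM₀ hM₀', lintegral_min_eq φ₁ hM₁ hM₁', rpow_split, rpow_split,
          ← hMγ]
        exact add_mul_rpow_mul_rpow_le _ _ _ _ _ _ (by positivity) (by positivity) (by field_simp)
    _ ≤ (∫⁻ x, φ x) ^ (γ / (1 + γ)) := by
        rw [← rpow_split]
        gcongr
        exact mul_lintegral_min_div_add_le hγ hφ₀ hφ₁ hφ h hM₀ hM₀' hM₁ hM₁' hM hM' hMγ hM₀φ hM₁φ

lemma rpow_lintegral_add_le (hγ : 0 < γ) (hφ₀ : Measurable φ₀) (hφ₁ : Measurable φ₁)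
    (hφ : ∀ c, OrdConnected {x | c ≤ φ x}) (ha : 0 < a)
    (h : ∀ x y, φ₀ x ≠ 0 → φ₁ y ≠ 0 → a * φ₀ x ^ γ + b * φ₁ y ^ γ ≤ φ (a • x + b • y) ^ γ)
    (h₀ : ∫⁻ x, φ₀ x ≠ 0) (h₁ : ∫⁻ x, φ₁ x ≠ 0) :
    a * (∫⁻ x, φ₀ x) ^ (γ / (1 + γ)) + b * (∫⁻ x, φ₁ x) ^ (γ / (1 + γ)) ≤
      (∫⁻ x, φ x) ^ (γ / (1 + γ)) := by
  have iSup_ne_zero : ∀ {ψ : ℝ → ℝ≥0∞}, ∫⁻ x, ψ x ≠ 0 → ⨆ x, ψ x ≠ 0 := fun hψ h0 => by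
    simp_all [ENNReal.iSup_eq_zero]
  have min_iSup : ∀ (ψ : ℝ → ℝ≥0∞) (n : ℕ) x, min (ψ x) (min (⨆ y, ψ y) n) = min (ψ x) n :=
    fun ψ n x => by rw [← min_assoc, min_eq_left (le_iSup ψ x)]
  have tendsto_term : ∀ {ψ : ℝ → ℝ≥0∞} (c : ℝ≥0), Measurable ψ →
      Tendsto (fun n : ℕ => c * (∫⁻ x, min (ψ x) n) ^ (γ / (1 + γ))) atTop
        (𝓝 (c * (∫⁻ x, ψ x) ^ (γ / (1 + γ)))) := fun c hψ =>
    ENNReal.Tendsto.const_mul ((tendsto_lintegral_min hψ.aemeasurable).ennrpow_const _) (by simp)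
  refine le_of_tendsto ((tendsto_term a hφ₀).add (tendsto_term b hφ₁)) ?_
  filter_upwards [eventually_ne_atTop 0] with n hn
  simpa only [min_iSup] using rpow_lintegral_min_add_le hγ hφ₀ hφ₁ hφ ha h
    (M₀ := min (⨆ x, φ₀ x) n) (M₁ := min (⨆ x, φ₁ x) n)
    (by simp [iSup_ne_zero h₀, hn]) (by simp) (by simp [iSup_ne_zero h₁, hn]) (by simp)
    (min_le_left _ _) (min_le_left _ _)

end BorellBrascampLieb

end RealLine

section Marginals

variable {X V : Type*} [AddCommGroup X] [Module ℝ X] [NormedAddCommGroup V] [NormedSpace ℝ V]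
  [FiniteDimensional ℝ V] [MeasurableSpace V] [BorelSpace V] {γ : ℝ}

lemma lintegral_fin_succ_pi {k : ℕ} {g : (Fin (k + 1) → ℝ) → ℝ≥0∞} (hg : AEMeasurable g) :
    ∫⁻ v, g v = ∫⁻ t : ℝ, ∫⁻ w : Fin k → ℝ, g (Fin.cons t w) := by
  have hpres := (volume_preserving_piFinSuccAbove (fun _ : Fin (k + 1) => ℝ) 0).symm
  have hcons : ⇑(MeasurableEquiv.piFinSuccAbove (fun _ : Fin (k + 1) => ℝ) 0).symm =
      fun p => Fin.cons p.1 p.2 := by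
    ext p : 1
    rw [← Fin.insertNth_zero']
    rfl
  rw [← hpres.lintegral_comp_emb (MeasurableEquiv.measurableEmbedding _), hcons,
    Measure.volume_eq_prod, lintegral_prod]
  simpa only [hcons, Function.comp_def, Measure.volume_eq_prod] using
    hg.comp_quasiMeasurePreserving hpres.quasiMeasurePreserving

namespace PowConcave

lemma lintegral_real {F : X × ℝ → ℝ≥0∞} (hF : PowConcave γ F) (hγ : 0 < γ) :
    PowConcave (γ / (1 + γ)) fun x => ∫⁻ t, F (x, t) := by
  have ordConnected_superlevel : ∀ x c, OrdConnected {t | c ≤ F (x, t)} := fun x c =>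
    ((hF.comp_prodMk x).convex_superlevel hγ c).ordConnected
  have hmeas : ∀ x, Measurable fun t => F (x, t) := fun x =>
    measurable_of_Ici fun c => (ordConnected_superlevel x c).measurableSet
  rw [powConcave_iff (by positivity)]
  intro x y hx hy a b ha hb hab
  exact rpow_lintegral_add_le hγ (hmeas x) (hmeas y) (ordConnected_superlevel _) ha
    (fun s t hs ht => (powConcave_iff hγ).1 hF hs ht ha hb hab) hx hy

lemma lintegral_pi {X : Type*} [AddCommGroup X] [Module ℝ X] {γ : ℝ} {k : ℕ}
    {F : X × (Fin k → ℝ) → ℝ≥0∞} (hF : PowConcave γ F) (hγ : 0 < γ) :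
    PowConcave (γ / (1 + k * γ)) fun x => ∫⁻ v, F (x, v) := by
  induction k generalizing X with
  | zero =>
    convert hF.comp_linearMap (LinearMap.inl ℝ X (Fin 0 → ℝ)) using 1
    · simp
    · ext x
      rw [volume_pi, Measure.pi_of_empty _ 0, lintegral_dirac]
      simp
  | succ k ih =>
    let L : ((X × ℝ) × (Fin k → ℝ)) ≃ₗ[ℝ] X × (Fin (k + 1) → ℝ) :=
      (LinearEquiv.prodAssoc ℝ X ℝ (Fin k → ℝ)).trans
        ((LinearEquiv.refl ℝ X).prodCongr (Fin.consLinearEquiv ℝ fun _ => ℝ))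
    have hmarginal := (ih (hF.comp_linearMap L.toLinearMap)).lintegral_real (by positivity)
    have hexponent : γ / (1 + k * γ) / (1 + γ / (1 + k * γ)) = γ / (1 + (k + 1 : ℕ) * γ) := by
      push_cast
      field_simp
      ring
    rw [hexponent] at hmarginal
    convert hmarginal using 2 with x
    exact lintegral_fin_succ_pi ((hF.comp_prodMk x).aemeasurable hγ _)

/-- The Borell–Brascamp–Lieb inequality. -/
lemma lintegral {F : X × V → ℝ≥0∞} (hF : PowConcave γ F) (hγ : 0 < γ) (ν : Measure V)
    [ν.IsAddHaarMeasure] :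
    PowConcave (γ / (1 + finrank ℝ V * γ)) fun x => ∫⁻ v, F (x, v) ∂ν := by
  let e : (Fin (finrank ℝ V) → ℝ) ≃L[ℝ] V := ContinuousLinearEquiv.ofFinrankEq (by simp)
  have : (Measure.map e volume).IsAddHaarMeasure := e.isAddHaarMeasure_map _
  have hpull := hF.comp_linearMap (LinearMap.id.prodMap e.toLinearEquiv.toLinearMap)
  have hmarginal := (hpull.lintegral_pi hγ).const_mul (by positivity)
    (ν.addHaarScalarFactor (Measure.map e volume))
  convert hmarginal using 2 with x
  have he : MeasurableEmbedding e := e.toHomeomorph.measurableEmbedding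
  calc ∫⁻ v, F (x, v) ∂ν
      = ∫⁻ v, F (x, v) ∂(ν.addHaarScalarFactor (Measure.map e volume) • Measure.map e volume) := by
        rw [← Measure.isAddLeftInvariant_eq_smul ν (Measure.map e volume)]
    _ = _ := by
        rw [lintegral_smul_measure, he.lintegral_map]
        rfl

end PowConcave

end Marginals

section Tail

lemma lintegral_rpow_le_of_meas_lt_le {α β : Type*} [MeasurableSpace α] [MeasurableSpace β]
    {μ : Measure α} {ν : Measure β} {f : α → ℝ} {g : β → ℝ} (hf : 0 ≤ᵐ[μ] f) (hg : 0 ≤ᵐ[ν] g)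
    (hfm : AEMeasurable f μ) (hgm : AEMeasurable g ν)
    (h : ∀ t > 0, μ {x | t < f x} ≤ ν {x | t < g x}) {q : ℝ} (hq : 0 < q) :
    ∫⁻ x, ENNReal.ofReal (f x ^ q) ∂μ ≤ ∫⁻ x, ENNReal.ofReal (g x ^ q) ∂ν := by
  rw [lintegral_rpow_eq_lintegral_meas_lt_mul μ hf hfm hq,
    lintegral_rpow_eq_lintegral_meas_lt_mul ν hg hgm hq]
  gcongr ENNReal.ofReal q * ?_
  exact setLIntegral_mono' measurableSet_Ioi fun t ht => by gcongr; exact h t ht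

lemma lintegral_Ioc_rpow {M q : ℝ} (hM : 0 ≤ M) (hq : 0 < q) :
    ENNReal.ofReal (1 + q) * ∫⁻ t in Ioc 0 M, ENNReal.ofReal (t ^ q) =
      ENNReal.ofReal M ^ (1 + q) := by
  have hint : IntervalIntegrable (fun t : ℝ => t ^ q) volume 0 M :=
    intervalIntegral.intervalIntegrable_rpow' (by linarith)
  rw [← ofReal_integral_eq_lintegral_ofReal
      ((intervalIntegrable_iff_integrableOn_Ioc_of_le hM).1 hint)
      ((ae_restrict_iff' measurableSet_Ioc).2 (.of_forall fun t ht => Real.rpow_nonneg ht.1.le q)),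
    ← intervalIntegral.integral_of_le hM, integral_rpow (.inl (by linarith)),
    ← ENNReal.ofReal_mul (by positivity), ENNReal.ofReal_rpow_of_nonneg hM (by positivity),
    Real.zero_rpow (by positivity), add_comm q]
  congr 1
  field_simp
  simp

lemma measure_setOf_measure_Ici_le (μ : Measure ℝ) [IsFiniteMeasure μ] (t : ℝ≥0∞) :
    μ {s | μ (Ici s) ≤ t} ≤ t := by
  have hupper : IsUpperSet {s | μ (Ici s) ≤ t} := fun r s hrs hr =>
    (measure_mono (Ici_subset_Ici.2 hrs)).trans hr
  by_contra! hlt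
  obtain ⟨K, hKt, hK, hlt⟩ := hupper.ordConnected.measurableSet.exists_lt_isCompact hlt
  obtain ⟨s, hs, hmin⟩ := hK.exists_isLeast (nonempty_of_measure_ne_zero (ne_bot_of_gt hlt))
  exact hlt.not_ge ((measure_mono hmin).trans (hKt hs))

lemma measure_univ_rpow_le_lintegral_measure_Ici (μ : Measure ℝ) [IsFiniteMeasure μ] {q : ℝ}
    (hq : 0 < q) : μ univ ^ (1 + q) ≤ ENNReal.ofReal (1 + q) * ∫⁻ s, μ (Ici s) ^ q ∂μ := by
  have hanti : Antitone fun s => (μ (Ici s)).toReal := fun r s hrs =>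
    ENNReal.toReal_mono (measure_ne_top μ _) (measure_mono (Ici_subset_Ici.2 hrs))
  have tail_le : ∀ t > 0, volume.restrict (Ioc 0 (μ univ).toReal) {s : ℝ | t < s} ≤
      μ {s | t < (μ (Ici s)).toReal} := fun t ht => by
    have hcompl : {s | t < (μ (Ici s)).toReal}ᶜ = {s | μ (Ici s) ≤ ENNReal.ofReal t} := by
      ext s
      simp [ENNReal.le_ofReal_iff_toReal_le, ht.le]
    have hvol : volume.restrict (Ioc 0 (μ univ).toReal) (Ioi t) =
        μ univ - ENNReal.ofReal t := by
      rw [Measure.restrict_apply measurableSet_Ioi, inter_comm, Ioc_inter_Ioi, max_eq_right ht.le,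
        Real.volume_Ioc, ENNReal.ofReal_sub _ ht.le, ENNReal.ofReal_toReal (measure_ne_top μ _)]
    change volume.restrict (Ioc 0 (μ univ).toReal) (Ioi t) ≤ _
    rw [hvol, tsub_le_iff_right, ← measure_add_measure_compl
      (measurableSet_lt measurable_const hanti.measurable), hcompl]
    gcongr
    exact measure_setOf_measure_Ici_le μ _
  calc μ univ ^ (1 + q)
      = ENNReal.ofReal (1 + q) * ∫⁻ t in Ioc 0 (μ univ).toReal, ENNReal.ofReal (t ^ q) := by
        rw [lintegral_Ioc_rpow ENNReal.toReal_nonneg hq, ENNReal.ofReal_toReal (measure_ne_top μ _)]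
    _ ≤ ENNReal.ofReal (1 + q) * ∫⁻ s, ENNReal.ofReal ((μ (Ici s)).toReal ^ q) ∂μ := by
        gcongr ENNReal.ofReal (1 + q) * ?_
        exact lintegral_rpow_le_of_meas_lt_le
          ((ae_restrict_iff' measurableSet_Ioc).2 (.of_forall fun t ht => ht.1.le))
          (.of_forall fun _ => ENNReal.toReal_nonneg) aemeasurable_id
          hanti.measurable.aemeasurable tail_le hq
    _ = ENNReal.ofReal (1 + q) * ∫⁻ s, μ (Ici s) ^ q ∂μ := by
        simp [← ENNReal.ofReal_rpow_of_nonneg, hq.le]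

lemma measure_univ_rpow_le_lintegral_measure_ge {α : Type*} [MeasurableSpace α] (m : Measure α)
    [IsFiniteMeasure m] {u : α → ℝ} (hu : Measurable u) {q : ℝ} (hq : 0 < q) :
    m univ ^ (1 + q) ≤ ENNReal.ofReal (1 + q) * ∫⁻ x, m {y | u x ≤ u y} ^ q ∂m := by
  have hanti : Antitone fun s => m.map u (Ici s) := fun r s hrs =>
    measure_mono (Ici_subset_Ici.2 hrs)
  have htail := measure_univ_rpow_le_lintegral_measure_Ici (m.map u) hq
  rw [lintegral_map (hanti.measurable.pow_const q) hu, Measure.map_apply hu .univ] at htail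
  simp only [Measure.map_apply hu measurableSet_Ici] at htail
  exact htail

end Tail

section Dilation

lemma rpow_add_mul_rpow_sub_one_mul_le (u v : ℝ≥0∞) {r : ℝ} (hr : 1 < r) :
    u ^ r + ENNReal.ofReal r * u ^ (r - 1) * v ≤ (u + v) ^ r := by
  have hr0 : 0 < r := by linarith
  rcases eq_or_ne u ∞ with rfl | hu
  · simp [ENNReal.top_rpow_of_pos hr0]
  rcases eq_or_ne v ∞ with rfl | hv
  · simp [ENNReal.top_rpow_of_pos hr0]
  rcases eq_or_ne u 0 with rfl | hu0
  · simp [ENNReal.zero_rpow_of_pos hr0, ENNReal.zero_rpow_of_pos (sub_pos.2 hr)]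
  lift u to ℝ≥0 using hu
  lift v to ℝ≥0 using hv
  have hu_pos : 0 < (u : ℝ) := by simpa [pos_iff_ne_zero] using hu0
  have hreal : (u : ℝ) ^ r + r * (u : ℝ) ^ (r - 1) * v ≤ ((u : ℝ) + v) ^ r :=
    calc (u : ℝ) ^ r + r * (u : ℝ) ^ (r - 1) * v = (u : ℝ) ^ r * (1 + r * (v / u)) := by
          rw [Real.rpow_sub_one hu_pos.ne']
          ring
      _ ≤ (u : ℝ) ^ r * (1 + v / u) ^ r := by
          gcongr
          exact one_add_mul_self_le_rpow_one_add (by linarith [show 0 ≤ (v / u : ℝ) by positivity])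
            hr.le
      _ = ((u : ℝ) + v) ^ r := by
          rw [← Real.mul_rpow hu_pos.le (by positivity), mul_add, mul_div_cancel₀ _ hu_pos.ne',
            mul_one]
  have hofReal : ∀ w : ℝ≥0, (w : ℝ≥0∞) = ENNReal.ofReal w := fun w => by simp
  rw [hofReal u, hofReal v, ENNReal.ofReal_rpow_of_pos hu_pos, ENNReal.ofReal_rpow_of_pos hu_pos,
    ← ENNReal.ofReal_mul hr0.le, ← ENNReal.ofReal_mul (by positivity),
    ← ENNReal.ofReal_add (by positivity) (by positivity), ← ENNReal.ofReal_add (by positivity)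
    (by positivity), ENNReal.ofReal_rpow_of_pos (by positivity)]
  exact ENNReal.ofReal_le_ofReal hreal

lemma pow_finrank_mul_lintegral_comp_smul {W : Type*} [NormedAddCommGroup W] [NormedSpace ℝ W]
    [FiniteDimensional ℝ W] [MeasurableSpace W] [BorelSpace W] (ν : Measure W)
    [ν.IsAddHaarMeasure] (g : W → ℝ≥0∞) {l : ℝ} (hl : 0 < l) :
    ENNReal.ofReal (l ^ finrank ℝ W) * ∫⁻ x, g (l • x) ∂ν = ∫⁻ x, g x ∂ν := by
  have hsmul : MeasurableEmbedding fun x : W => l • x :=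
    (Homeomorph.smulOfNeZero l hl.ne').measurableEmbedding
  have hpow : 0 < l ^ finrank ℝ W := by positivity
  rw [← hsmul.lintegral_map, Measure.map_addHaar_smul ν hl.ne', lintegral_smul_measure,
    abs_of_pos (inv_pos.2 hpow), smul_eq_mul, ← mul_assoc, ← ENNReal.ofReal_mul hpow.le,
    mul_inv_cancel₀ hpow.ne', ENNReal.ofReal_one, one_mul]

/-- At `l = 1` the hypothesis is an equality; compare derivatives there. -/
lemma mul_le_of_forall_pow_mul_rpow_le {r i m : ℝ} {d : ℕ}
    (h : ∀ l ∈ Ioo (0 : ℝ) 1, l ^ d * (l ^ r * i + r * l ^ (r - 1) * (1 - l) * m) ≤ i) :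
    r * m ≤ (d + r) * i := by
  have hderiv : HasDerivAt (fun l : ℝ => l ^ d * (l ^ r * i + r * l ^ (r - 1) * (1 - l) * m))
      ((d + r) * i - r * m) 1 := by
    have hrpow : ∀ p : ℝ, HasDerivAt (fun l : ℝ => l ^ p) p 1 := fun p => by
      simpa using Real.hasDerivAt_rpow_const (x := 1) (p := p) (.inl one_ne_zero)
    refine ((hasDerivAt_pow d (1 : ℝ)).mul (((hrpow r).mul_const i).add ((((hrpow (r - 1)).const_mul
      r).mul ((hasDerivAt_id (1 : ℝ)).const_sub 1)).mul_const m))).congr_deriv ?_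
    simp only [one_pow, Real.one_rpow, Pi.add_apply, Pi.mul_apply, id_eq]
    ring
  have hslope := hderiv.tendsto_slope.mono_left (nhdsWithin_mono 1 (s := Iio 1) fun l => ne_of_lt)
  have hslope_nonneg : 0 ≤ (d + r) * i - r * m := by
    refine ge_of_tendsto hslope ?_
    filter_upwards [Ioo_mem_nhdsLT (zero_lt_one (α := ℝ))] with l hl
    rw [slope_def_field]
    refine div_nonneg_of_nonpos ?_ (sub_nonpos.2 hl.2.le)
    simpa using h l hl
  linarith

lemma ofReal_mul_le_of_forall_pow_mul_rpow_le {q : ℝ} (hq : 0 < q) {i m : ℝ≥0∞} {d : ℕ}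
    (h : ∀ l ∈ Ioo (0 : ℝ) 1, ENNReal.ofReal (l ^ d) * (ENNReal.ofReal (l ^ (1 + q⁻¹)) * i +
      ENNReal.ofReal ((1 + q⁻¹) * l ^ q⁻¹ * (1 - l)) * m) ≤ i) :
    ENNReal.ofReal (1 + q) * m ≤ ENNReal.ofReal (1 + q * (d + 1)) * i := by
  rcases eq_or_ne i ∞ with rfl | hi
  · simp [ENNReal.mul_top, show 0 < 1 + q * (d + 1) by positivity]
  have hm : m ≠ ∞ := by
    rintro rfl
    have := h (1 / 2) (by norm_num)
    rw [ENNReal.mul_top, add_top, ENNReal.mul_top, top_le_iff] at this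
    · exact hi this
    · simp
    · simp only [ne_eq, ENNReal.ofReal_eq_zero, not_le]
      positivity
  lift m to ℝ≥0 using hm
  lift i to ℝ≥0 using hi
  have hreal : (1 + q⁻¹) * (m : ℝ) ≤ (d + (1 + q⁻¹)) * i := by
    refine mul_le_of_forall_pow_mul_rpow_le fun l hl => ?_
    have hl0 := hl.1
    have hl1 : 0 < 1 - l := sub_pos.2 hl.2
    have hl := h l hl
    rw [← ENNReal.ofReal_coe_nnreal (p := i), ← ENNReal.ofReal_coe_nnreal (p := m),
      ← ENNReal.ofReal_mul (by positivity), ← ENNReal.ofReal_mul (by positivity),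
      ← ENNReal.ofReal_add (by positivity) (by positivity), ← ENNReal.ofReal_mul (by positivity),
      ENNReal.ofReal_le_ofReal_iff (by positivity)] at hl
    simpa using hl
  rw [← ENNReal.ofReal_coe_nnreal, ← ENNReal.ofReal_coe_nnreal,
    ← ENNReal.ofReal_mul (by positivity), ← ENNReal.ofReal_mul (by positivity)]
  refine ENNReal.ofReal_le_ofReal ?_
  calc (1 + q) * (m : ℝ) = q * ((1 + q⁻¹) * m) := by field_simp; ring
    _ ≤ q * ((d + (1 + q⁻¹)) * i) := by gcongr
    _ = (1 + q * (d + 1)) * i := by field_simp; ring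

namespace PowConcave

variable {W : Type*} [NormedAddCommGroup W] [NormedSpace ℝ W] {q : ℝ} {S : W → ℝ≥0∞}

lemma add_le_rpow_smul (hS : PowConcave q S) (hq : 0 < q) (h0 : S 0 ≠ 0) {x : W} (hx : S x ≠ 0)
    {l : ℝ} (hl : l ∈ Ioo 0 1) :
    ENNReal.ofReal l * S x ^ q + ENNReal.ofReal (1 - l) * S 0 ^ q ≤ S (l • x) ^ q := by
  have h := (powConcave_iff hq).1 hS hx h0 (Real.toNNReal_pos.2 hl.1)
    (Real.toNNReal_pos.2 (sub_pos.2 hl.2))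
    (by rw [← Real.toNNReal_add hl.1.le (sub_pos.2 hl.2).le]; simp)
  rwa [smul_zero, add_zero, NNReal.smul_def, Real.coe_toNNReal _ hl.1.le] at h

lemma add_le_rpow_one_add_smul (hS : PowConcave q S) (hq : 0 < q) (h0 : S 0 ≠ 0) {l : ℝ}
    (hl : l ∈ Ioo 0 1) (x : W) :
    ENNReal.ofReal (l ^ (1 + q⁻¹)) * S x ^ (1 + q) +
        ENNReal.ofReal ((1 + q⁻¹) * l ^ q⁻¹ * (1 - l)) * (S 0 ^ q * S x) ≤
      S (l • x) ^ (1 + q) := by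
  rcases eq_or_ne (S x) 0 with hx | hx
  · simp [hx, ENNReal.zero_rpow_of_pos (show 0 < 1 + q by positivity)]
  have hl0 : 0 < l := hl.1
  have hqq : q * q⁻¹ = 1 := mul_inv_cancel₀ hq.ne'
  calc _ = (ENNReal.ofReal l * S x ^ q) ^ (1 + q⁻¹) + ENNReal.ofReal (1 + q⁻¹) *
          (ENNReal.ofReal l * S x ^ q) ^ (1 + q⁻¹ - 1) * (ENNReal.ofReal (1 - l) * S 0 ^ q) := by
        rw [ENNReal.mul_rpow_of_nonneg _ _ (by positivity), add_sub_cancel_left,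
          ENNReal.mul_rpow_of_nonneg _ _ (by positivity), ← ENNReal.rpow_mul, ← ENNReal.rpow_mul,
          mul_add, hqq, mul_one, ENNReal.rpow_one, ENNReal.ofReal_rpow_of_pos hl0,
          ENNReal.ofReal_rpow_of_pos hl0, ENNReal.ofReal_mul (by positivity),
          ENNReal.ofReal_mul (by positivity), add_comm q]
        ring
    _ ≤ (ENNReal.ofReal l * S x ^ q + ENNReal.ofReal (1 - l) * S 0 ^ q) ^ (1 + q⁻¹) :=
        rpow_add_mul_rpow_sub_one_mul_le _ _ (by simpa)
    _ ≤ (S (l • x) ^ q) ^ (1 + q⁻¹) := by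
        gcongr
        exact hS.add_le_rpow_smul hq h0 hx hl
    _ = S (l • x) ^ (1 + q) := by
        rw [← ENNReal.rpow_mul, mul_add, hqq, mul_one, add_comm]

variable [FiniteDimensional ℝ W] [MeasurableSpace W] [BorelSpace W]

lemma rpow_apply_zero_mul_lintegral_le (hS : PowConcave q S) (hq : 0 < q) (ν : Measure W)
    [ν.IsAddHaarMeasure] :
    ENNReal.ofReal (1 + q) * (S 0 ^ q * ∫⁻ x, S x ∂ν) ≤
      ENNReal.ofReal (1 + q * (finrank ℝ W + 1)) * ∫⁻ x, S x ^ (1 + q) ∂ν := by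
  rcases eq_or_ne (S 0) 0 with h0 | h0
  · simp [h0, ENNReal.zero_rpow_of_pos hq]
  refine ofReal_mul_le_of_forall_pow_mul_rpow_le hq fun l hl => ?_
  calc _ ≤ ENNReal.ofReal (l ^ finrank ℝ W) * ∫⁻ x, S (l • x) ^ (1 + q) ∂ν := by
        gcongr ENNReal.ofReal (l ^ finrank ℝ W) * ?_
        refine le_trans ?_ (lintegral_mono (hS.add_le_rpow_one_add_smul hq h0 hl))
        refine le_trans ?_ (le_lintegral_add _ _)
        refine add_le_add (lintegral_const_mul_le _ _) (le_trans ?_ (lintegral_const_mul_le _ _))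
        exact mul_le_mul_right (lintegral_const_mul_le _ _) _
    _ = ∫⁻ x, S x ^ (1 + q) ∂ν :=
        pow_finrank_mul_lintegral_comp_smul ν (fun x => S x ^ (1 + q)) hl.1

end PowConcave

end Dilation

section Jensen

lemma concaveOn_toReal {X : Type*} [AddCommGroup X] [Module ℝ X] {O : Set X} {G : X → ℝ≥0∞}
    (hG : ConcaveOn ℝ≥0 O G) (hfin : ∀ x ∈ O, G x ≠ ∞) :
    ConcaveOn ℝ O fun x => (G x).toReal := by
  refine ⟨NNReal.convex_iff.1 hG.1, fun x hx y hy a b ha hb hab => ?_⟩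
  lift a to ℝ≥0 using ha
  lift b to ℝ≥0 using hb
  have hab' : a + b = 1 := mod_cast hab
  have h := ENNReal.toReal_mono (hfin _ (hG.1 hx hy a.2 b.2 hab')) (hG.2 hx hy a.2 b.2 hab')
  simp only [ENNReal.smul_def, smul_eq_mul] at h
  rw [ENNReal.toReal_add (ENNReal.mul_ne_top (by simp) (hfin x hx))
    (ENNReal.mul_ne_top (by simp) (hfin y hy))] at h
  simpa [NNReal.smul_def] using h

variable {Ω V : Type*} [MeasurableSpace Ω] {μ : Measure Ω} [IsFiniteMeasure μ] [NeZero μ]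
  [NormedAddCommGroup V] [NormedSpace ℝ V] {O : Set V} {f : Ω → V}

lemma average_mem_of_isOpen [CompleteSpace V] (hOc : Convex ℝ O) (hO : IsOpen O)
    (hfO : ∀ᵐ x ∂μ, f x ∈ O) (hf : Integrable f μ) : ⨍ x, f x ∂μ ∈ O := by
  by_contra h
  obtain ⟨u, hu⟩ := geometric_hahn_banach_open_point hOc hO h
  obtain ⟨x, hxO, hx⟩ := exists_notMem_null_average_le (NeZero.ne μ) (u.integrable_comp hf)
    (ae_iff.1 hfO)
  have huf : ⨍ x, u (f x) ∂μ = u (⨍ x, f x ∂μ) := u.integral_comp_comm hf.to_average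
  exact (hu (f x) (not_not.1 hxO)).not_ge (huf ▸ hx)

variable [FiniteDimensional ℝ V]

lemma average_comp_le_of_isOpen {g : V → ℝ} (hg : ConcaveOn ℝ O g) (hO : IsOpen O)
    (hfO : ∀ᵐ x ∂μ, f x ∈ O) (hf : Integrable f μ) (hgf : Integrable (fun x => g (f x)) μ) :
    ⨍ x, g (f x) ∂μ ≤ g (⨍ x, f x ∂μ) := by
  have hopen : IsOpen {p : V × ℝ | p.1 ∈ O ∧ p.2 < g p.1} := by
    have hcont : ContinuousOn (fun p : V × ℝ => g p.1 - p.2) (Prod.fst ⁻¹' O) :=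
      ((hg.continuousOn hO).comp continuousOn_fst fun _ hp => hp).sub continuousOn_snd
    convert hcont.isOpen_inter_preimage (hO.preimage continuous_fst) isOpen_Ioi (t := Ioi 0) using 1
    ext p
    simp
  refine le_of_forall_sub_le fun ε hε => ?_
  have hmem := average_mem_of_isOpen hg.convex_strict_hypograph hopen
    (f := fun x => (f x, g (f x) - ε)) (hfO.mono fun x hx => ⟨hx, by linarith⟩)
    (hf.prodMk (hgf.sub (integrable_const ε)))
  have hsub : ⨍ x, (g (f x) - ε) ∂μ = ⨍ x, g (f x) ∂μ - ε := by
    rw [average, integral_sub hgf.to_average (integrable_const ε)]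
    simp [average]
  exact (hsub.symm.trans_lt (average_pair hf (hgf.sub (integrable_const ε)) ▸ hmem).2).le

lemma laverage_comp_le_of_isOpen {G : V → ℝ≥0∞} (hG : ConcaveOn ℝ≥0 O G) (hO : IsOpen O)
    (hfO : ∀ᵐ x ∂μ, f x ∈ O) (hf : Integrable f μ) (hGf : AEMeasurable (fun x => G (f x)) μ) :
    ⨍⁻ x, G (f x) ∂μ ≤ G (⨍ x, f x ∂μ) := by
  have hGf' : AEMeasurable (fun x => G (f x)) ((μ univ)⁻¹ • μ) := hGf.smul_measure _
  refine le_of_tendsto' (tendsto_lintegral_min hGf') fun n => ?_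
  have hmin : ∀ v, min (G v) n ≠ ∞ := fun v => (min_lt_of_right_lt (by simp)).ne
  have hconcave := concaveOn_toReal (hG.inf (concaveOn_const (n : ℝ≥0∞) hG.1)) fun v _ => hmin v
  have hint : Integrable (fun x => (min (G (f x)) n).toReal) μ := by
    refine Integrable.of_bound (hGf.min aemeasurable_const).ennreal_toReal.aestronglyMeasurable n ?_
    refine Eventually.of_forall fun x => ?_
    simpa using ENNReal.toReal_mono (ENNReal.natCast_ne_top n) (min_le_right (G (f x)) n)
  refine le_trans ?_ (min_le_left _ (n : ℝ≥0∞))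
  rw [← ENNReal.ofReal_toReal (hmin (⨍ x, f x ∂μ))]
  calc _ = ∫⁻ x, ENNReal.ofReal (min (G (f x)) n).toReal ∂((μ univ)⁻¹ • μ) := by
        simp_rw [ENNReal.ofReal_toReal (hmin _)]
    _ = ENNReal.ofReal (⨍ x, (min (G (f x)) n).toReal ∂μ) :=
        (ofReal_integral_eq_lintegral_ofReal hint.to_average (ae_of_all _ fun x => by simp)).symm
    _ ≤ ENNReal.ofReal (min (G (⨍ x, f x ∂μ)) n).toReal := ENNReal.ofReal_le_ofReal
        (average_comp_le_of_isOpen hconcave hO hfO hf hint)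

end Jensen

section SectionIntegral

lemma measure_inter_setOf_nonneg_ne_zero {G : Type*} [AddCommGroup G] [TopologicalSpace G]
    [IsTopologicalAddGroup G] [MeasurableSpace G] [BorelSpace G] (ν : Measure G)
    [ν.IsNegInvariant] [ν.IsOpenPosMeasure] {U : Set G} (hU : U ∈ 𝓝 0) (u : G →+ ℝ) :
    ν (U ∩ {z | 0 ≤ u z}) ≠ 0 := by
  intro hzero
  have hneg : ν (-(U ∩ {z | 0 ≤ u z})) = 0 := by rwa [Measure.measure_neg]
  refine (Measure.measure_pos_of_mem_nhds ν (inter_mem hU (neg_mem_nhds_zero G hU))).ne'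
    (measure_mono_null (fun z hz => ?_) (measure_union_null hzero hneg))
  rcases le_total 0 (u z) with hz' | hz'
  · exact .inl ⟨hz.1, hz'⟩
  · exact .inr ⟨hz.2, by simpa using hz'⟩

variable {V : Type*} [NormedAddCommGroup V] [NormedSpace ℝ V] [MeasurableSpace V] [BorelSpace V]
  {E : Submodule ℝ V}

/-- The integral of `φ` over the translate of a subspace `E` through `x`, as a function of `x`.
The measure `ν` on `E` is a Haar measure, or its restriction to a half-space of `E`. -/
noncomputable def sectionIntegral (ν : Measure E) (φ : V → ℝ≥0∞) (x : V) : ℝ≥0∞ :=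
  ∫⁻ z : E, φ (x + z) ∂ν

lemma sectionIntegral_rpow_le {ν : Measure E} [ν.IsAddLeftInvariant] {φ : V → ℝ≥0∞} {x : V}
    (hφ : AEMeasurable (fun z : E => φ (x + z)) ν) (hfin : sectionIntegral ν φ x ≠ ∞)
    (u : E →L[ℝ] ℝ) {q : ℝ} (hq : 0 < q) :
    sectionIntegral ν φ x ^ (1 + q) ≤ ENNReal.ofReal (1 + q) * sectionIntegral ν
      (fun y => sectionIntegral (ν.restrict {z | 0 ≤ u z}) φ y ^ q * φ y) x := by
  have hu : Measurable u := u.continuous.measurable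
  set m := ν.withDensity fun z => φ (x + z) with hm
  have : IsFiniteMeasure m := isFiniteMeasure_withDensity hfin
  have hhalf : ∀ z : E, m {y | u z ≤ u y} =
      sectionIntegral (ν.restrict {z | 0 ≤ u z}) φ (x + z) := fun z => by
    rw [hm, withDensity_apply _ (measurableSet_le measurable_const hu), sectionIntegral,
      ← lintegral_indicator (measurableSet_le measurable_const hu),
      ← lintegral_indicator (measurableSet_le measurable_const hu),
      ← lintegral_add_left_eq_self _ z]
    simp [indicator, add_assoc]
  have hmeas : Measurable fun z => m {y | u z ≤ u y} ^ q :=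
    (show Antitone fun t => m {y | t ≤ u y} from fun s t hst =>
      measure_mono fun y hy => hst.trans hy).measurable.comp hu |>.pow_const q
  calc sectionIntegral ν φ x ^ (1 + q) = m univ ^ (1 + q) := by
        rw [hm, withDensity_apply _ .univ, Measure.restrict_univ, sectionIntegral]
    _ ≤ ENNReal.ofReal (1 + q) * ∫⁻ z, m {y | u z ≤ u y} ^ q ∂m :=
        measure_univ_rpow_le_lintegral_measure_ge m hu hq
    _ = _ := by
        rw [hm, lintegral_withDensity_eq_lintegral_mul₀ hφ hmeas.aemeasurable]
        simp [sectionIntegral, hhalf, mul_comm]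

variable [FiniteDimensional ℝ V]

lemma exists_lintegral_sectionIntegral_eq {W : Submodule ℝ V} (hWE : IsCompl W E)
    (μ : Measure V) [μ.IsAddHaarMeasure] (ν : Measure E) [ν.IsAddHaarMeasure] :
    ∃ ω : Measure W, ω.IsAddHaarMeasure ∧ ∀ g : V → ℝ≥0∞, AEMeasurable g μ →
      ∫⁻ w : W, sectionIntegral ν g w ∂ω = ∫⁻ x, g x ∂μ := by
  let e : (W × E) ≃L[ℝ] V := (Submodule.prodEquivOfIsCompl W E hWE).toContinuousLinearEquiv
  have hμ : (μ.map e.symm).IsAddHaarMeasure := e.symm.isAddHaarMeasure_map μ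
  set c := (μ.map e.symm).addHaarScalarFactor ((Measure.addHaar : Measure W).prod ν)
  have hc : c ≠ 0 := (Measure.addHaarScalarFactor_pos_of_isAddHaarMeasure _ _).ne'
  have hprod : (c • (Measure.addHaar : Measure W)).prod ν = μ.map e.symm := by
    rw [Measure.prod_smul_left, ← Measure.isAddLeftInvariant_eq_smul]
  have he : MeasurableEmbedding e.symm := e.symm.toHomeomorph.measurableEmbedding
  refine ⟨c • Measure.addHaar, .nnreal_smul _ hc, fun g hg => ?_⟩
  have hge : AEMeasurable (fun p : W × E => g (p.1 + p.2)) (μ.map e.symm) :=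
    he.aemeasurable_map_iff.2 <| hg.congr <| .of_forall fun x =>
      congrArg g (e.apply_symm_apply x).symm
  calc _ = ∫⁻ p, g (p.1 + p.2) ∂μ.map e.symm := by
        rw [← hprod] at hge ⊢
        exact (lintegral_prod _ hge).symm
    _ = ∫⁻ x, g x ∂μ := by
        rw [he.lintegral_map]
        exact lintegral_congr fun x => congrArg g (e.apply_symm_apply x)

lemma sectionIntegral_restrict_ne_zero (ν : Measure E) [ν.IsAddHaarMeasure] {φ : V → ℝ≥0∞} {x : V}
    (hφ : AEMeasurable (fun z : E => φ (x + z)) ν) (hx : x ∈ interior (Function.support φ))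
    (u : E →L[ℝ] ℝ) : sectionIntegral (ν.restrict {z | 0 ≤ u z}) φ x ≠ 0 := by
  intro hzero
  have hae := (ae_restrict_iff' (measurableSet_le measurable_const u.continuous.measurable)).1
    ((lintegral_eq_zero_iff' hφ.restrict).1 hzero)
  have hU : {z : E | φ (x + z) ≠ 0} ∈ 𝓝 0 :=
    (show Continuous fun z : E => x + z by fun_prop).tendsto' 0 x (by simp)
      (mem_interior_iff_mem_nhds.1 hx)
  refine measure_inter_setOf_nonneg_ne_zero ν hU u.toLinearMap.toAddMonoidHom
    (measure_mono_null (fun z hz => ?_) hae)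
  exact fun h => hz.1 (h hz.2)

namespace PowConcave

variable {γ : ℝ} {φ : V → ℝ≥0∞}

lemma aemeasurable_comp_add_coe (hφ : PowConcave γ φ) (hγ : 0 < γ) (ν : Measure E)
    [ν.IsAddHaarMeasure] (x : V) : AEMeasurable (fun z : E => φ (x + z)) ν :=
  ((hφ.comp_add_left x).comp_linearMap E.subtype).aemeasurable hγ ν

lemma sectionIntegral_restrict (hφ : PowConcave γ φ) (hγ : 0 < γ) (ν : Measure E)
    [ν.IsAddHaarMeasure] {C : Set E} (hC : Convex ℝ C) (hCm : MeasurableSet C) :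
    PowConcave (γ / (1 + finrank ℝ E * γ)) (sectionIntegral (ν.restrict C) φ) := by
  convert ((hφ.comp_add_coe E).indicator (hC.linear_preimage (LinearMap.snd ℝ V E))).lintegral hγ ν
    using 2 with x
  rw [sectionIntegral, ← lintegral_indicator hCm]
  rfl

lemma sectionIntegral_univ (hφ : PowConcave γ φ) (hγ : 0 < γ) (ν : Measure E) [ν.IsAddHaarMeasure] :
    PowConcave (γ / (1 + finrank ℝ E * γ)) (sectionIntegral ν φ) := by
  simpa using hφ.sectionIntegral_restrict hγ ν convex_univ .univ

lemma sectionIntegral_halfSpace (hφ : PowConcave γ φ) (hγ : 0 < γ) (ν : Measure E)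
    [ν.IsAddHaarMeasure] (u : E →L[ℝ] ℝ) : PowConcave (γ / (1 + finrank ℝ E * γ))
      (sectionIntegral (ν.restrict {z | 0 ≤ u z}) φ) :=
  hφ.sectionIntegral_restrict hγ ν ((convex_Ici (0 : ℝ)).linear_preimage u.toLinearMap)
    (measurableSet_le measurable_const u.continuous.measurable)

lemma lintegral_sectionIntegral_rpow_le (hφ : PowConcave γ φ) (hγ : 0 < γ) {μ : Measure V}
    [μ.IsAddHaarMeasure] (hφμ : ∫⁻ x, φ x ∂μ ≠ ∞) (ν : Measure E) [ν.IsAddHaarMeasure]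
    {W : Submodule ℝ V} {ω : Measure W} [ω.IsAddHaarMeasure]
    (hω : ∀ g : V → ℝ≥0∞, AEMeasurable g μ →
      ∫⁻ w : W, sectionIntegral ν g w ∂ω = ∫⁻ x, g x ∂μ)
    (u : E →L[ℝ] ℝ) {q : ℝ} (hq : 0 < q) :
    ∫⁻ w : W, sectionIntegral ν φ w ^ (1 + q) ∂ω ≤ ENNReal.ofReal (1 + q) *
      ∫⁻ x, sectionIntegral (ν.restrict {z | 0 ≤ u z}) φ x ^ q * φ x ∂μ := by
  have hSω : AEMeasurable (fun w : W => sectionIntegral ν φ w) ω :=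
    ((hφ.sectionIntegral_univ hγ ν).comp_linearMap W.subtype).aemeasurable (by positivity) ω
  have hφm := hφ.aemeasurable hγ μ
  have hRm := (hφ.sectionIntegral_halfSpace hγ ν u).aemeasurable (by positivity) μ
  rw [← hω (fun x => _ * φ x) ((hRm.pow_const q).mul hφm),
    ← lintegral_const_mul' _ _ (by simp)]
  refine lintegral_mono_ae ?_
  filter_upwards [ae_lt_top' hSω ((hω φ hφm).trans_ne hφμ)] with w hw
  exact sectionIntegral_rpow_le (hφ.aemeasurable_comp_add_coe hγ ν w) hw.ne u hq

end PowConcave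

end SectionIntegral

section Centroid

namespace PowConcave

variable {V : Type*} [NormedAddCommGroup V] [NormedSpace ℝ V] [FiniteDimensional ℝ V]
  [MeasurableSpace V] [BorelSpace V] {μ : Measure V} [μ.IsAddHaarMeasure] {γ q : ℝ}
  {φ R : V → ℝ≥0∞}

lemma ae_mem_interior_support (hφ : PowConcave γ φ) (hγ : 0 < γ) :
    ∀ᵐ x ∂μ.withDensity φ, x ∈ interior (Function.support φ) := by
  rw [ae_withDensity_iff' (hφ.aemeasurable hγ μ)]
  filter_upwards [measure_eq_zero_iff_ae_notMem.1 (hφ.convex_support.addHaar_frontier μ)]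
    with x hx hφx
  by_contra h
  exact hx ⟨subset_closure hφx, h⟩

variable [IsFiniteMeasure (μ.withDensity φ)] [NeZero (μ.withDensity φ)]

lemma lintegral_rpow_mul_le (hφ : PowConcave γ φ) (hγ : 0 < γ) (hR : PowConcave q R) (hq : 0 < q)
    (hφR : interior (Function.support φ) ⊆ Function.support R)
    (hint : Integrable id (μ.withDensity φ)) (hcent : ⨍ x, x ∂μ.withDensity φ = 0) :
    ∫⁻ x, R x ^ q * φ x ∂μ ≤ R 0 ^ q * ∫⁻ x, φ x ∂μ := by
  have hRm : AEMeasurable (fun x => R x ^ q) μ := (hR.aemeasurable hq μ).pow_const q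
  have hconcave := hR.subset hφR (NNReal.convex_iff.2 hφ.convex_support.interior)
  have hjensen := laverage_comp_le_of_isOpen hconcave isOpen_interior
    (hφ.ae_mem_interior_support hγ) hint (hRm.mono_ac (withDensity_absolutelyContinuous μ φ))
  calc ∫⁻ x, R x ^ q * φ x ∂μ = ∫⁻ x, R x ^ q ∂μ.withDensity φ := by
        rw [lintegral_withDensity_eq_lintegral_mul₀ (hφ.aemeasurable hγ μ) hRm]
        simp [mul_comm]
    _ = (∫⁻ x, φ x ∂μ) * ⨍⁻ x, R x ^ q ∂μ.withDensity φ := by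
        rw [← measure_mul_laverage, withDensity_apply _ .univ, Measure.restrict_univ]
    _ ≤ (∫⁻ x, φ x ∂μ) * R 0 ^ q := by
        gcongr
        exact hcent ▸ hjensen
    _ = _ := mul_comm _ _

lemma sectionIntegral_zero_rpow_le (hφ : PowConcave γ φ) (hγ : 0 < γ)
    (hint : Integrable id (μ.withDensity φ)) (hcent : ⨍ x, x ∂μ.withDensity φ = 0)
    (E : Submodule ℝ V) (ν : Measure E) [ν.IsAddHaarMeasure] (u : E →L[ℝ] ℝ)
    (hq : q = γ / (1 + finrank ℝ E * γ)) :
    sectionIntegral ν φ 0 ^ q ≤ ENNReal.ofReal (1 + q * (finrank ℝ V - finrank ℝ E + 1)) *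
      sectionIntegral (ν.restrict {z | 0 ≤ u z}) φ 0 ^ q := by
  have hq0 : 0 < q := hq ▸ by positivity
  have hJ : μ.withDensity φ univ = ∫⁻ x, φ x ∂μ := by simp
  have hJ0 : ∫⁻ x, φ x ∂μ ≠ 0 := hJ ▸ NeZero.ne _
  have hJt : ∫⁻ x, φ x ∂μ ≠ ∞ := hJ ▸ measure_ne_top _ _
  obtain ⟨W, hEW⟩ := E.exists_isCompl
  obtain ⟨ω, hω, hfubini⟩ := exists_lintegral_sectionIntegral_eq hEW.symm μ ν
  have hd : (finrank ℝ W : ℝ) = finrank ℝ V - finrank ℝ E := by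
    rw [← Submodule.finrank_add_eq_of_isCompl hEW]
    simp
  set S := sectionIntegral ν φ
  set R := sectionIntegral (ν.restrict {z | 0 ≤ u z}) φ
  have hS : PowConcave q S := hq ▸ hφ.sectionIntegral_univ hγ ν
  have hR : PowConcave q R := hq ▸ hφ.sectionIntegral_halfSpace hγ ν u
  have hR0 : interior (Function.support φ) ⊆ Function.support R := fun x hx =>
    sectionIntegral_restrict_ne_zero ν (hφ.aemeasurable_comp_add_coe hγ ν x) hx u
  have hchain : ENNReal.ofReal (1 + q) * (S 0 ^ q * ∫⁻ x, φ x ∂μ) ≤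
      ENNReal.ofReal (1 + q) * (ENNReal.ofReal (1 + q * (finrank ℝ V - finrank ℝ E + 1)) *
        R 0 ^ q * ∫⁻ x, φ x ∂μ) := by
    rw [← hd]
    calc _ = ENNReal.ofReal (1 + q) * (S 0 ^ q * ∫⁻ w : W, S w ∂ω) := by
          rw [hfubini φ (hφ.aemeasurable hγ μ)]
      _ ≤ ENNReal.ofReal (1 + q * (finrank ℝ W + 1)) * ∫⁻ w : W, S w ^ (1 + q) ∂ω :=
          (hS.comp_linearMap W.subtype).rpow_apply_zero_mul_lintegral_le hq0 ω
      _ ≤ ENNReal.ofReal (1 + q * (finrank ℝ W + 1)) *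
            (ENNReal.ofReal (1 + q) * ∫⁻ x, R x ^ q * φ x ∂μ) := by
          gcongr
          exact hφ.lintegral_sectionIntegral_rpow_le hγ hJt ν hfubini u hq0
      _ ≤ ENNReal.ofReal (1 + q * (finrank ℝ W + 1)) *
            (ENNReal.ofReal (1 + q) * (R 0 ^ q * ∫⁻ x, φ x ∂μ)) := by
          gcongr _ * (_ * ?_)
          exact hφ.lintegral_rpow_mul_le hγ hR hq0 hR0 hint hcent
      _ = _ := by ring
  rwa [ENNReal.mul_le_mul_iff_right (ENNReal.ofReal_pos.2 (by positivity)).ne' (by simp),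
    ENNReal.mul_le_mul_iff_left hJ0 hJt] at hchain

end PowConcave

end Centroid

section RealValued

lemma setIntegral_inter_hausdorffMeasure {X F : Type*} [EMetricSpace X] [MeasurableSpace X]
    [BorelSpace X] [NormedAddCommGroup F] [NormedSpace ℝ F] {s t : Set X} (hs : MeasurableSet s)
    (ht : MeasurableSet t) {d : ℝ} (hd : 0 ≤ d) (f : X → F) :
    ∫ x in s ∩ t, f x ∂μH[d] = ∫ x : s in Subtype.val ⁻¹' t, f x ∂μH[d] := by
  rw [← (MeasurableEmbedding.subtype_coe hs).setIntegral_map,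
    isometry_subtype_coe.map_hausdorffMeasure (.inl hd), Subtype.range_coe,
    Measure.restrict_restrict ht, inter_comm]

lemma powConcave_ofReal {V : Type*} [AddCommGroup V] [Module ℝ V] {γ : ℝ} (hγ : 0 < γ)
    {f : V → ℝ} (hf : ∀ x, 0 ≤ f x)
    (hconcave : ∀ x y, f x ≠ 0 → f y ≠ 0 → ∀ l : ℝ, 0 ≤ l → l ≤ 1 →
      (l * f x ^ γ + (1 - l) * f y ^ γ) ^ (1 / γ) ≤ f (l • x + (1 - l) • y)) :
    PowConcave γ fun x => ENNReal.ofReal (f x) := by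
  refine (powConcave_iff hγ).2 fun x y hx hy a b _ _ hab => ?_
  have hb : (b : ℝ) = 1 - a := eq_sub_of_add_eq' (by exact_mod_cast hab)
  have hx' : f x ≠ 0 := fun h => hx (by simp [h])
  have hy' : f y ≠ 0 := fun h => hy (by simp [h])
  have h := hconcave x y hx' hy' a a.2 (sub_nonneg.1 (hb ▸ b.2))
  have hfx := Real.rpow_nonneg (hf x) γ
  have hfy := Real.rpow_nonneg (hf y) γ
  rw [← hb, one_div, Real.rpow_inv_le_iff_of_pos (by positivity) (hf _) hγ] at h
  simpa only [ENNReal.ofReal_rpow_of_nonneg (hf _) hγ.le,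
    ENNReal.ofReal_add (mul_nonneg a.coe_nonneg hfx) (mul_nonneg b.coe_nonneg hfy),
    ENNReal.ofReal_mul (NNReal.coe_nonneg _), ENNReal.ofReal_coe_nnreal, NNReal.smul_def]
    using ENNReal.ofReal_le_ofReal h

variable {V : Type*} [NormedAddCommGroup V] [NormedSpace ℝ V] [FiniteDimensional ℝ V]
  [MeasurableSpace V] [BorelSpace V] {μ : Measure V} [μ.IsAddHaarMeasure] {γ : ℝ}

lemma PowConcave.mul_toReal_sectionIntegral_zero_le {φ : V → ℝ≥0∞}
    [IsFiniteMeasure (μ.withDensity φ)] [NeZero (μ.withDensity φ)] (hφ : PowConcave γ φ)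
    (hγ : 0 < γ) (hint : Integrable id (μ.withDensity φ)) (hcent : ⨍ x, x ∂μ.withDensity φ = 0)
    (E : Submodule ℝ V) (ν : Measure E) [ν.IsAddHaarMeasure] (u : E →L[ℝ] ℝ) :
    ((finrank ℝ E * γ + 1) / ((finrank ℝ V + 1) * γ + 1)) ^ ((finrank ℝ E * γ + 1) / γ) *
        (sectionIntegral ν φ 0).toReal ≤
      (sectionIntegral (ν.restrict {z | 0 ≤ u z}) φ 0).toReal := by
  rcases eq_or_ne (sectionIntegral ν φ 0) ∞ with hS | hS
  · simp [hS]
  have hR : sectionIntegral (ν.restrict {z | 0 ≤ u z}) φ 0 ≠ ∞ :=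
    ne_top_of_le_ne_top hS (setLIntegral_le_lintegral _ _)
  obtain ⟨q, hq⟩ : ∃ q, q = γ / (1 + finrank ℝ E * γ) := ⟨_, rfl⟩
  have hq0 : 0 < q := hq ▸ by positivity
  have hc : 1 + q * (finrank ℝ V - finrank ℝ E + 1) =
      ((finrank ℝ V + 1) * γ + 1) / (finrank ℝ E * γ + 1) := by
    rw [hq]
    field_simp
    ring
  have hcore := ENNReal.toReal_mono (by finiteness)
    (hφ.sectionIntegral_zero_rpow_le hγ hint hcent E ν u hq)
  rw [hc, ENNReal.toReal_mul, ENNReal.toReal_ofReal (by positivity), ← ENNReal.toReal_rpow,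
    ← ENNReal.toReal_rpow, ← inv_div, ← div_eq_inv_mul, le_div_iff₀' (by positivity)] at hcore
  have hexp : (finrank ℝ E * γ + 1) / γ = q⁻¹ := by rw [hq, inv_div, add_comm]
  rwa [hexp, ← Real.rpow_le_rpow_iff (by positivity) ENNReal.toReal_nonneg hq0,
    Real.mul_rpow (by positivity) ENNReal.toReal_nonneg, Real.rpow_inv_rpow (by positivity) hq0.ne']

lemma PowConcave.setIntegral_inter_toReal {φ : V → ℝ≥0∞} (hφ : PowConcave γ φ) (hγ : 0 < γ)
    (hφt : ∀ x, φ x < ∞) (E : Submodule ℝ V) {t : Set V} (ht : MeasurableSet t) :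
    ∫ x in E ∩ t, (φ x).toReal ∂μH[finrank ℝ E] =
      (sectionIntegral ((μH[finrank ℝ E] : Measure E).restrict {z | ↑z ∈ t}) φ 0).toReal := by
  rw [setIntegral_inter_hausdorffMeasure E.closed_of_finiteDimensional.measurableSet ht
    (by positivity)]
  simp only [sectionIntegral, zero_add]
  exact integral_toReal ((hφ.comp_linearMap E.subtype).aemeasurable hγ _).restrict
    (.of_forall fun z => hφt z)

theorem grunbaum_k_dim_sections_general (E : Submodule ℝ V) (u : V →L[ℝ] ℝ) (hγ : 0 < γ)
    {f : V → ℝ} (hf_nonneg : ∀ x, 0 ≤ f x)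
    (hf_concave : ∀ x y, f x ≠ 0 → f y ≠ 0 → ∀ l : ℝ, 0 ≤ l → l ≤ 1 →
      (l * f x ^ γ + (1 - l) * f y ^ γ) ^ (1 / γ) ≤ f (l • x + (1 - l) • y))
    (hf_int : Integrable f μ) (hf_pos : 0 < ∫ x, f x ∂μ)
    (hf_cent_int : Integrable (fun x => f x • x) μ) (hf_cent : ∫ x, f x • x ∂μ = 0) :
    ((finrank ℝ E * γ + 1) / ((finrank ℝ V + 1) * γ + 1)) ^ ((finrank ℝ E * γ + 1) / γ) *
        ∫ x in E, f x ∂μH[finrank ℝ E] ≤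
      ∫ x in E ∩ {x | 0 ≤ u x}, f x ∂μH[finrank ℝ E] := by
  obtain ⟨φ, hφ, hφt, rfl⟩ : ∃ φ, PowConcave γ φ ∧ (∀ x, φ x < ∞) ∧ f = fun x => (φ x).toReal :=
    ⟨_, powConcave_ofReal hγ hf_nonneg hf_concave, fun _ => ENNReal.ofReal_lt_top,
      funext fun x => (ENNReal.toReal_ofReal (hf_nonneg x)).symm⟩
  have hφm := hφ.aemeasurable hγ μ
  have : IsFiniteMeasure (μ.withDensity φ) := isFiniteMeasure_withDensity
    ((integrable_toReal_iff hφm (.of_forall fun x => (hφt x).ne)).1 hf_int)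
  have : NeZero (μ.withDensity φ) := ⟨fun h => hf_pos.ne' <| integral_eq_zero_of_ae <|
    ((withDensity_eq_zero_iff hφm).1 h).mono fun x hx => by simp [hx]⟩
  have hint : Integrable id (μ.withDensity φ) :=
    (integrable_withDensity_iff_integrable_smul₀' hφm (.of_forall hφt)).2 hf_cent_int
  have hcent : ⨍ x, x ∂μ.withDensity φ = 0 := by
    rw [average_eq, integral_withDensity_eq_integral_toReal_smul₀ hφm (.of_forall hφt), hf_cent,
      smul_zero]
  have hE := hφ.setIntegral_inter_toReal hγ hφt E .univ
  rw [inter_univ] at hE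
  rw [hE, hφ.setIntegral_inter_toReal hγ hφt E
    (measurableSet_le measurable_const u.continuous.measurable)]
  simpa using hφ.mul_toReal_sectionIntegral_zero_le hγ hint hcent E μH[finrank ℝ E]
    (u.comp E.subtypeL)

end RealValued

/-- **Grünbaum's inequality for `k`-dimensional sections of γ-concave functions.**
For a `k`-dimensional subspace `E ⊆ ℝⁿ`, a unit vector `θ ∈ E`, and a γ-concave
`f : ℝⁿ → [0,∞)` with `0 < ∫ f < ∞` and centroid at the origin,
`∫_{E ∩ θ⁺} f ≥ ((kγ+1)/((n+1)γ+1))^((kγ+1)/γ) ∫_E f`, where the integrals over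
`E` are with respect to `k`-dimensional Lebesgue (Hausdorff) measure on `E`. -/
theorem grunbaum_k_dim_sections
    (n k : ℕ) (hk : 1 ≤ k) (hkn : k ≤ n)
    (E : Submodule ℝ (EuclideanSpace ℝ (Fin n))) (hE : Module.finrank ℝ E = k)
    (θ : EuclideanSpace ℝ (Fin n)) (hθE : θ ∈ E) (hθ : ‖θ‖ = 1)
    (γ : ℝ) (hγ : 0 < γ)
    (f : EuclideanSpace ℝ (Fin n) → ℝ)
    (hf_nonneg : ∀ x, 0 ≤ f x)
    (hf_concave : ∀ x y : EuclideanSpace ℝ (Fin n), f x ≠ 0 → f y ≠ 0 →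
      ∀ l : ℝ, 0 ≤ l → l ≤ 1 →
        (l * f x ^ γ + (1 - l) * f y ^ γ) ^ (1 / γ) ≤ f (l • x + (1 - l) • y))
    (hf_int : Integrable f)
    (hf_pos : 0 < ∫ x, f x)
    (hf_cent_int : Integrable (fun x => f x • x))
    (hf_cent : (∫ x, f x • x) = (0 : EuclideanSpace ℝ (Fin n))) :
    ((k * γ + 1) / ((n + 1) * γ + 1)) ^ ((k * γ + 1) / γ) *
        ∫ x in (E : Set (EuclideanSpace ℝ (Fin n))), f x ∂μH[(k : ℝ)] ≤
      ∫ x in (E : Set (EuclideanSpace ℝ (Fin n))) ∩ {x | 0 ≤ ⟪x, θ⟫}, f x ∂μH[(k : ℝ)] := by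
  subst hE
  simpa [real_inner_comm θ] using grunbaum_k_dim_sections_general E (innerSL ℝ θ) hγ hf_nonneg
    hf_concave hf_int hf_pos hf_cent_int hf_cent
end

section
/- Fix a k-dimensional subspace E of ℝ^n (1 ≤ k ≤ n) and θ ∈ E ∩ S^{n-1}. Let K be a convex body in ℝ^n whose centroid g(K) lies in E ∩ θ^⊥ (in particular this holds when g(K) is at the origin). Then vol_k(K ∩ E ∩ θ^+) ≥ (k/(n+1))^k · vol_k(K ∩ E). -/
open MeasureTheory Set
open scoped RealInnerProductSpace

/-!
Write the ambient space as `F × E` with `dim F = m` and `dim E = k`, let `K_y ⊆ E` be the fiber of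
`K` over `y ∈ F`, and let `c = (0, x₀)` be the centroid of `K`. Put `u y = |K_y| ^ (1 / k)` and
`w = |K_0 ∩ {ℓ x₀ ≤ ℓ}| ^ (1 / k)`.

The Brunn–Minkowski inequality, a consequence of the Prékopa–Leindler inequality, makes
`(s, y) ↦ |K_y ∩ {s ≤ ℓ}| ^ (1 / k)` concave. A supergradient at `(ℓ x₀, 0)` yields an affine
function `r` on `F × E` with `r c = w` and `|K_y ∩ {ℓ x ≤ ℓ}| ^ (1 / k) ≤ r (y, x)` for all
`(y, x) ∈ K`. Hence `|K_y ∩ {r ≤ ρ}| ≤ ρ ^ k` for every `ρ ≥ 0`, and the layer-cake formula gives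
`k / (k + 1) * u y ^ (k + 1) ≤ ∫_{K_y} r`. Integrating over `y`, where an affine function integrates
to its value at the centroid times the volume, yields `k / (k + 1) * ∫ u ^ (k + 1) ≤ w * |K|`.

In the other direction, `u` is concave on an `m`-dimensional set containing `0`, which forces
`(k + 1) * u 0 * ∫ u ^ k ≤ (m + k + 1) * ∫ u ^ (k + 1)`. Since `∫ u ^ k = |K|`, the two estimates
combine to `k / (m + k + 1) * u 0 ≤ w`.
-/

namespace Grunbaum

open scoped ENNReal Pointwise

lemma volume_add_volume_le_of_isCompact {A B : Set ℝ} (hA : IsCompact A) (hB : IsCompact B)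
    (hA₀ : A.Nonempty) (hB₀ : B.Nonempty) : volume A + volume B ≤ volume (A + B) := by
  have hmaxA : sSup A ∈ A := hA.sSup_mem hA₀
  have hminB : sInf B ∈ B := hB.sInf_mem hB₀
  have hsub : (sInf B +ᵥ A) ∪ (sSup A +ᵥ B) ⊆ A + B := by
    rw [union_subset_iff, add_comm A B]
    exact ⟨vadd_set_subset_vadd hminB, add_comm A B ▸ vadd_set_subset_vadd hmaxA⟩
  -- The two translates lie on either side of `sSup A + sInf B`.
  have hinter : (sInf B +ᵥ A) ∩ (sSup A +ᵥ B) ⊆ {sSup A + sInf B} := by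
    rintro _ ⟨⟨x, hx, rfl⟩, ⟨y, hy, hxy⟩⟩
    have hx_le : x ≤ sSup A := le_csSup hA.bddAbove hx
    have hy_ge : sInf B ≤ y := csInf_le hB.bddBelow hy
    simp only [vadd_eq_add, mem_singleton_iff] at hxy ⊢
    linarith
  have hdisj : AEDisjoint volume (sInf B +ᵥ A) (sSup A +ᵥ B) :=
    measure_mono_null hinter Real.volume_singleton
  calc volume A + volume B = volume (sInf B +ᵥ A) + volume (sSup A +ᵥ B) := by
        rw [measure_vadd, measure_vadd]
    _ = volume ((sInf B +ᵥ A) ∪ (sSup A +ᵥ B)) :=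
        (measure_union₀ (hB.measurableSet.const_vadd _).nullMeasurableSet hdisj).symm
    _ ≤ volume (A + B) := measure_mono hsub

theorem volume_add_volume_le {A B : Set ℝ} (hA : MeasurableSet A) (hB : MeasurableSet B)
    (hA₀ : A.Nonempty) (hB₀ : B.Nonempty) : volume A + volume B ≤ volume (A + B) := by
  obtain ⟨x, hx⟩ := hA₀
  obtain ⟨y, hy⟩ := hB₀
  rw [hA.measure_eq_iSup_isCompact, hB.measure_eq_iSup_isCompact]
  simp only [iSup_and']
  refine ENNReal.biSup_add_biSup_le' ⟨∅, by simp⟩ ⟨∅, by simp⟩ fun K ⟨hKA, hK⟩ L ⟨hLB, hL⟩ ↦ ?_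
  calc volume K + volume L ≤ volume (insert x K) + volume (insert y L) := by
        gcongr <;> exact subset_insert _ _
    _ ≤ volume (insert x K + insert y L) :=
        volume_add_volume_le_of_isCompact (hK.insert x) (hL.insert y) (insert_nonempty _ _)
          (insert_nonempty _ _)
    _ ≤ volume (A + B) := by
        gcongr
        exacts [insert_subset hx hKA, insert_subset hy hLB]

lemma lintegral_eq_lintegral_meas_ofReal_lt {Ω : Type*} [MeasurableSpace Ω] (μ : Measure Ω)
    {f : Ω → ℝ≥0∞} (hf : Measurable f) (hf_top : ∀ x, f x ≠ ∞) :
    ∫⁻ x, f x ∂μ = ∫⁻ t in Ioi (0 : ℝ), μ {x | ENNReal.ofReal t < f x} := by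
  calc ∫⁻ x, f x ∂μ = ∫⁻ x, ENNReal.ofReal (f x).toReal ∂μ := by
        simp only [ENNReal.ofReal_toReal (hf_top _)]
    _ = ∫⁻ t in Ioi (0 : ℝ), μ {x | t < (f x).toReal} :=
        lintegral_eq_lintegral_meas_lt μ (.of_forall fun _ ↦ ENNReal.toReal_nonneg)
          hf.ennreal_toReal.aemeasurable
    _ = ∫⁻ t in Ioi (0 : ℝ), μ {x | ENNReal.ofReal t < f x} := by
        refine setLIntegral_congr_fun measurableSet_Ioi fun t ht ↦ ?_
        simp only [ENNReal.ofReal_lt_iff_lt_toReal (le_of_lt ht) (hf_top _)]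

lemma geom_mean_le_arith_mean2_weighted {a b : ℝ} (ha : 0 < a) (hb : 0 < b) (hab : a + b = 1)
    (x y : ℝ≥0∞) : x ^ a * y ^ b ≤ ENNReal.ofReal a * x + ENNReal.ofReal b * y := by
  rcases eq_or_ne x ∞ with rfl | hx
  · simp [ha]
  rcases eq_or_ne y ∞ with rfl | hy
  · simp [hb]
  lift x to NNReal using hx
  lift y to NNReal using hy
  have h := NNReal.geom_mean_le_arith_mean2_weighted a.toNNReal b.toNNReal x y
      (by rw [← Real.toNNReal_add ha.le hb.le, hab, Real.toNNReal_one])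
  rw [Real.coe_toNNReal a ha.le, Real.coe_toNNReal b hb.le] at h
  rw [← ENNReal.coe_rpow_of_nonneg x ha.le, ← ENNReal.coe_rpow_of_nonneg y hb.le]
  rw [ENNReal.ofReal, ENNReal.ofReal]
  exact_mod_cast h

/-- The measure `μ` satisfies the Prékopa–Leindler inequality: for `a, b > 0` with `a + b = 1`,
`∫ h` dominates the weighted geometric mean of `∫ f` and `∫ g` as soon as `h (a • x + b • y)`
dominates the one of `f x` and `g y`. -/
def PrekopaLeindler {E : Type*} [AddCommGroup E] [Module ℝ E] [MeasurableSpace E]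
    (μ : Measure E) : Prop :=
  ∀ ⦃a b : ℝ⦄, 0 < a → 0 < b → a + b = 1 → ∀ ⦃f g h : E → ℝ≥0∞⦄,
    Measurable f → Measurable g → Measurable h →
    (∀ x y, f x ^ a * g y ^ b ≤ h (a • x + b • y)) →
    (∫⁻ x, f x ∂μ) ^ a * (∫⁻ x, g x ∂μ) ^ b ≤ ∫⁻ x, h x ∂μ

section Real

variable {f g h : ℝ → ℝ≥0∞} {a b : ℝ}

lemma ofReal_mul_volume_lt_add_le (hf : Measurable f) (hg : Measurable g)
    (ha : 0 < a) (hb : 0 < b) (hab : a + b = 1)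
    (hfgh : ∀ x y, f x ^ a * g y ^ b ≤ h (a • x + b • y))
    {t : ℝ≥0∞} (htf : ∃ x, t < f x) (htg : ∃ x, t < g x) :
    ENNReal.ofReal a * volume {x | t < f x} + ENNReal.ofReal b * volume {x | t < g x} ≤
      volume {x | t < h x} := by
  have hsub : a • {x | t < f x} + b • {x | t < g x} ⊆ {x | t < h x} := by
    rintro _ ⟨_, ⟨x, hx, rfl⟩, _, ⟨y, hy, rfl⟩, rfl⟩
    calc t = t ^ a * t ^ b := by
          rw [← ENNReal.rpow_add_of_nonneg _ _ ha.le hb.le, hab, ENNReal.rpow_one]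
      _ < f x ^ a * g y ^ b :=
          ENNReal.mul_lt_mul (ENNReal.rpow_lt_rpow hx ha) (ENNReal.rpow_lt_rpow hy hb)
      _ ≤ h (a • x + b • y) := hfgh x y
  calc ENNReal.ofReal a * volume {x | t < f x} + ENNReal.ofReal b * volume {x | t < g x}
      = volume (a • {x | t < f x}) + volume (b • {x | t < g x}) := by
        simp only [Measure.addHaar_smul_of_nonneg _ ha.le, Measure.addHaar_smul_of_nonneg _ hb.le,
          Module.finrank_self, pow_one]
    _ ≤ volume (a • {x | t < f x} + b • {x | t < g x}) :=
        volume_add_volume_le ((measurableSet_lt measurable_const hf).const_smul₀ a)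
          ((measurableSet_lt measurable_const hg).const_smul₀ b) (Set.Nonempty.smul_set htf)
          (Set.Nonempty.smul_set htg)
    _ ≤ volume {x | t < h x} := measure_mono hsub

lemma arith_mean_lintegral_le_of_iSup_eq_one (hf : Measurable f) (hg : Measurable g)
    (hh : Measurable h) (ha : 0 < a) (hb : 0 < b) (hab : a + b = 1)
    (hfgh : ∀ x y, f x ^ a * g y ^ b ≤ h (a • x + b • y))
    (hf₁ : ⨆ x, f x = 1) (hg₁ : ⨆ x, g x = 1) :
    ENNReal.ofReal a * (∫⁻ x, f x) + ENNReal.ofReal b * (∫⁻ x, g x) ≤ ∫⁻ x, h x := by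
  have hf_le (x : ℝ) : f x ≤ 1 := hf₁ ▸ le_iSup f x
  have hg_le (x : ℝ) : g x ≤ 1 := hg₁ ▸ le_iSup g x
  -- The layer-cake formula is stated for finite functions.
  set h₁ : ℝ → ℝ≥0∞ := fun x ↦ min (h x) 1
  have hh₁ : Measurable h₁ := hh.min measurable_const
  have hfgh₁ (x y : ℝ) : f x ^ a * g y ^ b ≤ h₁ (a • x + b • y) :=
    le_min (hfgh x y) (mul_le_one' (ENNReal.rpow_le_one (hf_le x) ha.le)
      (ENNReal.rpow_le_one (hg_le y) hb.le))
  have hmeas (u : ℝ → ℝ≥0∞) : Measurable fun t : ℝ ↦ volume {x | ENNReal.ofReal t < u x} :=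
    Antitone.measurable fun s t hst ↦
      measure_mono fun x hx ↦ (ENNReal.ofReal_le_ofReal hst).trans_lt hx
  have hlayer (t : ℝ) :
      ENNReal.ofReal a * volume {x | ENNReal.ofReal t < f x} +
        ENNReal.ofReal b * volume {x | ENNReal.ofReal t < g x} ≤
      volume {x | ENNReal.ofReal t < h₁ x} := by
    rcases lt_or_ge (ENNReal.ofReal t) 1 with ht | ht
    · exact ofReal_mul_volume_lt_add_le hf hg ha hb hab hfgh₁ (lt_iSup_iff.1 (hf₁ ▸ ht))
        (lt_iSup_iff.1 (hg₁ ▸ ht))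
    · simp [((hf_le _).trans ht).not_gt, ((hg_le _).trans ht).not_gt]
  refine le_trans ?_ (lintegral_mono fun x ↦ min_le_left (h x) 1)
  rw [lintegral_eq_lintegral_meas_ofReal_lt _ hf fun x ↦ ne_top_of_le_ne_top (by simp) (hf_le x),
    lintegral_eq_lintegral_meas_ofReal_lt _ hg fun x ↦ ne_top_of_le_ne_top (by simp) (hg_le x),
    lintegral_eq_lintegral_meas_ofReal_lt _ hh₁ fun x ↦
      ne_top_of_le_ne_top ENNReal.one_ne_top (min_le_right (h x) 1),
    ← lintegral_const_mul _ (hmeas f), ← lintegral_const_mul _ (hmeas g),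
    ← lintegral_add_left ((hmeas f).const_mul _)]
  exact lintegral_mono hlayer

lemma geom_mean_lintegral_le_of_iSup_ne_top (hf : Measurable f) (hg : Measurable g)
    (hh : Measurable h) (ha : 0 < a) (hb : 0 < b) (hab : a + b = 1)
    (hfgh : ∀ x y, f x ^ a * g y ^ b ≤ h (a • x + b • y))
    (hf_top : ⨆ x, f x ≠ ∞) (hg_top : ⨆ x, g x ≠ ∞) :
    (∫⁻ x, f x) ^ a * (∫⁻ x, g x) ^ b ≤ ∫⁻ x, h x := by
  set F := ⨆ x, f x with hF
  set G := ⨆ x, g x with hG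
  rcases eq_or_ne F 0 with hF₀ | hF₀
  · have hf₀ : f = 0 := funext (ENNReal.iSup_eq_zero.1 hF₀)
    simp [hf₀, ha]
  rcases eq_or_ne G 0 with hG₀ | hG₀
  · have hg₀ : g = 0 := funext (ENNReal.iSup_eq_zero.1 hG₀)
    simp [hg₀, hb]
  have hscale (u v : ℝ≥0∞) :
      (F⁻¹ * u) ^ a * (G⁻¹ * v) ^ b = F⁻¹ ^ a * G⁻¹ ^ b * (u ^ a * v ^ b) := by
    rw [ENNReal.mul_rpow_of_nonneg _ _ ha.le, ENNReal.mul_rpow_of_nonneg _ _ hb.le,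
      mul_mul_mul_comm]
  have hnormalized := arith_mean_lintegral_le_of_iSup_eq_one (f := fun x ↦ F⁻¹ * f x)
    (g := fun x ↦ G⁻¹ * g x) (h := fun x ↦ F⁻¹ ^ a * G⁻¹ ^ b * h x) (hf.const_mul _)
    (hg.const_mul _) (hh.const_mul _) ha hb hab
    (fun x y ↦ (hscale _ _).trans_le (by gcongr; exact hfgh x y))
    (by rw [← ENNReal.mul_iSup, ← hF, ENNReal.inv_mul_cancel hF₀ hf_top])
    (by rw [← ENNReal.mul_iSup, ← hG, ENNReal.inv_mul_cancel hG₀ hg_top])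
  rw [lintegral_const_mul _ hf, lintegral_const_mul _ hg, lintegral_const_mul _ hh] at hnormalized
  have hscaled := (geom_mean_le_arith_mean2_weighted ha hb hab _ _).trans hnormalized
  rw [hscale] at hscaled
  refine (ENNReal.mul_le_mul_iff_right ?_ ?_).1 hscaled
  · simp [ha.le, hb.le, hf_top, hg_top, ENNReal.rpow_eq_zero_iff]
  · exact ENNReal.mul_ne_top (ENNReal.rpow_ne_top_of_nonneg ha.le (ENNReal.inv_ne_top.2 hF₀))
      (ENNReal.rpow_ne_top_of_nonneg hb.le (ENNReal.inv_ne_top.2 hG₀))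

end Real

lemma tendsto_lintegral_min_natCast {Ω : Type*} [MeasurableSpace Ω] (μ : Measure Ω)
    {f : Ω → ℝ≥0∞} (hf : Measurable f) :
    Filter.Tendsto (fun N : ℕ ↦ ∫⁻ x, min (f x) N ∂μ) Filter.atTop (nhds (∫⁻ x, f x ∂μ)) := by
  refine lintegral_tendsto_of_tendsto_of_monotone
    (fun N ↦ (hf.min measurable_const).aemeasurable)
    (.of_forall fun x M N hMN ↦ min_le_min le_rfl (by exact_mod_cast hMN)) (.of_forall fun x ↦ ?_)
  simpa using (tendsto_const_nhds (x := f x)).min ENNReal.tendsto_nat_nhds_top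

namespace PrekopaLeindler

theorem volume_real : PrekopaLeindler (volume : Measure ℝ) := by
  intro a b ha hb hab f g h hf hg hh hfgh
  rcases eq_or_ne (∫⁻ x, f x) 0 with hf₀ | hf₀
  · simp [hf₀, ha]
  rcases eq_or_ne (∫⁻ x, g x) 0 with hg₀ | hg₀
  · simp [hg₀, hb]
  have hlim := ENNReal.Tendsto.mul
    ((tendsto_lintegral_min_natCast volume hf).ennrpow_const a) (.inl (by simp [hf₀, ha.not_gt]))
    ((tendsto_lintegral_min_natCast volume hg).ennrpow_const b) (.inl (by simp [hg₀, hb.not_gt]))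
  refine le_of_tendsto' hlim fun N ↦ ?_
  have hbdd (u : ℝ → ℝ≥0∞) : ⨆ x, min (u x) N ≠ ∞ :=
    ne_top_of_le_ne_top (ENNReal.natCast_ne_top N) (iSup_le fun x ↦ min_le_right _ _)
  refine geom_mean_lintegral_le_of_iSup_ne_top (hf.min measurable_const) (hg.min measurable_const)
    hh ha hb hab (fun x y ↦ le_trans ?_ (hfgh x y)) (hbdd f) (hbdd g)
  gcongr <;> exact min_le_left _ _

lemma volume_fin_zero : PrekopaLeindler (volume : Measure (Fin 0 → ℝ)) := by
  intro a b _ _ _ f g h _ _ _ hfgh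
  simpa [Measure.volume_pi_eq_dirac 0] using hfgh 0 0

lemma prod {E F : Type*} [AddCommGroup E] [Module ℝ E] [MeasurableSpace E]
    [AddCommGroup F] [Module ℝ F] [MeasurableSpace F] {μ : Measure E} {ν : Measure F}
    [SFinite ν] (hμ : PrekopaLeindler μ) (hν : PrekopaLeindler ν) :
    PrekopaLeindler (μ.prod ν) := by
  intro a b ha hb hab f g h hf hg hh hfgh
  rw [lintegral_prod _ hf.aemeasurable, lintegral_prod _ hg.aemeasurable,
    lintegral_prod _ hh.aemeasurable]
  exact hμ ha hb hab hf.lintegral_prod_right' hg.lintegral_prod_right' hh.lintegral_prod_right'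
    fun x y ↦ hν ha hb hab (hf.comp measurable_prodMk_left) (hg.comp measurable_prodMk_left)
      (hh.comp measurable_prodMk_left) fun x' y' ↦ hfgh (x, x') (y, y')

lemma of_continuousLinearEquiv {E F : Type*}
    [NormedAddCommGroup E] [NormedSpace ℝ E] [FiniteDimensional ℝ E]
    [MeasurableSpace E] [BorelSpace E] [NormedAddCommGroup F] [NormedSpace ℝ F]
    [MeasurableSpace F] [BorelSpace F] {ν : Measure F} [ν.IsAddHaarMeasure]
    (hν : PrekopaLeindler ν) (e : F ≃L[ℝ] E) (μ : Measure E) [μ.IsAddHaarMeasure] :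
    PrekopaLeindler μ := by
  intro a b ha hb hab f g h hf hg hh hfgh
  have : (ν.map e).IsAddHaarMeasure := e.isAddHaarMeasure_map ν
  have he : Measurable e := e.continuous.measurable
  rw [Measure.isAddLeftInvariant_eq_smul μ (ν.map e)]
  simp only [lintegral_smul_measure, lintegral_map hf he, lintegral_map hg he,
    lintegral_map hh he, ENNReal.smul_def, smul_eq_mul]
  rw [ENNReal.mul_rpow_of_nonneg _ _ ha.le, ENNReal.mul_rpow_of_nonneg _ _ hb.le, mul_mul_mul_comm,
    ← ENNReal.rpow_add_of_nonneg _ _ ha.le hb.le, hab, ENNReal.rpow_one]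
  gcongr
  exact hν ha hb hab (hf.comp he) (hg.comp he) (hh.comp he) fun x y ↦ by
    simpa only [map_add, map_smul] using hfgh (e x) (e y)

lemma volume_fin (n : ℕ) : PrekopaLeindler (volume : Measure (Fin n → ℝ)) := by
  induction n with
  | zero => exact volume_fin_zero
  | succ n ih =>
    exact (volume_real.prod ih).of_continuousLinearEquiv (Fin.consEquivL ℝ fun _ ↦ ℝ) volume

theorem of_isAddHaarMeasure {E : Type*} [NormedAddCommGroup E] [NormedSpace ℝ E]
    [FiniteDimensional ℝ E] [MeasurableSpace E] [BorelSpace E] (μ : Measure E)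
    [μ.IsAddHaarMeasure] : PrekopaLeindler μ :=
  (volume_fin (Module.finrank ℝ E)).of_continuousLinearEquiv
    (.ofFinrankEq (Module.finrank_fin_fun ℝ)) μ

end PrekopaLeindler

section BrunnMinkowski

variable {E : Type*} [NormedAddCommGroup E] [NormedSpace ℝ E] [MeasurableSpace E]
  {μ : Measure E} {A B : Set E}

theorem measure_rpow_mul_measure_rpow_le [BorelSpace E] [FiniteDimensional ℝ E]
    [μ.IsAddHaarMeasure] (hA : MeasurableSet A) (hB : MeasurableSet B) {a b : ℝ} (ha : 0 < a)
    (hb : 0 < b) (hab : a + b = 1) : μ A ^ a * μ B ^ b ≤ μ (a • A + b • B) := by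
  set C := toMeasurable μ (a • A + b • B)
  have hC : MeasurableSet C := measurableSet_toMeasurable μ _
  have hindicator (x y : E) : A.indicator (1 : E → ℝ≥0∞) x ^ a * B.indicator 1 y ^ b ≤
      C.indicator 1 (a • x + b • y) := by
    by_cases hx : x ∈ A
    · by_cases hy : y ∈ B
      · have hxy : a • x + b • y ∈ C := subset_toMeasurable μ _
          (add_mem_add (smul_mem_smul_set hx) (smul_mem_smul_set hy))
        simp [hx, hy, hxy]
      · simp [hy, hb]
    · simp [hx, ha]
  calc μ A ^ a * μ B ^ b
      = (∫⁻ x, A.indicator 1 x ∂μ) ^ a * (∫⁻ x, B.indicator 1 x ∂μ) ^ b := by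
        rw [lintegral_indicator_one hA, lintegral_indicator_one hB]
    _ ≤ ∫⁻ x, C.indicator 1 x ∂μ :=
        PrekopaLeindler.of_isAddHaarMeasure μ ha hb hab (measurable_one.indicator hA)
          (measurable_one.indicator hB) (measurable_one.indicator hC) hindicator
    _ = μ (a • A + b • B) := by rw [lintegral_indicator_one hC, measure_toMeasurable]

/-- The `k`-th root of the `μ`-measure of a subset of a `k`-dimensional space; it is homogeneous
of degree one. Sets of infinite measure are given measure `0`. -/
noncomputable def measureRoot (μ : Measure E) (S : Set E) : ℝ :=
  μ.real S ^ (Module.finrank ℝ E : ℝ)⁻¹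

lemma measureRoot_nonneg (μ : Measure E) (S : Set E) : 0 ≤ measureRoot μ S :=
  Real.rpow_nonneg measureReal_nonneg _

lemma measureRoot_mono (hAB : A ⊆ B) (hB : μ B ≠ ∞) : measureRoot μ A ≤ measureRoot μ B :=
  Real.rpow_le_rpow measureReal_nonneg (measureReal_mono hAB hB) (by positivity)

lemma measureRoot_vadd [μ.IsAddLeftInvariant] (x : E) :
    measureRoot μ (x +ᵥ A) = measureRoot μ A := by
  rw [measureRoot, measureRoot, measureReal_def, measure_vadd, measureReal_def]

lemma measureRoot_rpow_mul_measureRoot_rpow_le [BorelSpace E] [FiniteDimensional ℝ E]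
    [μ.IsAddHaarMeasure] (hA : MeasurableSet A) (hB : MeasurableSet B) {a b : ℝ} (ha : 0 < a)
    (hb : 0 < b) (hab : a + b = 1) (hAB : μ (a • A + b • B) ≠ ∞) :
    measureRoot μ A ^ a * measureRoot μ B ^ b ≤ measureRoot μ (a • A + b • B) := by
  set c := (Module.finrank ℝ E : ℝ)⁻¹
  calc measureRoot μ A ^ a * measureRoot μ B ^ b = ((μ A ^ a * μ B ^ b).toReal) ^ c := by
        rw [ENNReal.toReal_mul, ← ENNReal.toReal_rpow, ← ENNReal.toReal_rpow,
          Real.mul_rpow (by positivity) (by positivity),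
          ← Real.rpow_mul ENNReal.toReal_nonneg, ← Real.rpow_mul ENNReal.toReal_nonneg,
          mul_comm a, mul_comm b, Real.rpow_mul ENNReal.toReal_nonneg,
          Real.rpow_mul ENNReal.toReal_nonneg]
        rfl
    _ ≤ measureRoot μ (a • A + b • B) := by
        refine Real.rpow_le_rpow ENNReal.toReal_nonneg (ENNReal.toReal_mono hAB ?_) (by positivity)
        exact measure_rpow_mul_measure_rpow_le hA hB ha hb hab

variable [FiniteDimensional ℝ E] [Nontrivial E]

lemma measureRoot_pow (μ : Measure E) (S : Set E) :
    measureRoot μ S ^ Module.finrank ℝ E = μ.real S :=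
  Real.rpow_inv_natCast_pow measureReal_nonneg Module.finrank_pos.ne'

lemma ofReal_pow_mul_measure_le {a : ℝ} (ha : 0 ≤ a) (hA : μ A ≠ ∞) (hB : μ B ≠ ∞)
    (h : a * measureRoot μ A ≤ measureRoot μ B) :
    ENNReal.ofReal (a ^ Module.finrank ℝ E) * μ A ≤ μ B := by
  rw [← ofReal_measureReal hA, ← ofReal_measureReal hB, ← measureRoot_pow, ← measureRoot_pow,
    ← ENNReal.ofReal_mul (by positivity), ← mul_pow]
  exact ENNReal.ofReal_le_ofReal
    (pow_le_pow_left₀ (mul_nonneg ha (measureRoot_nonneg μ A)) h _)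

lemma measureRoot_empty (μ : Measure E) : measureRoot μ ∅ = 0 := by
  rw [measureRoot, measureReal_empty, Real.zero_rpow]
  exact inv_ne_zero (Nat.cast_ne_zero.2 Module.finrank_pos.ne')

variable [BorelSpace E] [μ.IsAddHaarMeasure]

lemma measureRoot_smul {c : ℝ} (hc : 0 ≤ c) (S : Set E) :
    measureRoot μ (c • S) = c * measureRoot μ S := by
  rw [measureRoot, measureReal_def, Measure.addHaar_smul_of_nonneg μ hc, ENNReal.toReal_mul,
    ENNReal.toReal_ofReal (by positivity), Real.mul_rpow (by positivity) ENNReal.toReal_nonneg,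
    Real.pow_rpow_inv_natCast hc Module.finrank_pos.ne', measureRoot, measureReal_def]

theorem measureRoot_add_measureRoot_le (hA : MeasurableSet A) (hB : MeasurableSet B)
    (hA₀ : A.Nonempty) (hB₀ : B.Nonempty) (hAB : μ (A + B) ≠ ∞) :
    measureRoot μ A + measureRoot μ B ≤ measureRoot μ (A + B) := by
  set p := measureRoot μ A with hp
  set q := measureRoot μ B with hq
  obtain ⟨x, hx⟩ := hA₀
  obtain ⟨y, hy⟩ := hB₀
  rcases (measureRoot_nonneg μ A).eq_or_lt with hp₀ | hp₀
  · rw [hp, ← hp₀, zero_add, hq, ← measureRoot_vadd x]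
    exact measureRoot_mono (vadd_set_subset_vadd hx) hAB
  rcases (measureRoot_nonneg μ B).eq_or_lt with hq₀ | hq₀
  · rw [hq, ← hq₀, add_zero, hp, ← measureRoot_vadd y, add_comm A B]
    exact measureRoot_mono (vadd_set_subset_vadd hy) (add_comm A B ▸ hAB)
  rw [← hp] at hp₀
  rw [← hq] at hq₀
  have hs : 0 < p + q := add_pos hp₀ hq₀
  have hsum : (p / (p + q)) • p⁻¹ • A + (q / (p + q)) • q⁻¹ • B = (p + q)⁻¹ • (A + B) := by
    rw [smul_smul, smul_smul, smul_add]
    congr 2 <;> field_simp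
  have hroot := measureRoot_rpow_mul_measureRoot_rpow_le (μ := μ) (hA.const_smul₀ p⁻¹)
    (hB.const_smul₀ q⁻¹) (div_pos hp₀ hs) (div_pos hq₀ hs) (by field_simp) (by
      rw [hsum, Measure.addHaar_smul]
      exact ENNReal.mul_ne_top ENNReal.ofReal_ne_top hAB)
  rw [hsum, measureRoot_smul (by positivity), measureRoot_smul (by positivity),
    measureRoot_smul (by positivity), ← hp, ← hq, inv_mul_cancel₀ hp₀.ne', inv_mul_cancel₀ hq₀.ne',
    Real.one_rpow, Real.one_rpow, one_mul, inv_mul_eq_div, one_le_div hs] at hroot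
  exact hroot

theorem concaveOn_measureRoot_fiber (μ : Measure E) [μ.IsAddHaarMeasure] {G : Type*}
    [AddCommGroup G] [Module ℝ G] {K : Set (G × E)} (hK : Convex ℝ K)
    (hcomp : ∀ z, IsCompact (Prod.mk z ⁻¹' K)) :
    ConcaveOn ℝ (Prod.fst '' K) fun z ↦ measureRoot μ (Prod.mk z ⁻¹' K) := by
  refine concaveOn_iff_forall_pos.2 ⟨hK.linear_image (LinearMap.fst ℝ G E), ?_⟩
  rintro _ ⟨⟨z, x⟩, hx, rfl⟩ _ ⟨⟨w, y⟩, hy, rfl⟩ a b ha hb hab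
  have hsub : a • (Prod.mk z ⁻¹' K) + b • (Prod.mk w ⁻¹' K) ⊆ Prod.mk (a • z + b • w) ⁻¹' K := by
    rintro _ ⟨_, ⟨x', hx', rfl⟩, _, ⟨y', hy', rfl⟩, rfl⟩
    exact hK hx' hy' ha.le hb.le hab
  have hfin : μ (Prod.mk (a • z + b • w) ⁻¹' K) ≠ ∞ := (hcomp _).measure_ne_top
  calc a • measureRoot μ (Prod.mk z ⁻¹' K) + b • measureRoot μ (Prod.mk w ⁻¹' K)
      = measureRoot μ (a • (Prod.mk z ⁻¹' K)) + measureRoot μ (b • (Prod.mk w ⁻¹' K)) := by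
        rw [measureRoot_smul ha.le, measureRoot_smul hb.le, smul_eq_mul, smul_eq_mul]
    _ ≤ measureRoot μ (a • (Prod.mk z ⁻¹' K) + b • (Prod.mk w ⁻¹' K)) :=
        measureRoot_add_measureRoot_le ((hcomp z).measurableSet.const_smul₀ a)
          ((hcomp w).measurableSet.const_smul₀ b) (Set.Nonempty.smul_set ⟨x, hx⟩)
          (Set.Nonempty.smul_set ⟨y, hy⟩) (measure_ne_top_of_subset hsub hfin)
    _ ≤ measureRoot μ (Prod.mk (a • z + b • w) ⁻¹' K) := measureRoot_mono hsub hfin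

end BrunnMinkowski

lemma isOpen_strict_hypograph {X : Type*} [TopologicalSpace X] {D : Set X} {φ : X → ℝ}
    (hD : IsOpen D) (hφ : ContinuousOn φ D) : IsOpen {p : X × ℝ | p.1 ∈ D ∧ p.2 < φ p.1} := by
  have hcont : ContinuousOn (fun p : X × ℝ ↦ φ p.1 - p.2) (Prod.fst ⁻¹' D) :=
    (hφ.comp continuousOn_fst fun _ hp ↦ hp).sub continuousOn_snd
  convert hcont.isOpen_inter_preimage (hD.preimage continuous_fst) (isOpen_Ioi (a := 0)) using 1
  ext p
  simp

section Supergradient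

variable {E : Type*} [NormedAddCommGroup E] [NormedSpace ℝ E] {D : Set E} {φ : E → ℝ} {x₀ : E}

lemma exists_supergradient_of_continuousOn (hφ : ConcaveOn ℝ D φ) (hD : IsOpen D)
    (hcont : ContinuousOn φ D) (hx₀ : x₀ ∈ D) :
    ∃ A : E →L[ℝ] ℝ, ∀ z ∈ D, φ z ≤ φ x₀ + A (z - x₀) := by
  obtain ⟨f, hf⟩ := geometric_hahn_banach_open_point (x := (x₀, φ x₀)) hφ.convex_strict_hypograph
    (isOpen_strict_hypograph hD hcont) fun h ↦ h.2.false
  set g := f.comp (.inl ℝ E ℝ)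
  set c := f (0, 1)
  have hsplit (z : E) (r : ℝ) : f (z, r) = g z + r * c := by
    calc f (z, r) = f ((z, 0) + r • (0, 1)) := by simp
      _ = g z + r * c := by rw [map_add, map_smul]; rfl
  have hc : 0 < c := by
    have h := hf (x₀, φ x₀ - 1) ⟨hx₀, sub_one_lt _⟩
    rw [hsplit, hsplit] at h
    linarith
  refine ⟨-(c⁻¹ • g), fun z hz ↦ le_of_forall_lt fun r hr ↦ ?_⟩
  have h := hf (z, r) ⟨hz, hr⟩
  rw [hsplit, hsplit] at h
  suffices r < φ x₀ - g (z - x₀) / c by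
    simpa [sub_eq_add_neg, div_eq_inv_mul] using this
  rw [lt_sub_comm, div_lt_iff₀ hc, map_sub]
  linarith

theorem exists_supergradient [FiniteDimensional ℝ E] (hφ : ConcaveOn ℝ D φ)
    (hx₀ : x₀ ∈ interior D) : ∃ A : E →L[ℝ] ℝ, ∀ z ∈ D, φ z ≤ φ x₀ + A (z - x₀) := by
  obtain ⟨A, hA⟩ := exists_supergradient_of_continuousOn
    (hφ.subset interior_subset hφ.1.interior) isOpen_interior hφ.continuousOn_interior hx₀
  refine ⟨A, fun z hz ↦ ?_⟩
  have hmid_mem : (1 / 2 : ℝ) • x₀ + (1 / 2 : ℝ) • z ∈ interior D :=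
    hφ.1.combo_interior_self_mem_interior hx₀ hz one_half_pos one_half_pos.le (add_halves 1)
  have hmid_le := hA _ hmid_mem
  have hmid_ge := hφ.2 (interior_subset hx₀) hz one_half_pos.le one_half_pos.le (add_halves 1)
  rw [show (1 / 2 : ℝ) • x₀ + (1 / 2 : ℝ) • z - x₀ = (1 / 2 : ℝ) • (z - x₀) by module,
    map_smul] at hmid_le
  simp only [smul_eq_mul] at hmid_le hmid_ge
  linarith

end Supergradient

lemma div_mul_pow_succ_eq_integral (k : ℕ) {u : ℝ} (hu : 0 ≤ u) :
    (k : ℝ) / (k + 1) * u ^ (k + 1) = ∫ t in Ioc 0 u, (u ^ k - t ^ k) := by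
  rw [← intervalIntegral.integral_of_le hu,
    intervalIntegral.integral_sub intervalIntegrable_const
      (intervalIntegral.intervalIntegrable_pow k),
    intervalIntegral.integral_const, integral_pow]
  simp only [smul_eq_mul, sub_zero, ne_eq, Nat.add_eq_zero_iff, one_ne_zero, and_false,
    not_false_eq_true, zero_pow]
  field_simp
  ring

lemma div_mul_pow_succ_le_integral {Ω : Type*} [MeasurableSpace Ω] {μ : Measure Ω}
    [IsFiniteMeasure μ] {r : Ω → ℝ} (hr : Integrable r μ) (hr₀ : 0 ≤ᵐ[μ] r) {k : ℕ} {u : ℝ}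
    (hu : 0 ≤ u) (huk : u ^ k = μ.real univ)
    (hle : ∀ ρ, 0 ≤ ρ → μ.real {ω | r ω ≤ ρ} ≤ ρ ^ k) :
    k / (k + 1) * u ^ (k + 1) ≤ ∫ ω, r ω ∂μ := by
  have htail {t : ℝ} (ht : 0 ≤ t) : u ^ k - t ^ k ≤ μ.real {ω | t ≤ r ω} := by
    have hcover : μ.real univ ≤ μ.real {ω | r ω ≤ t} + μ.real {ω | t ≤ r ω} :=
      (measureReal_mono fun ω _ ↦ le_total (r ω) t).trans (measureReal_union_le _ _)
    linarith [hle t ht]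
  have hr_min : Integrable (fun ω ↦ min (r ω) u) μ := hr.inf (integrable_const u)
  have hanti : Antitone fun t : ℝ ↦ μ.real {ω | t ≤ min (r ω) u} :=
    fun s t hst ↦ measureReal_mono fun ω hω ↦ hst.trans hω
  calc k / (k + 1) * u ^ (k + 1) = ∫ t in Ioc 0 u, (u ^ k - t ^ k) :=
        div_mul_pow_succ_eq_integral k hu
    _ ≤ ∫ t in Ioc 0 u, μ.real {ω | t ≤ min (r ω) u} := by
        refine setIntegral_mono_on (Continuous.integrableOn_Ioc (by fun_prop))
          (hanti.intervalIntegrable (a := 0) (b := u)).1 measurableSet_Ioc fun t ht ↦ ?_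
        simpa only [le_min_iff, ht.2, and_true] using htail ht.1.le
    _ = ∫ ω, min (r ω) u ∂μ := by
        symm
        refine hr_min.integral_eq_integral_Ioc_meas_le ?_ (.of_forall fun ω ↦ min_le_right _ _)
        filter_upwards [hr₀] with ω hω using le_min hω hu
    _ ≤ ∫ ω, r ω ∂μ := integral_mono hr_min hr fun ω ↦ min_le_left _ _

section Berwald

variable {E : Type*} [NormedAddCommGroup E] [NormedSpace ℝ E] {D : Set E} {u : E → ℝ} {k : ℕ}

lemma pow_succ_mul_add_le_pow_succ_smul (hu : ConcaveOn ℝ D u) (hD₀ : 0 ∈ D) (hu₀ : ∀ y, 0 ≤ u y)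
    (hsupp : ∀ y ∉ D, u y = 0) (hk : k ≠ 0) {l : ℝ} (hl₀ : 0 ≤ l) (hl₁ : l ≤ 1) (y : E) :
    l ^ (k + 1) * u y ^ (k + 1) + (k + 1) * l ^ k * (1 - l) * u 0 * u y ^ k ≤
      u (l • y) ^ (k + 1) := by
  have hl : 0 ≤ (1 - l) * u 0 := mul_nonneg (sub_nonneg.2 hl₁) (hu₀ 0)
  have hly : 0 ≤ l * u y := mul_nonneg hl₀ (hu₀ y)
  by_cases hy : y ∈ D
  · calc l ^ (k + 1) * u y ^ (k + 1) + (k + 1) * l ^ k * (1 - l) * u 0 * u y ^ k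
        = (l * u y) ^ (k + 1) + (k + 1 : ℕ) * (l * u y) ^ (k + 1 - 1) * ((1 - l) * u 0) := by
          rw [Nat.add_sub_cancel, mul_pow, mul_pow]
          push_cast
          ring
      _ ≤ (l * u y + (1 - l) * u 0) ^ (k + 1) := pow_add_mul_le_add_pow hly (by linarith) _
      _ ≤ u (l • y) ^ (k + 1) := by
          gcongr
          simpa using hu.2 hy hD₀ hl₀ (sub_nonneg.2 hl₁) (add_sub_cancel l 1)
  · simpa [hsupp y hy, hk] using pow_nonneg (hu₀ (l • y)) (k + 1)

variable [FiniteDimensional ℝ E] [MeasurableSpace E] [BorelSpace E] {μ : Measure E}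
  [μ.IsAddHaarMeasure]

lemma mul_integral_pow_mul_pow_le (hu : ConcaveOn ℝ D u) (hD₀ : 0 ∈ D) (hu₀ : ∀ y, 0 ≤ u y)
    (hsupp : ∀ y ∉ D, u y = 0) (hk : k ≠ 0) (hint : Integrable (fun y ↦ u y ^ k) μ)
    (hint' : Integrable (fun y ↦ u y ^ (k + 1)) μ) {l : ℝ} (hl₀ : 0 < l) (hl₁ : l < 1) :
    (k + 1) * u 0 * (∫ y, u y ^ k ∂μ) * l ^ (Module.finrank ℝ E + k) ≤
      (Module.finrank ℝ E + k + 1) * ∫ y, u y ^ (k + 1) ∂μ := by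
  set m := Module.finrank ℝ E
  set P := ∫ y, u y ^ k ∂μ
  set Q := ∫ y, u y ^ (k + 1) ∂μ
  have hQ : 0 ≤ Q := integral_nonneg fun y ↦ pow_nonneg (hu₀ y) _
  have hdilate : l ^ (k + 1) * Q + (k + 1) * l ^ k * (1 - l) * u 0 * P ≤ (l ^ m)⁻¹ * Q := by
    calc l ^ (k + 1) * Q + (k + 1) * l ^ k * (1 - l) * u 0 * P
        = ∫ y, (l ^ (k + 1) * u y ^ (k + 1) + (k + 1) * l ^ k * (1 - l) * u 0 * u y ^ k) ∂μ := by
          rw [integral_add (hint'.const_mul _) (hint.const_mul _), integral_const_mul,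
            integral_const_mul]
      _ ≤ ∫ y, u (l • y) ^ (k + 1) ∂μ :=
          integral_mono ((hint'.const_mul _).add (hint.const_mul _))
            ((integrable_comp_smul_iff μ (fun y ↦ u y ^ (k + 1)) hl₀.ne').2 hint')
            (pow_succ_mul_add_le_pow_succ_smul hu hD₀ hu₀ hsupp hk hl₀.le hl₁.le)
      _ = (l ^ m)⁻¹ * Q := by
          rw [Measure.integral_comp_smul μ (fun y ↦ u y ^ (k + 1)), abs_of_nonneg (by positivity),
            smul_eq_mul]
  rw [le_inv_mul_iff₀ (by positivity)] at hdilate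
  have hbernoulli : 1 - (m + k + 1) * (1 - l) ≤ l ^ (m + k + 1) := by
    have h := one_add_mul_le_pow (a := l - 1) (by linarith) (m + k + 1)
    rw [add_sub_cancel] at h
    push_cast at h
    linarith
  refine le_of_mul_le_mul_right ?_ (sub_pos.2 hl₁)
  calc (k + 1) * u 0 * P * l ^ (m + k) * (1 - l)
      = l ^ m * (l ^ (k + 1) * Q + (k + 1) * l ^ k * (1 - l) * u 0 * P) -
          l ^ (m + k + 1) * Q := by ring
    _ ≤ Q - (1 - (m + k + 1) * (1 - l)) * Q := by gcongr
    _ = (m + k + 1) * Q * (1 - l) := by ring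

-- Differentiate `∫ u (l • y) ^ (k + 1) ≥ ∫ (l * u y + (1 - l) * u 0) ^ (k + 1)` at `l = 1`.
theorem mul_integral_pow_le_integral_pow_succ (hu : ConcaveOn ℝ D u) (hD₀ : 0 ∈ D)
    (hu₀ : ∀ y, 0 ≤ u y) (hsupp : ∀ y ∉ D, u y = 0) (hk : k ≠ 0)
    (hint : Integrable (fun y ↦ u y ^ k) μ) (hint' : Integrable (fun y ↦ u y ^ (k + 1)) μ) :
    (k + 1) * u 0 * (∫ y, u y ^ k ∂μ) ≤
      (Module.finrank ℝ E + k + 1) * ∫ y, u y ^ (k + 1) ∂μ := by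
  set N := Module.finrank ℝ E + k
  have hlim : Filter.Tendsto (fun l : ℝ ↦ (k + 1) * u 0 * (∫ y, u y ^ k ∂μ) * l ^ N)
      (nhdsWithin 1 (Iio 1)) (nhds ((k + 1) * u 0 * (∫ y, u y ^ k ∂μ) * 1 ^ N)) :=
    (Continuous.tendsto (by fun_prop) 1).mono_left nhdsWithin_le_nhds
  rw [one_pow, mul_one] at hlim
  refine le_of_tendsto hlim ?_
  filter_upwards [Ioo_mem_nhdsLT zero_lt_one] with l hl
  exact mul_integral_pow_mul_pow_le hu hD₀ hu₀ hsupp hk hint hint' hl.1 hl.2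

end Berwald

section Centroid

lemma setAverage_clm_apply {Ω V W : Type*} [MeasurableSpace Ω] [NormedAddCommGroup V]
    [NormedSpace ℝ V] [CompleteSpace V] [NormedAddCommGroup W] [NormedSpace ℝ W]
    [CompleteSpace W] {μ : Measure Ω} (L : V →L[ℝ] W) {f : Ω → V} {s : Set Ω}
    (hf : IntegrableOn f s μ) : ⨍ x in s, L (f x) ∂μ = L (⨍ x in s, f x ∂μ) := by
  rw [setAverage_eq, setAverage_eq, map_smul, L.integral_comp_comm hf]

lemma setAverage_smul_measure {Ω V : Type*} [MeasurableSpace Ω] [NormedAddCommGroup V]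
    [NormedSpace ℝ V] {ρ : Measure Ω} {c : NNReal} (hc : c ≠ 0) (s : Set Ω) (f : Ω → V) :
    ⨍ x in s, f x ∂(c • ρ) = ⨍ x in s, f x ∂ρ := by
  rw [setAverage_eq, setAverage_eq, Measure.restrict_smul, integral_smul_nnreal_measure,
    measureReal_nnreal_smul_apply, NNReal.smul_def, smul_smul, mul_inv_rev, mul_assoc,
    inv_mul_cancel₀ (by exact_mod_cast hc), mul_one]

lemma integrableOn_id_of_isCompact {V : Type*} [NormedAddCommGroup V] [MeasurableSpace V]
    [OpensMeasurableSpace V] {μ : Measure V} [IsFiniteMeasureOnCompacts μ] {K : Set V}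
    (hK : IsCompact K) : IntegrableOn (fun x ↦ x) K μ :=
  continuousOn_id.integrableOn_compact hK

lemma setIntegral_add_clm_sub_setAverage {V : Type*} [NormedAddCommGroup V] [NormedSpace ℝ V]
    [CompleteSpace V] [MeasurableSpace V] [OpensMeasurableSpace V] {ρ : Measure V}
    [IsFiniteMeasureOnCompacts ρ] {K : Set V} (hK : IsCompact K) (w : ℝ) (A : V →L[ℝ] ℝ) :
    ∫ p in K, (w + A (p - ⨍ x in K, x ∂ρ)) ∂ρ = w * ρ.real K := by
  have hint {f : V → ℝ} (hf : Continuous f) : IntegrableOn f K ρ :=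
    hf.continuousOn.integrableOn_compact hK
  have hzero : ∫ p in K, A (p - ⨍ x in K, x ∂ρ) ∂ρ = 0 := by
    simp only [map_sub]
    rw [integral_sub (hint A.continuous) (hint continuous_const),
      A.integral_comp_comm (integrableOn_id_of_isCompact hK), setIntegral_const, ← map_smul,
      measure_smul_setAverage _ hK.measure_ne_top, sub_self]
  rw [integral_add (hint continuous_const) (hint (by fun_prop)), hzero, setIntegral_const, add_zero,
    smul_eq_mul, mul_comm]

variable {V W : Type*}
  [NormedAddCommGroup V] [NormedSpace ℝ V] [FiniteDimensional ℝ V] [MeasurableSpace V]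
  [BorelSpace V] {μ : Measure V} [μ.IsAddHaarMeasure]
  [NormedAddCommGroup W] [NormedSpace ℝ W] [FiniteDimensional ℝ W] [MeasurableSpace W]
  [BorelSpace W] {ν : Measure W} [ν.IsAddHaarMeasure]

theorem setAverage_mem_interior {K : Set V} (hK : Convex ℝ K) (hcomp : IsCompact K)
    (hint : (interior K).Nonempty) : ⨍ x in K, x ∂μ ∈ interior K := by
  have : IsFiniteMeasure (μ.restrict K) := ⟨by simpa using hcomp.measure_lt_top⟩
  obtain ⟨x, hx⟩ := hint
  obtain ⟨ε, hε, hball⟩ := Metric.nhds_basis_closedBall.mem_iff.1 (isOpen_interior.mem_nhds hx)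
  have hsub : Metric.closedBall x ε ⊆ K := hball.trans interior_subset
  have hpos : μ (Metric.closedBall x ε) ≠ 0 := (Metric.measure_closedBall_pos μ x hε).ne'
  refine hK.average_mem_interior_of_set (t := Metric.closedBall x ε) ?_
    (ae_restrict_mem hcomp.measurableSet) (integrableOn_id_of_isCompact hcomp) ?_
  · rwa [Measure.restrict_apply measurableSet_closedBall, inter_eq_left.2 hsub]
  · rw [Measure.restrict_restrict_of_subset hsub]
    exact hball ((convex_closedBall x ε).set_average_mem Metric.isClosed_closedBall hpos
      measure_closedBall_lt_top.ne (ae_restrict_mem measurableSet_closedBall)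
      ((integrableOn_id_of_isCompact hcomp).mono_set hsub))

theorem map_setAverage_preimage (e : V ≃L[ℝ] W) {K : Set W} (hK : IsCompact K) :
    e (⨍ x in e ⁻¹' K, x ∂μ) = ⨍ y in K, y ∂ν := by
  have : (μ.map e).IsAddHaarMeasure := e.isAddHaarMeasure_map μ
  have hK' : IsCompact (e ⁻¹' K) := e.toHomeomorph.isCompact_preimage.2 hK
  have he : MeasurableEmbedding e := e.toHomeomorph.measurableEmbedding
  calc e (⨍ x in e ⁻¹' K, x ∂μ) = ⨍ x in e ⁻¹' K, e x ∂μ :=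
        (setAverage_clm_apply (e : V →L[ℝ] W) (integrableOn_id_of_isCompact hK')).symm
    _ = ⨍ y in K, y ∂(μ.map e) := by
        rw [setAverage_eq, setAverage_eq, he.setIntegral_map, map_measureReal_apply he.measurable
          hK.measurableSet]
    _ = ⨍ y in K, y ∂ν := by
        rw [Measure.isAddLeftInvariant_eq_smul (μ.map e) ν]
        exact setAverage_smul_measure
          (Measure.addHaarScalarFactor_pos_of_isAddHaarMeasure (μ.map e) ν).ne' K _

end Centroid

section Fubini

variable {X Y : Type*} [MeasurableSpace X] [MeasurableSpace Y] {μ : Measure X} {ν : Measure Y}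
  {K : Set (Y × X)} {r : Y × X → ℝ}

lemma setIntegral_fiber_eq_integral_indicator (hK : MeasurableSet K) (y : Y) :
    ∫ x in Prod.mk y ⁻¹' K, r (y, x) ∂μ = ∫ x, K.indicator r (y, x) ∂μ := by
  rw [← integral_indicator (measurable_prodMk_left hK)]
  rfl

variable [SFinite μ]

lemma integrable_setIntegral_fiber (hK : MeasurableSet K) (hr : IntegrableOn r K (ν.prod μ)) :
    Integrable (fun y ↦ ∫ x in Prod.mk y ⁻¹' K, r (y, x) ∂μ) ν := by
  simp only [setIntegral_fiber_eq_integral_indicator hK]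
  exact ((integrable_indicator_iff hK).2 hr).integral_prod_left

lemma setIntegral_eq_integral_setIntegral_fiber [SFinite ν] (hK : MeasurableSet K)
    (hr : IntegrableOn r K (ν.prod μ)) :
    ∫ p in K, r p ∂(ν.prod μ) = ∫ y, ∫ x in Prod.mk y ⁻¹' K, r (y, x) ∂μ ∂ν := by
  simp only [setIntegral_fiber_eq_integral_indicator hK]
  rw [← integral_indicator hK, integral_prod _ ((integrable_indicator_iff hK).2 hr)]

end Fubini

lemma isCompact_fiber {X Y : Type*} [TopologicalSpace X] [TopologicalSpace Y] [T1Space Y]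
    {K : Set (Y × X)} (hK : IsCompact K) (y : Y) : IsCompact (Prod.mk y ⁻¹' K) := by
  refine Topology.IsClosedEmbedding.isCompact_preimage ⟨isEmbedding_prodMkRight y, ?_⟩ hK
  rw [show range (Prod.mk y : X → Y × X) = Prod.fst ⁻¹' {y} by ext; simp [Prod.ext_iff, eq_comm]]
  exact isClosed_singleton.preimage continuous_fst

section Truncation

variable {E F : Type*} [NormedAddCommGroup E] [NormedSpace ℝ E]
  {ℓ : E →L[ℝ] ℝ} {K : Set (F × E)} {c : F × E}

/-- The body whose fiber over `(s, y)` is the part of the fiber of `K` over `y` where `s ≤ ℓ`. It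
serves to apply Brunn's theorem to all half-spaces bounded by a level set of `ℓ` at once. -/
def truncation (ℓ : E →L[ℝ] ℝ) (K : Set (F × E)) : Set ((ℝ × F) × E) :=
  {p | (p.1.2, p.2) ∈ K ∧ p.1.1 ≤ ℓ p.2}

lemma prodMk_preimage_truncation (z : ℝ × F) :
    Prod.mk z ⁻¹' truncation ℓ K = Prod.mk z.2 ⁻¹' K ∩ {x | z.1 ≤ ℓ x} :=
  rfl

variable [NormedAddCommGroup F]

lemma isCompact_truncation_fiber (hK : IsCompact K) (z : ℝ × F) :
    IsCompact (Prod.mk z ⁻¹' truncation ℓ K) := by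
  rw [prodMk_preimage_truncation]
  exact (isCompact_fiber hK z.2).inter_right (isClosed_le continuous_const ℓ.continuous)

lemma mem_interior_image_fst_truncation (hℓ : ℓ ≠ 0) (hc : c ∈ interior K) :
    (ℓ c.2, c.1) ∈ interior (Prod.fst '' truncation ℓ K) := by
  obtain ⟨v, hv⟩ : ∃ v, ℓ v = 1 :=
    LinearMap.surjective (f := (ℓ : E →ₗ[ℝ] ℝ)) (by exact_mod_cast hℓ) 1
  set γ : ℝ × F → F × E := fun z ↦ (z.2, c.2 + (z.1 - ℓ c.2) • v) with hγ
  have hγ_cont : Continuous γ := by fun_prop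
  have hsub : γ ⁻¹' interior K ⊆ Prod.fst '' truncation ℓ K := fun z hz ↦
    ⟨(z, (γ z).2), ⟨interior_subset hz, by simp [hγ, hv]⟩, rfl⟩
  refine interior_maximal hsub (isOpen_interior.preimage hγ_cont) ?_
  simpa [hγ] using hc

variable [NormedSpace ℝ F]

lemma convex_truncation (hK : Convex ℝ K) : Convex ℝ (truncation ℓ K) := by
  rintro p ⟨hpK, hpℓ⟩ q ⟨hqK, hqℓ⟩ a b ha hb hab
  refine ⟨hK hpK hqK ha hb hab, ?_⟩
  simp only [Prod.fst_add, Prod.smul_fst, Prod.snd_add, Prod.smul_snd, map_add, map_smul]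
  gcongr

variable [FiniteDimensional ℝ E] [Nontrivial E] [MeasurableSpace E] [BorelSpace E]
  [FiniteDimensional ℝ F] {μ : Measure E} [μ.IsAddHaarMeasure]

theorem exists_measureRoot_fiber_inter_le (hK : Convex ℝ K) (hcomp : IsCompact K) (hℓ : ℓ ≠ 0)
    (hc : c ∈ interior K) : ∃ A : F × E →L[ℝ] ℝ, ∀ p ∈ K,
      measureRoot μ (Prod.mk p.1 ⁻¹' K ∩ {x | ℓ p.2 ≤ ℓ x}) ≤
        measureRoot μ (Prod.mk c.1 ⁻¹' K ∩ {x | ℓ c.2 ≤ ℓ x}) + A (p - c) := by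
  obtain ⟨A, hA⟩ := exists_supergradient (concaveOn_measureRoot_fiber μ (convex_truncation hK)
    (isCompact_truncation_fiber hcomp)) (mem_interior_image_fst_truncation hℓ hc)
  refine ⟨A.comp ((ℓ.comp (.snd ℝ F E)).prod (.fst ℝ F E)), fun p hp ↦ ?_⟩
  simpa [prodMk_preimage_truncation] using hA (ℓ p.2, p.1) ⟨((ℓ p.2, p.1), p.2), ⟨hp, le_rfl⟩, rfl⟩

end Truncation

section Fiber

variable {E : Type*} [NormedAddCommGroup E] [NormedSpace ℝ E] [FiniteDimensional ℝ E]
  [Nontrivial E] [MeasurableSpace E] {μ : Measure E} [IsFiniteMeasureOnCompacts μ]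
  {S : Set E} {ℓ r : E → ℝ}

lemma measureRoot_inter_sublevel_le (hS : IsCompact S) (hℓ : Continuous ℓ) (hr : Continuous r)
    (hle : ∀ x₀ ∈ S, measureRoot μ (S ∩ {x | ℓ x₀ ≤ ℓ x}) ≤ r x₀) {ρ : ℝ} (hρ : 0 ≤ ρ) :
    measureRoot μ (S ∩ {x | r x ≤ ρ}) ≤ ρ := by
  rcases (S ∩ {x | r x ≤ ρ}).eq_empty_or_nonempty with hempty | hne
  · rwa [hempty, measureRoot_empty]
  obtain ⟨x₀, ⟨hx₀S, hx₀ρ⟩, hmin⟩ :=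
    (hS.inter_right (isClosed_le hr continuous_const)).exists_isMinOn hne hℓ.continuousOn
  calc measureRoot μ (S ∩ {x | r x ≤ ρ}) ≤ measureRoot μ (S ∩ {x | ℓ x₀ ≤ ℓ x}) :=
        measureRoot_mono (fun x hx ↦ ⟨hx.1, hmin hx⟩)
          (measure_ne_top_of_subset inter_subset_left hS.measure_ne_top)
    _ ≤ r x₀ := hle x₀ hx₀S
    _ ≤ ρ := hx₀ρ

theorem div_mul_measureRoot_pow_succ_le_setIntegral [BorelSpace E] (hS : IsCompact S)
    (hℓ : Continuous ℓ) (hr : Continuous r)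
    (hle : ∀ x₀ ∈ S, measureRoot μ (S ∩ {x | ℓ x₀ ≤ ℓ x}) ≤ r x₀) :
    (Module.finrank ℝ E : ℝ) / (Module.finrank ℝ E + 1) *
      measureRoot μ S ^ (Module.finrank ℝ E + 1) ≤ ∫ x in S, r x ∂μ := by
  have : IsFiniteMeasure (μ.restrict S) := ⟨by simpa using hS.measure_lt_top⟩
  refine div_mul_pow_succ_le_integral (hr.continuousOn.integrableOn_compact hS)
    (ae_restrict_of_forall_mem hS.measurableSet fun x hx ↦
      (measureRoot_nonneg μ _).trans (hle x hx))
    (measureRoot_nonneg μ S) ?_ fun ρ hρ ↦ ?_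
  · rw [measureRoot_pow, measureReal_restrict_apply_univ]
  · rw [measureReal_restrict_apply (measurableSet_le hr.measurable measurable_const), inter_comm,
      ← measureRoot_pow]
    exact pow_le_pow_left₀ (measureRoot_nonneg _ _)
      (measureRoot_inter_sublevel_le hS hℓ hr hle hρ) _

end Fiber

section Product

variable {E F : Type*} [NormedAddCommGroup E] [NormedSpace ℝ E] [FiniteDimensional ℝ E]
  [Nontrivial E] [MeasurableSpace E] [BorelSpace E] {μ : Measure E} [μ.IsAddHaarMeasure]
  [NormedAddCommGroup F] [MeasurableSpace F] [BorelSpace F] {ν : Measure F} [ν.IsAddHaarMeasure]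
  {K : Set (F × E)}

lemma integrable_measureRoot_fiber_pow (hK : IsCompact K) :
    Integrable (fun y ↦ measureRoot μ (Prod.mk y ⁻¹' K) ^ Module.finrank ℝ E) ν := by
  simpa only [measureRoot_pow] using
    Measure.integrable_measure_prodMk_left hK.measurableSet hK.measure_lt_top.ne

lemma integrable_measureRoot_fiber_pow_succ (hK : IsCompact K) :
    Integrable (fun y ↦ measureRoot μ (Prod.mk y ⁻¹' K) ^ (Module.finrank ℝ E + 1)) ν := by
  have hmeas : Measurable fun y ↦ measureRoot μ (Prod.mk y ⁻¹' K) :=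
    (measurable_measure_prodMk_left hK.measurableSet).ennreal_toReal.pow_const _
  simp only [pow_succ']
  refine (integrable_measureRoot_fiber_pow hK).bdd_mul hmeas.aestronglyMeasurable
    (c := measureRoot μ (Prod.snd '' K)) (.of_forall fun y ↦ ?_)
  rw [Real.norm_of_nonneg (measureRoot_nonneg _ _)]
  exact measureRoot_mono (fun x hx ↦ ⟨(y, x), hx, rfl⟩) (hK.image continuous_snd).measure_ne_top

variable [NormedSpace ℝ F] [FiniteDimensional ℝ F]

lemma integral_measureRoot_fiber_pow (hK : IsCompact K) :
    ∫ y, measureRoot μ (Prod.mk y ⁻¹' K) ^ Module.finrank ℝ E ∂ν = (ν.prod μ).real K := by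
  have h := setIntegral_eq_integral_setIntegral_fiber (μ := μ) (ν := ν) (r := fun _ ↦ 1)
    hK.measurableSet (continuousOn_const.integrableOn_compact hK)
  simpa [measureRoot_pow] using h.symm

theorem div_mul_integral_measureRoot_fiber_pow_succ_le (hK : Convex ℝ K) (hcomp : IsCompact K)
    (hint : (interior K).Nonempty) {ℓ : E →L[ℝ] ℝ} (hℓ : ℓ ≠ 0) {c : F × E}
    (hc : ⨍ p in K, p ∂(ν.prod μ) = c) :
    (Module.finrank ℝ E : ℝ) / (Module.finrank ℝ E + 1) *
        ∫ y, measureRoot μ (Prod.mk y ⁻¹' K) ^ (Module.finrank ℝ E + 1) ∂ν ≤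
      measureRoot μ (Prod.mk c.1 ⁻¹' K ∩ {x | ℓ c.2 ≤ ℓ x}) * (ν.prod μ).real K := by
  set w := measureRoot μ (Prod.mk c.1 ⁻¹' K ∩ {x | ℓ c.2 ≤ ℓ x})
  obtain ⟨A, hA⟩ := exists_measureRoot_fiber_inter_le (μ := μ) hK hcomp hℓ
    (hc ▸ setAverage_mem_interior hK hcomp hint)
  have hr : Continuous fun p ↦ w + A (p - c) := by fun_prop
  have hr_int : IntegrableOn (fun p ↦ w + A (p - c)) K (ν.prod μ) :=
    hr.continuousOn.integrableOn_compact hcomp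
  calc _ = ∫ y, (Module.finrank ℝ E : ℝ) / (Module.finrank ℝ E + 1) *
          measureRoot μ (Prod.mk y ⁻¹' K) ^ (Module.finrank ℝ E + 1) ∂ν :=
        (integral_const_mul _ _).symm
    _ ≤ ∫ y, ∫ x in Prod.mk y ⁻¹' K, (w + A ((y, x) - c)) ∂μ ∂ν :=
        integral_mono ((integrable_measureRoot_fiber_pow_succ hcomp).const_mul _)
          (integrable_setIntegral_fiber hcomp.measurableSet hr_int) fun y ↦
          div_mul_measureRoot_pow_succ_le_setIntegral (isCompact_fiber hcomp y) ℓ.continuous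
            (by fun_prop) fun x hx ↦ hA (y, x) hx
    _ = ∫ p in K, (w + A (p - c)) ∂(ν.prod μ) :=
        (setIntegral_eq_integral_setIntegral_fiber hcomp.measurableSet hr_int).symm
    _ = w * (ν.prod μ).real K := by rw [← hc, setIntegral_add_clm_sub_setAverage hcomp]

theorem div_mul_measureRoot_fiber_le (hK : Convex ℝ K) (hcomp : IsCompact K)
    (hint : (interior K).Nonempty) {ℓ : E →L[ℝ] ℝ} (hℓ : ℓ ≠ 0) {x₀ : E}
    (hx₀ : ⨍ p in K, p ∂(ν.prod μ) = (0, x₀)) :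
    (Module.finrank ℝ E : ℝ) / (Module.finrank ℝ F + Module.finrank ℝ E + 1) *
        measureRoot μ (Prod.mk 0 ⁻¹' K) ≤
      measureRoot μ (Prod.mk 0 ⁻¹' K ∩ {x | ℓ x₀ ≤ ℓ x}) := by
  have hmem : (0, x₀) ∈ K := hx₀ ▸ interior_subset (setAverage_mem_interior hK hcomp hint)
  have hpos : 0 < (ν.prod μ).real K := ENNReal.toReal_pos
    (Measure.measure_pos_of_nonempty_interior _ hint).ne' hcomp.measure_ne_top
  have hsupp (y : F) (hy : y ∉ Prod.fst '' K) : measureRoot μ (Prod.mk y ⁻¹' K) = 0 := by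
    rw [show Prod.mk y ⁻¹' K = ∅ from eq_empty_of_forall_notMem fun x hx ↦ hy ⟨_, hx, rfl⟩,
      measureRoot_empty]
  have hberwald := mul_integral_pow_le_integral_pow_succ (μ := ν)
    (concaveOn_measureRoot_fiber μ hK (isCompact_fiber hcomp)) ⟨_, hmem, rfl⟩
    (fun y ↦ measureRoot_nonneg μ _) hsupp Module.finrank_pos.ne'
    (integrable_measureRoot_fiber_pow hcomp) (integrable_measureRoot_fiber_pow_succ hcomp)
  have hupper := div_mul_integral_measureRoot_fiber_pow_succ_le hK hcomp hint hℓ hx₀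
  rw [integral_measureRoot_fiber_pow hcomp] at hberwald
  set k := (Module.finrank ℝ E : ℝ)
  set m := (Module.finrank ℝ F : ℝ)
  set u₀ := measureRoot μ (Prod.mk 0 ⁻¹' K)
  set Q := ∫ y, measureRoot μ (Prod.mk y ⁻¹' K) ^ (Module.finrank ℝ E + 1) ∂ν
  set w := measureRoot μ (Prod.mk 0 ⁻¹' K ∩ {x | ℓ x₀ ≤ ℓ x})
  set P := (ν.prod μ).real K
  have hk : 0 ≤ k := Nat.cast_nonneg _
  have hm : 0 ≤ m := Nat.cast_nonneg _
  refine le_of_mul_le_mul_right ?_ hpos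
  calc k / (m + k + 1) * u₀ * P
      = k / (k + 1) * ((k + 1) * u₀ * P) / (m + k + 1) := by field_simp
    _ ≤ k / (k + 1) * ((m + k + 1) * Q) / (m + k + 1) := by gcongr
    _ = k / (k + 1) * Q := by field_simp
    _ ≤ w * P := hupper

end Product

section Submodule

variable {V : Type*} [NormedAddCommGroup V] [NormedSpace ℝ V] [FiniteDimensional ℝ V]
  {E : Submodule ℝ V} {K : Set V}

lemma isCompact_submodule_preimage (hK : IsCompact K) : IsCompact ((↑) ⁻¹' K : Set E) :=
  E.closed_of_finiteDimensional.isClosedEmbedding_subtypeVal.isCompact_preimage hK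

theorem div_mul_measureRoot_submodule_le [Nontrivial E] [MeasurableSpace V] [BorelSpace V]
    {μ : Measure V} [μ.IsAddHaarMeasure] {ν : Measure E} [ν.IsAddHaarMeasure] (hK : Convex ℝ K)
    (hcomp : IsCompact K) (hint : (interior K).Nonempty) {c : E} (hc : ⨍ x in K, x ∂μ = c)
    {ℓ : E →L[ℝ] ℝ} (hℓ : ℓ ≠ 0) :
    (Module.finrank ℝ E : ℝ) / (Module.finrank ℝ V + 1) * measureRoot ν ((↑) ⁻¹' K) ≤
      measureRoot ν ((↑) ⁻¹' K ∩ {x | ℓ c ≤ ℓ x}) := by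
  obtain ⟨F, hF⟩ := E.exists_isCompl
  let T : (F × E) ≃L[ℝ] V := (F.prodEquivOfIsCompl E hF.symm).toContinuousLinearEquiv
  have hT (y : F) (x : E) : T (y, x) = y + x := rfl
  have hfiber : Prod.mk 0 ⁻¹' (T ⁻¹' K) = ((↑) ⁻¹' K : Set E) := by
    ext x
    simp [hT]
  have hcentroid : ⨍ p in T ⁻¹' K, p ∂((Measure.addHaar : Measure F).prod ν) = (0, c) :=
    T.injective (by rw [map_setAverage_preimage (ν := μ) T hcomp, hc, hT]; simp)
  have hdim : (Module.finrank ℝ V : ℝ) = Module.finrank ℝ F + Module.finrank ℝ E := by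
    exact_mod_cast (Submodule.finrank_add_eq_of_isCompl hF.symm).symm
  have hint' : (interior (T ⁻¹' K)).Nonempty :=
    T.toHomeomorph.preimage_interior K ▸ hint.preimage T.toHomeomorph.surjective
  have h := div_mul_measureRoot_fiber_le (K := T ⁻¹' K) (hK.linear_preimage T.toLinearMap)
    (T.toHomeomorph.isCompact_preimage.2 hcomp) hint' hℓ hcentroid
  rwa [hfiber, ← hdim] at h

end Submodule

lemma hausdorffMeasure_inter_submodule {V : Type*} [NormedAddCommGroup V] [NormedSpace ℝ V]
    [MeasurableSpace V] [BorelSpace V] (E : Submodule ℝ V) {d : ℝ} (hd : 0 ≤ d) (S : Set V) :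
    μH[d] (S ∩ E) = μH[d] ((↑) ⁻¹' S : Set E) := by
  rw [isometry_subtype_coe.hausdorffMeasure_preimage (.inl hd), Subtype.range_coe_subtype]
  rfl

end Grunbaum

theorem grunbaum_sections_general {V : Type*} [NormedAddCommGroup V] [NormedSpace ℝ V]
    [FiniteDimensional ℝ V] [MeasurableSpace V] [BorelSpace V] {μ : Measure V}
    [μ.IsAddHaarMeasure] {E : Submodule ℝ V} (ν : Measure E) [ν.IsAddHaarMeasure] {K : Set V}
    (hK : Convex ℝ K) (hcomp : IsCompact K) (hint : (interior K).Nonempty) {c : E}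
    (hc : ⨍ x in K, x ∂μ = c) (ℓ : E →L[ℝ] ℝ) :
    ENNReal.ofReal (((Module.finrank ℝ E : ℝ) / (Module.finrank ℝ V + 1)) ^ Module.finrank ℝ E) *
        ν ((↑) ⁻¹' K) ≤ ν ((↑) ⁻¹' K ∩ {x | ℓ c ≤ ℓ x}) := by
  have hfin : ν ((↑) ⁻¹' K) ≠ ⊤ := (Grunbaum.isCompact_submodule_preimage hcomp).measure_ne_top
  rcases eq_or_ne ℓ 0 with rfl | hℓ
  · have hratio : (Module.finrank ℝ E : ℝ) / (Module.finrank ℝ V + 1) ≤ 1 := by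
      rw [div_le_one (by positivity)]
      exact_mod_cast E.finrank_le.trans (Nat.le_succ _)
    simpa using mul_le_of_le_one_left'
      (ENNReal.ofReal_le_one.2 (pow_le_one₀ (by positivity) hratio))
  · have : Nontrivial E :=
      not_subsingleton_iff_nontrivial.1 fun _ ↦ hℓ (Subsingleton.elim ℓ 0)
    exact Grunbaum.ofReal_pow_mul_measure_le (by positivity) hfin
      (measure_ne_top_of_subset inter_subset_left hfin)
      (Grunbaum.div_mul_measureRoot_submodule_le hK hcomp hint hc hℓ)

/-- **Grünbaum's inequality for sections.** If `K ⊆ ℝⁿ` is a convex body whose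
centroid lies in `E ∩ θ^⊥` (e.g. at the origin), where `E` is a `k`-dimensional
subspace and `θ ∈ E` is a unit vector, then
`vol_k(K ∩ E ∩ θ⁺) ≥ (k/(n+1))^k vol_k(K ∩ E)`. -/
theorem grunbaum_sections
    (n k : ℕ) (hk : 1 ≤ k) (hkn : k ≤ n)
    (E : Submodule ℝ (EuclideanSpace ℝ (Fin n))) (hE : Module.finrank ℝ E = k)
    (θ : EuclideanSpace ℝ (Fin n)) (hθE : θ ∈ E) (hθ : ‖θ‖ = 1)
    (K : Set (EuclideanSpace ℝ (Fin n)))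
    (hK_conv : Convex ℝ K) (hK_comp : IsCompact K) (hK_int : (interior K).Nonempty)
    -- the centroid of `K` lies in `E ∩ θ^⊥`
    (hK_cent_mem : (volume K).toReal⁻¹ • (∫ x in K, x) ∈ E)
    (hK_cent_perp : ⟪(volume K).toReal⁻¹ • (∫ x in K, x), θ⟫ = 0) :
    ENNReal.ofReal (((k : ℝ) / (n + 1)) ^ k) *
        μH[(k : ℝ)] (K ∩ (E : Set (EuclideanSpace ℝ (Fin n)))) ≤
      μH[(k : ℝ)] (K ∩ (E : Set (EuclideanSpace ℝ (Fin n))) ∩ {x | 0 ≤ ⟪x, θ⟫}) := by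
  subst hE
  have h := grunbaum_sections_general (μ := volume) μH[(Module.finrank ℝ E : ℝ)] hK_conv hK_comp
    hK_int (c := ⟨_, hK_cent_mem⟩) (setAverage_eq _ _ K) ((innerSL ℝ θ).comp E.subtypeL)
  rw [inter_right_comm, Grunbaum.hausdorffMeasure_inter_submodule E (by positivity),
    Grunbaum.hausdorffMeasure_inter_submodule E (by positivity)]
  simpa only [ContinuousLinearMap.comp_apply, Submodule.subtypeL_apply, innerSL_apply_apply,
    real_inner_comm _ θ, hK_cent_perp, finrank_euclideanSpace_fin, preimage_inter,
    preimage_ofPred_eq] using h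
end

section
/- (Grünbaum's inequality.) Let K be a convex body in ℝ^n whose centroid is at the origin, and let θ ∈ S^{n-1}. Then vol_n(K ∩ θ^+) ≥ (n/(n+1))^n · vol_n(K). -/
open MeasureTheory Set
open scoped RealInnerProductSpace

/-!
Let `d` be the dimension, `V` the volume of `K` and `f` the linear functional defining the half
space. By the Brunn–Minkowski inequality, obtained here from that of Prékopa and Leindler,
`r t = vol (K ∩ {t ≤ f}) ^ (1 / d)` is concave on `f '' K`, so by Jensen's inequality `r` at the
centroid is at least the average of `r ∘ f` over `K`. Since `{x ∈ K | r (f x) < u}` has volume at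
most `u ^ d` for every `u`, the layer cake formula bounds this average below by
`d / (d + 1) * V ^ (1 / d)`. Raising to the power `d` gives the claim.
-/

open Module (finrank)
open scoped ENNReal Pointwise

section OrderedAddGroup

variable {G : Type*} [AddCommGroup G] [LinearOrder G] [IsOrderedAddMonoid G]
  [TopologicalSpace G] [OrderTopology G] [MeasurableSpace G] [BorelSpace G]
  {μ : Measure G} [μ.IsAddLeftInvariant] [NullSingletonClass μ]

lemma measure_add_measure_le_measure_add_of_isCompact {A B : Set G}
    (hA : IsCompact A) (hB : IsCompact B) (hA₀ : A.Nonempty) (hB₀ : B.Nonempty) :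
    μ A + μ B ≤ μ (A + B) := by
  obtain ⟨a, ha, hmax⟩ := hA.exists_isGreatest hA₀
  obtain ⟨b, hb, hmin⟩ := hB.exists_isLeast hB₀
  have hinter : (b +ᵥ A) ∩ (a +ᵥ B) ⊆ {a + b} := by
    rintro _ ⟨⟨x, hx, rfl⟩, ⟨y, hy, hxy⟩⟩
    have hle : b + x ≤ a + b := by grw [hmax hx, add_comm]
    have hge : a + b ≤ a + y := by grw [hmin hy]
    exact hle.antisymm (hge.trans_eq hxy)
  calc μ A + μ B
    _ = μ (b +ᵥ A) + μ (a +ᵥ B) := by simp only [measure_vadd]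
    _ = μ ((b +ᵥ A) ∪ (a +ᵥ B)) :=
      (measure_union₀ (hB.vadd a).measurableSet.nullMeasurableSet
        (measure_mono_null hinter (measure_singleton _))).symm
    _ ≤ μ (A + B) := by
      gcongr
      exact union_subset (add_comm B A ▸ vadd_set_subset_add hb) (vadd_set_subset_add ha)

lemma measure_add_measure_le_measure_add [μ.InnerRegular] {A B : Set G}
    (hA : MeasurableSet A) (hB : MeasurableSet B) (hA₀ : A.Nonempty) (hB₀ : B.Nonempty) :
    μ A + μ B ≤ μ (A + B) := by
  obtain ⟨a, ha⟩ := hA₀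
  obtain ⟨b, hb⟩ := hB₀
  rw [hA.measure_eq_iSup_isCompact, hB.measure_eq_iSup_isCompact]
  simp_rw [iSup_and']
  refine ENNReal.biSup_add_biSup_le' ⟨∅, by simp⟩ ⟨∅, by simp⟩ ?_
  rintro K ⟨hKA, hK⟩ L ⟨hLB, hL⟩
  calc μ K + μ L
    _ ≤ μ (insert a K) + μ (insert b L) := by gcongr <;> exact subset_insert _ _
    _ ≤ μ (insert a K + insert b L) :=
      measure_add_measure_le_measure_add_of_isCompact (hK.insert a) (hL.insert b)
        (insert_nonempty a K) (insert_nonempty b L)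
    _ ≤ μ (A + B) := by
      gcongr
      exacts [insert_subset ha hKA, insert_subset hb hLB]

end OrderedAddGroup

section LayerCake

variable {α : Type*} [MeasurableSpace α] {μ : Measure α} {f : α → ℝ≥0∞}

lemma volume_Ioi_inter_setOf_ofReal_lt (a : ℝ≥0∞) :
    volume (Ioi 0 ∩ {t : ℝ | ENNReal.ofReal t < a}) = a := by
  rcases eq_or_ne a ∞ with rfl | ha
  · simp
  have hIoo : Ioi 0 ∩ {t : ℝ | ENNReal.ofReal t < a} = Ioo 0 a.toReal := by
    ext t
    simp only [mem_inter_iff, mem_Ioi, mem_ofPred_eq, mem_Ioo]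
    exact and_congr_right fun ht ↦ ENNReal.ofReal_lt_iff_lt_toReal ht.le ha
  rw [hIoo, Real.volume_Ioo, sub_zero, ENNReal.ofReal_toReal ha]

lemma lintegral_eq_lintegral_measure_ofReal_lt [SFinite μ] (hf : Measurable f) :
    ∫⁻ x, f x ∂μ = ∫⁻ t in Ioi (0 : ℝ), μ {x | ENNReal.ofReal t < f x} := by
  have hS : MeasurableSet {p : α × ℝ | ENNReal.ofReal p.2 < f p.1} :=
    measurableSet_lt (by fun_prop) (by fun_prop)
  have hcomm := Measure.prod_apply hS (μ := μ) (ν := volume.restrict (Ioi (0 : ℝ)))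
  rw [Measure.prod_apply_symm hS] at hcomm
  refine Eq.trans (lintegral_congr fun x ↦ ?_) hcomm.symm
  rw [Measure.restrict_apply (hS.preimage measurable_prodMk_left), inter_comm]
  exact (volume_Ioi_inter_setOf_ofReal_lt (f x)).symm

lemma lintegral_eq_iSup_lintegral_min_natCast (hf : Measurable f) :
    ∫⁻ x, f x ∂μ = ⨆ k : ℕ, ∫⁻ x, min (f x) k ∂μ := by
  rw [← lintegral_iSup (fun k ↦ hf.min measurable_const)
    fun i j hij x ↦ min_le_min_left _ (Nat.cast_le.2 hij)]
  refine lintegral_congr fun x ↦ ?_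
  rw [← inf_iSup_eq, ENNReal.iSup_natCast, inf_top_eq]

end LayerCake

lemma geom_mean_le_arith_mean2_weighted_ennreal {s t : ℝ} (hs : 0 < s) (ht : 0 < t)
    (hst : s + t = 1) (x y : ℝ≥0∞) :
    x ^ s * y ^ t ≤ ENNReal.ofReal s * x + ENNReal.ofReal t * y := by
  have hyoung := ENNReal.young_inequality (x ^ s) (y ^ t) (Real.HolderConjugate.inv_inv hs ht hst)
  simpa only [← ENNReal.rpow_mul, mul_inv_cancel₀ hs.ne', mul_inv_cancel₀ ht.ne',
    ENNReal.rpow_one, ENNReal.ofReal_inv_of_pos hs, ENNReal.ofReal_inv_of_pos ht,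
    ENNReal.div_eq_inv_mul, inv_inv] using hyoung

/-- The measure `μ` satisfies the Prékopa–Leindler inequality: if `f ^ s * g ^ t ≤ h` along the
convex combination `s • x + t • y`, then `(∫ f) ^ s * (∫ g) ^ t ≤ ∫ h`. Stating it as a property of
the measure lets it pass to products and linear images. -/
def SatisfiesPrekopaLeindler {E : Type*} [AddCommGroup E] [Module ℝ E] [MeasurableSpace E]
    (μ : Measure E) : Prop :=
  ∀ ⦃s t : ℝ⦄, 0 < s → 0 < t → s + t = 1 →
    ∀ ⦃f g h : E → ℝ≥0∞⦄, Measurable f → Measurable g → Measurable h →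
      (∀ x y, f x ^ s * g y ^ t ≤ h (s • x + t • y)) →
        (∫⁻ x, f x ∂μ) ^ s * (∫⁻ x, g x ∂μ) ^ t ≤ ∫⁻ x, h x ∂μ

lemma smul_setOf_lt_add_smul_setOf_lt_subset {E : Type*} [Add E] [SMul ℝ E] {s t : ℝ}
    {f g h : E → ℝ≥0∞} (hs : 0 < s) (ht : 0 < t) (hst : s + t = 1)
    (H : ∀ x y, f x ^ s * g y ^ t ≤ h (s • x + t • y)) (c : ℝ≥0∞) :
    s • {x | c < f x} + t • {x | c < g x} ⊆ {x | c < h x} := by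
  rintro _ ⟨_, ⟨x, hx, rfl⟩, _, ⟨y, hy, rfl⟩, rfl⟩
  calc c = c ^ s * c ^ t := by
        rw [← ENNReal.rpow_add_of_nonneg _ _ hs.le ht.le, hst, ENNReal.rpow_one]
    _ < f x ^ s * g y ^ t :=
      ENNReal.mul_lt_mul (ENNReal.rpow_lt_rpow hx hs) (ENNReal.rpow_lt_rpow hy ht)
    _ ≤ h (s • x + t • y) := H x y

section Real

variable {s t : ℝ} {f g h : ℝ → ℝ≥0∞}

-- With both suprema equal to `1`, the superlevel sets of `f` and `g` are nonempty for exactly the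
-- same levels, so the one-dimensional Brunn–Minkowski inequality applies level by level.
lemma ofReal_mul_lintegral_add_le_lintegral_of_iSup_eq_one (hs : 0 < s) (ht : 0 < t)
    (hst : s + t = 1) (hf : Measurable f) (hg : Measurable g) (hh : Measurable h)
    (hf₁ : ⨆ x, f x = 1) (hg₁ : ⨆ x, g x = 1)
    (H : ∀ x y, f x ^ s * g y ^ t ≤ h (s • x + t • y)) :
    ENNReal.ofReal s * (∫⁻ x, f x) + ENNReal.ofReal t * (∫⁻ x, g x) ≤ ∫⁻ x, h x := by
  have hlevel (c : ℝ≥0∞) : ENNReal.ofReal s * volume {x | c < f x} +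
      ENNReal.ofReal t * volume {x | c < g x} ≤ volume {x | c < h x} := by
    rcases lt_or_ge c 1 with hc | hc
    · have hf₀ : {x | c < f x}.Nonempty := lt_iSup_iff.1 (hc.trans_eq hf₁.symm)
      have hg₀ : {x | c < g x}.Nonempty := lt_iSup_iff.1 (hc.trans_eq hg₁.symm)
      calc ENNReal.ofReal s * volume {x | c < f x} + ENNReal.ofReal t * volume {x | c < g x}
        _ = volume (s • {x | c < f x}) + volume (t • {x | c < g x}) := by
          rw [Measure.addHaar_smul_of_nonneg _ hs.le, Measure.addHaar_smul_of_nonneg _ ht.le,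
            Module.finrank_self, pow_one, pow_one]
        _ ≤ volume (s • {x | c < f x} + t • {x | c < g x}) :=
          measure_add_measure_le_measure_add
            ((measurableSet_lt measurable_const hf).const_smul₀ s)
            ((measurableSet_lt measurable_const hg).const_smul₀ t) hf₀.smul_set hg₀.smul_set
        _ ≤ volume {x | c < h x} :=
          measure_mono (smul_setOf_lt_add_smul_setOf_lt_subset hs ht hst H c)
    · have hfc : {x | c < f x} = ∅ :=
        eq_empty_of_forall_notMem fun x ↦ ((le_iSup f x).trans (hf₁.trans_le hc)).not_gt
      have hgc : {x | c < g x} = ∅ :=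
        eq_empty_of_forall_notMem fun x ↦ ((le_iSup g x).trans (hg₁.trans_le hc)).not_gt
      simp [hfc, hgc]
  rw [lintegral_eq_lintegral_measure_ofReal_lt hf, lintegral_eq_lintegral_measure_ofReal_lt hg,
    lintegral_eq_lintegral_measure_ofReal_lt hh, ← lintegral_const_mul' _ _ ENNReal.ofReal_ne_top,
    ← lintegral_const_mul' _ _ ENNReal.ofReal_ne_top]
  exact (le_lintegral_add _ _).trans (lintegral_mono fun r ↦ hlevel _)

lemma lintegral_rpow_mul_lintegral_rpow_le_of_iSup_ne_top (hs : 0 < s) (ht : 0 < t)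
    (hst : s + t = 1) (hf : Measurable f) (hg : Measurable g) (hh : Measurable h)
    (hf₁ : ⨆ x, f x ≠ ∞) (hg₁ : ⨆ x, g x ≠ ∞)
    (H : ∀ x y, f x ^ s * g y ^ t ≤ h (s • x + t • y)) :
    (∫⁻ x, f x) ^ s * (∫⁻ x, g x) ^ t ≤ ∫⁻ x, h x := by
  set M := ⨆ x, f x
  set N := ⨆ x, g x
  rcases eq_or_ne M 0 with hM₀ | hM₀
  · have hf₀ : ∀ x, f x = 0 := ENNReal.iSup_eq_zero.1 hM₀
    simp [hf₀, hs]
  rcases eq_or_ne N 0 with hN₀ | hN₀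
  · have hg₀ : ∀ x, g x = 0 := ENNReal.iSup_eq_zero.1 hN₀
    simp [hg₀, ht]
  have hrpow (a b : ℝ≥0∞) : (M⁻¹ * a) ^ s * (N⁻¹ * b) ^ t =
      (M⁻¹ ^ s * N⁻¹ ^ t) * (a ^ s * b ^ t) := by
    rw [ENNReal.mul_rpow_of_nonneg _ _ hs.le, ENNReal.mul_rpow_of_nonneg _ _ ht.le,
      mul_mul_mul_comm]
  have hscaled : (M⁻¹ ^ s * N⁻¹ ^ t) * ((∫⁻ x, f x) ^ s * (∫⁻ x, g x) ^ t) ≤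
      (M⁻¹ ^ s * N⁻¹ ^ t) * ∫⁻ x, h x := by
    rw [← hrpow, ← lintegral_const_mul _ hf, ← lintegral_const_mul _ hg, ← lintegral_const_mul _ hh]
    refine (geom_mean_le_arith_mean2_weighted_ennreal hs ht hst _ _).trans <|
      ofReal_mul_lintegral_add_le_lintegral_of_iSup_eq_one hs ht hst (hf.const_mul _)
        (hg.const_mul _) (hh.const_mul _) ?_ ?_ fun x y ↦ ?_
    · rw [← ENNReal.mul_iSup, ENNReal.inv_mul_cancel hM₀ hf₁]
    · rw [← ENNReal.mul_iSup, ENNReal.inv_mul_cancel hN₀ hg₁]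
    · rw [hrpow]
      gcongr
      exact H x y
  refine (ENNReal.mul_le_mul_iff_right ?_ ?_).1 hscaled
  · simp [ENNReal.rpow_eq_zero_iff, hf₁, hg₁, hM₀, hN₀, hs.not_gt, ht.not_gt]
  · exact ENNReal.mul_ne_top (ENNReal.rpow_ne_top_of_nonneg hs.le (ENNReal.inv_ne_top.2 hM₀))
      (ENNReal.rpow_ne_top_of_nonneg ht.le (ENNReal.inv_ne_top.2 hN₀))

lemma satisfiesPrekopaLeindler_volume_real : SatisfiesPrekopaLeindler (volume : Measure ℝ) := by
  intro s t hs ht hst f g h hf hg hh H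
  have hrpow {r : ℝ} (hr : 0 < r) {k : ℝ → ℝ≥0∞} (hk : Measurable k) :
      (∫⁻ x, k x) ^ r = ⨆ i : ℕ, (∫⁻ x, min (k x) i) ^ r := by
    rw [lintegral_eq_iSup_lintegral_min_natCast hk]
    exact (ENNReal.orderIsoRpow r hr).map_iSup _
  have hbdd (k : ℝ → ℝ≥0∞) (i : ℕ) : ⨆ x, min (k x) i ≠ ∞ :=
    ne_top_of_le_ne_top (ENNReal.natCast_ne_top i) (iSup_le fun x ↦ min_le_right _ _)
  rw [hrpow hs hf, hrpow ht hg]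
  simp_rw [ENNReal.iSup_mul, ENNReal.mul_iSup]
  refine iSup₂_le fun i j ↦ lintegral_rpow_mul_lintegral_rpow_le_of_iSup_ne_top hs ht hst
    (hf.min measurable_const) (hg.min measurable_const) hh (hbdd f i) (hbdd g j) fun x y ↦ ?_
  refine le_trans ?_ (H x y)
  gcongr <;> exact min_le_left _ _

end Real

namespace SatisfiesPrekopaLeindler

section Module

variable {E F : Type*} [AddCommGroup E] [Module ℝ E] [MeasurableSpace E]
  [AddCommGroup F] [Module ℝ F] [MeasurableSpace F] {μ : Measure E} {ν : Measure F}

lemma dirac (a : E) : SatisfiesPrekopaLeindler (Measure.dirac a) := by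
  intro s t _ _ hst f g h hf hg hh H
  rw [lintegral_dirac' a hf, lintegral_dirac' a hg, lintegral_dirac' a hh]
  simpa only [Convex.combo_self hst] using H a a

lemma smul (hμ : SatisfiesPrekopaLeindler μ) (c : ℝ≥0∞) : SatisfiesPrekopaLeindler (c • μ) := by
  intro s t hs ht hst f g h hf hg hh H
  simp only [lintegral_smul_measure, smul_eq_mul]
  rw [ENNReal.mul_rpow_of_nonneg _ _ hs.le, ENNReal.mul_rpow_of_nonneg _ _ ht.le,
    mul_mul_mul_comm, ← ENNReal.rpow_add_of_nonneg _ _ hs.le ht.le, hst, ENNReal.rpow_one]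
  gcongr
  exact hμ hs ht hst hf hg hh H

lemma map (hμ : SatisfiesPrekopaLeindler μ) (L : E →ₗ[ℝ] F) (hL : Measurable L) :
    SatisfiesPrekopaLeindler (μ.map L) := by
  intro s t hs ht hst f g h hf hg hh H
  rw [lintegral_map hf hL, lintegral_map hg hL, lintegral_map hh hL]
  refine hμ hs ht hst (hf.comp hL) (hg.comp hL) (hh.comp hL) fun x y ↦ ?_
  simpa only [map_add, map_smul] using H (L x) (L y)

lemma prod [SFinite ν] (hμ : SatisfiesPrekopaLeindler μ) (hν : SatisfiesPrekopaLeindler ν) :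
    SatisfiesPrekopaLeindler (μ.prod ν) := by
  intro s t hs ht hst f g h hf hg hh H
  rw [lintegral_prod _ hf.aemeasurable, lintegral_prod _ hg.aemeasurable,
    lintegral_prod _ hh.aemeasurable]
  refine hμ hs ht hst hf.lintegral_prod_right' hg.lintegral_prod_right' hh.lintegral_prod_right'
    fun x y ↦ ?_
  exact hν hs ht hst (hf.comp measurable_prodMk_left) (hg.comp measurable_prodMk_left)
    (hh.comp measurable_prodMk_left) fun u v ↦ H (x, u) (y, v)

lemma measure_rpow_mul_measure_rpow_le (hμ : SatisfiesPrekopaLeindler μ) {s t : ℝ} (hs : 0 < s)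
    (ht : 0 < t) (hst : s + t = 1) {A B : Set E} (hA : MeasurableSet A) (hB : MeasurableSet B) :
    μ A ^ s * μ B ^ t ≤ μ (s • A + t • B) := by
  set C := toMeasurable μ (s • A + t • B)
  have hC : MeasurableSet C := measurableSet_toMeasurable _ _
  rw [← measure_toMeasurable (s • A + t • B), ← lintegral_indicator_one hA,
    ← lintegral_indicator_one hB, ← lintegral_indicator_one hC]
  refine hμ hs ht hst (measurable_one.indicator hA) (measurable_one.indicator hB)
    (measurable_one.indicator hC) fun x y ↦ ?_
  by_cases hx : x ∈ A
  · by_cases hy : y ∈ B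
    · have hxy : s • x + t • y ∈ C := subset_toMeasurable _ _
        (add_mem_add (smul_mem_smul_set hx) (smul_mem_smul_set hy))
      simp [hx, hy, hxy]
    · simp [hy, ht]
  · simp [hx, hs]

end Module

section Haar

variable {E F : Type*} [NormedAddCommGroup E] [NormedSpace ℝ E] [MeasurableSpace E] [BorelSpace E]
  [FiniteDimensional ℝ E] [NormedAddCommGroup F] [NormedSpace ℝ F] [MeasurableSpace F]
  [BorelSpace F]

lemma of_continuousLinearEquiv {μ : Measure E} [μ.IsAddHaarMeasure]
    (hμ : SatisfiesPrekopaLeindler μ) (e : E ≃L[ℝ] F) (ν : Measure F) [ν.IsAddHaarMeasure] :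
    SatisfiesPrekopaLeindler ν := by
  have : FiniteDimensional ℝ F := e.toLinearEquiv.finiteDimensional
  rw [Measure.isAddLeftInvariant_eq_smul ν (μ.map e)]
  exact (hμ.map e.toLinearMap e.continuous.measurable).smul _

lemma volume_pi_fin (n : ℕ) : SatisfiesPrekopaLeindler (volume : Measure (Fin n → ℝ)) := by
  induction n with
  | zero =>
    rw [volume_pi, Measure.pi_of_empty]
    exact dirac _
  | succ n ih =>
    exact (satisfiesPrekopaLeindler_volume_real.prod ih).of_continuousLinearEquiv
      (Fin.consEquivL ℝ fun _ ↦ ℝ) volume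

lemma addHaar (μ : Measure E) [μ.IsAddHaarMeasure] : SatisfiesPrekopaLeindler μ :=
  (volume_pi_fin (finrank ℝ E)).of_continuousLinearEquiv
    (ContinuousLinearEquiv.ofFinrankEq (by simp)) μ

end Haar

end SatisfiesPrekopaLeindler

section BrunnMinkowski

variable {E : Type*} [NormedAddCommGroup E] [NormedSpace ℝ E] [MeasurableSpace E] [BorelSpace E]
  [FiniteDimensional ℝ E] [Nontrivial E] (μ : Measure E) [μ.IsAddHaarMeasure] {A B K : Set E}

lemma addHaar_smul_rpow_inv_finrank {r : ℝ} (hr : 0 ≤ r) (A : Set E) :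
    μ (r • A) ^ (finrank ℝ E : ℝ)⁻¹ = ENNReal.ofReal r * μ A ^ (finrank ℝ E : ℝ)⁻¹ := by
  rw [Measure.addHaar_smul_of_nonneg μ hr, ENNReal.mul_rpow_of_nonneg _ _ (by positivity),
    ENNReal.ofReal_rpow_of_nonneg (by positivity) (by positivity),
    Real.pow_rpow_inv_natCast hr Module.finrank_pos.ne']

lemma addHaar_rpow_add_addHaar_rpow_le_of_ne_zero_of_ne_top (hA : MeasurableSet A)
    (hB : MeasurableSet B) (hA₀ : μ A ≠ 0) (hB₀ : μ B ≠ 0) (hA₁ : μ A ≠ ∞) (hB₁ : μ B ≠ ∞) :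
    μ A ^ (finrank ℝ E : ℝ)⁻¹ + μ B ^ (finrank ℝ E : ℝ)⁻¹ ≤
      μ (A + B) ^ (finrank ℝ E : ℝ)⁻¹ := by
  have hd : 0 < (finrank ℝ E : ℝ)⁻¹ := inv_pos.2 (Nat.cast_pos.2 Module.finrank_pos)
  have hradius {C : Set E} (hC₀ : μ C ≠ 0) (hC₁ : μ C ≠ ∞) :
      ∃ r : ℝ, 0 < r ∧ μ C ^ (finrank ℝ E : ℝ)⁻¹ = ENNReal.ofReal r ∧ μ (r⁻¹ • C) = 1 := by
    have hpos : μ C ^ (finrank ℝ E : ℝ)⁻¹ ≠ 0 := by simp [hC₀]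
    have hfin : μ C ^ (finrank ℝ E : ℝ)⁻¹ ≠ ∞ := ENNReal.rpow_ne_top_of_nonneg hd.le hC₁
    have hr := ENNReal.toReal_pos hpos hfin
    refine ⟨_, hr, (ENNReal.ofReal_toReal hfin).symm, ENNReal.rpow_left_injective hd.ne' ?_⟩
    beta_reduce
    rw [addHaar_smul_rpow_inv_finrank μ (inv_nonneg.2 hr.le), ENNReal.ofReal_inv_of_pos hr,
      ENNReal.ofReal_toReal hfin, ENNReal.inv_mul_cancel hpos hfin, ENNReal.one_rpow]
  obtain ⟨p, hp, hAp, hA'⟩ := hradius hA₀ hA₁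
  obtain ⟨q, hq, hBq, hB'⟩ := hradius hB₀ hB₁
  have hset : (p / (p + q)) • p⁻¹ • A + (q / (p + q)) • q⁻¹ • B = (p + q)⁻¹ • (A + B) := by
    rw [smul_smul, smul_smul, smul_add]
    congr 2 <;> field_simp
  have hone : 1 ≤ μ ((p + q)⁻¹ • (A + B)) := by
    have := (SatisfiesPrekopaLeindler.addHaar μ).measure_rpow_mul_measure_rpow_le
      (s := p / (p + q)) (t := q / (p + q)) (by positivity) (by positivity) (by field_simp)
      (hA.const_smul₀ p⁻¹) (hB.const_smul₀ q⁻¹)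
    rwa [hA', hB', hset, ENNReal.one_rpow, ENNReal.one_rpow, one_mul] at this
  have hone' := ENNReal.one_le_rpow hone hd
  rw [addHaar_smul_rpow_inv_finrank μ (by positivity), ENNReal.ofReal_inv_of_pos (by positivity),
    ← ENNReal.div_eq_inv_mul,
    ENNReal.le_div_iff_mul_le (.inl <| (ENNReal.ofReal_pos.2 <| by positivity).ne')
      (.inl ENNReal.ofReal_ne_top),
    one_mul] at hone'
  rwa [hAp, hBq, ← ENNReal.ofReal_add hp.le hq.le]

theorem brunn_minkowski (hA : MeasurableSet A) (hB : MeasurableSet B) (hA₀ : A.Nonempty)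
    (hB₀ : B.Nonempty) :
    μ A ^ (finrank ℝ E : ℝ)⁻¹ + μ B ^ (finrank ℝ E : ℝ)⁻¹ ≤
      μ (A + B) ^ (finrank ℝ E : ℝ)⁻¹ := by
  have hd : 0 < (finrank ℝ E : ℝ)⁻¹ := inv_pos.2 (Nat.cast_pos.2 Module.finrank_pos)
  obtain ⟨a, ha⟩ := hA₀
  obtain ⟨b, hb⟩ := hB₀
  have hAle : μ A ≤ μ (A + B) := by
    rw [← measure_vadd μ b A, add_comm A B]
    exact measure_mono (vadd_set_subset_add hb)
  have hBle : μ B ≤ μ (A + B) := by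
    rw [← measure_vadd μ a B]
    exact measure_mono (vadd_set_subset_add ha)
  rcases eq_or_ne (μ A) 0 with hA₀ | hA₀
  · rw [hA₀, ENNReal.zero_rpow_of_pos hd, zero_add]
    gcongr
  rcases eq_or_ne (μ B) 0 with hB₀ | hB₀
  · rw [hB₀, ENNReal.zero_rpow_of_pos hd, add_zero]
    gcongr
  rcases eq_or_ne (μ (A + B)) ∞ with hAB | hAB
  · rw [hAB, ENNReal.top_rpow_of_pos hd]
    exact le_top
  exact addHaar_rpow_add_addHaar_rpow_le_of_ne_zero_of_ne_top μ hA hB hA₀ hB₀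
    (ne_top_of_le_ne_top hAB hAle) (ne_top_of_le_ne_top hAB hBle)

lemma concaveOn_addHaar_inter_preimage_Ici_rpow (hK : Convex ℝ K) (hKm : MeasurableSet K)
    (hfin : μ K ≠ ∞) (f : E →L[ℝ] ℝ) :
    ConcaveOn ℝ (f '' K) fun t ↦ μ.real (K ∩ f ⁻¹' Ici t) ^ (finrank ℝ E : ℝ)⁻¹ := by
  refine ⟨hK.is_linear_image f.toLinearMap.isLinear, ?_⟩
  rintro _ ⟨x, hx, rfl⟩ _ ⟨y, hy, rfl⟩ a b ha hb hab
  set C : ℝ → Set E := fun t ↦ K ∩ f ⁻¹' Ici t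
  have hCm (t : ℝ) : MeasurableSet (C t) := hKm.inter (f.measurable measurableSet_Ici)
  have hCfin (t : ℝ) : μ (C t) ^ (finrank ℝ E : ℝ)⁻¹ ≠ ∞ :=
    ENNReal.rpow_ne_top_of_nonneg (by positivity) (measure_ne_top_of_subset inter_subset_left hfin)
  have hsub : a • C (f x) + b • C (f y) ⊆ C (a • f x + b • f y) := by
    rintro _ ⟨_, ⟨u, hu, rfl⟩, _, ⟨v, hv, rfl⟩, rfl⟩
    refine ⟨hK hu.1 hv.1 ha hb hab, ?_⟩
    simp only [mem_preimage, map_add, map_smul, mem_Ici]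
    gcongr
    exacts [hu.2, hv.2]
  have hsum : ENNReal.ofReal a * μ (C (f x)) ^ (finrank ℝ E : ℝ)⁻¹ +
      ENNReal.ofReal b * μ (C (f y)) ^ (finrank ℝ E : ℝ)⁻¹ ≤
        μ (C (a • f x + b • f y)) ^ (finrank ℝ E : ℝ)⁻¹ := by
    rw [← addHaar_smul_rpow_inv_finrank μ ha, ← addHaar_smul_rpow_inv_finrank μ hb]
    refine (brunn_minkowski μ ((hCm _).const_smul₀ a) ((hCm _).const_smul₀ b)
      (.smul_set ⟨x, hx, le_refl (f x)⟩) (.smul_set ⟨y, hy, le_refl (f y)⟩)).trans ?_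
    gcongr
  have hreal := ENNReal.toReal_mono (hCfin _) hsum
  rwa [ENNReal.toReal_add (ENNReal.mul_ne_top ENNReal.ofReal_ne_top (hCfin _))
    (ENNReal.mul_ne_top ENNReal.ofReal_ne_top (hCfin _)), ENNReal.toReal_mul, ENNReal.toReal_mul,
    ENNReal.toReal_ofReal ha, ENNReal.toReal_ofReal hb, ← ENNReal.toReal_rpow,
    ← ENNReal.toReal_rpow, ← ENNReal.toReal_rpow] at hreal

end BrunnMinkowski

lemma integral_sub_mul_rpow_sub_one {p V : ℝ} (hp : 0 < p) (hV : 0 ≤ V) :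
    ∫ u in (0)..V, (V - u) * u ^ (p - 1) = V ^ (p + 1) / (p * (p + 1)) := by
  have hsplit : EqOn (fun u ↦ (V - u) * u ^ (p - 1)) (fun u ↦ V * u ^ (p - 1) - u ^ p)
      (uIoc 0 V) := by
    intro u hu
    rw [uIoc_of_le hV] at hu
    simp only [sub_mul, ← mul_comm (u ^ (p - 1)) u, ← Real.rpow_add_one hu.1.ne', sub_add_cancel]
  rw [intervalIntegral.integral_congr_ae (.of_forall hsplit), intervalIntegral.integral_sub
    ((intervalIntegral.intervalIntegrable_rpow' (by linarith)).const_mul V)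
    (intervalIntegral.intervalIntegrable_rpow' (by linarith)),
    intervalIntegral.integral_const_mul, integral_rpow (.inl (by linarith)),
    integral_rpow (.inl (by linarith)), sub_add_cancel, Real.zero_rpow hp.ne',
    Real.zero_rpow (by positivity), Real.rpow_add_one' hV (by positivity)]
  field_simp
  ring

section FiniteMeasure

lemma antitone_measureReal_Ici {α : Type*} [Preorder α] [MeasurableSpace α] (ν : Measure α)
    [IsFiniteMeasure ν] : Antitone fun t ↦ ν.real (Ici t) :=
  fun _ _ h ↦ measureReal_mono (Ici_subset_Ici.2 h)

variable {α : Type*} [LinearOrder α] [TopologicalSpace α] [OrderTopology α]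
  [MeasurableSpace α] [BorelSpace α] (ν : Measure α)

lemma measure_setOf_measure_Ici_lt_le [ν.InnerRegular] (v : ℝ≥0∞) :
    ν {t | ν (Ici t) < v} ≤ v := by
  have hanti : Antitone fun t ↦ ν (Ici t) := fun s t hst ↦ measure_mono (Ici_subset_Ici.2 hst)
  have hm : MeasurableSet {t | ν (Ici t) < v} := hanti.measurable measurableSet_Iio
  rw [hm.measure_eq_iSup_isCompact]
  refine iSup₂_le fun C hCv ↦ iSup_le fun hC ↦ ?_
  rcases C.eq_empty_or_nonempty with rfl | hne
  · simp
  obtain ⟨x, hxC, hmin⟩ := hC.exists_isLeast hne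
  calc ν C ≤ ν (Ici x) := measure_mono hmin
    _ ≤ v := (hCv hxC).le

variable [IsFiniteMeasure ν]

lemma integrable_measureReal_Ici_rpow {p : ℝ} (hp : 0 ≤ p) :
    Integrable (fun t ↦ ν.real (Ici t) ^ p) ν := by
  refine .of_bound
    ((antitone_measureReal_Ici ν).measurable.pow_const p).aestronglyMeasurable (ν.real univ ^ p)
    (.of_forall fun t ↦ ?_)
  rw [Real.norm_of_nonneg (by positivity)]
  exact Real.rpow_le_rpow measureReal_nonneg (measureReal_mono (subset_univ _)) hp

variable [ν.InnerRegular]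

lemma measureReal_univ_sub_le_measure_setOf_le_measureReal_Ici {u : ℝ} (hu : 0 ≤ u) :
    ENNReal.ofReal (ν.real univ - u) ≤ ν {t | u ≤ ν.real (Ici t)} := by
  have hcompl : {t | u ≤ ν.real (Ici t)}ᶜ = {t | ν (Ici t) < ENNReal.ofReal u} := by
    ext t
    simp only [mem_compl_iff, mem_ofPred_eq, not_le]
    exact (ENNReal.lt_ofReal_iff_toReal_lt (measure_ne_top ν _)).symm
  have hm : MeasurableSet {t | u ≤ ν.real (Ici t)} :=
    (antitone_measureReal_Ici ν).measurable measurableSet_Ici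
  rw [ENNReal.ofReal_sub _ hu, ofReal_measureReal, tsub_le_iff_right,
    ← measure_add_measure_compl hm, hcompl]
  gcongr
  exact measure_setOf_measure_Ici_lt_le ν _

lemma ofReal_rpow_div_le_lintegral_measureReal_Ici_rpow {p : ℝ} (hp : 0 < p) :
    ENNReal.ofReal (ν.real univ ^ (p + 1) / (p + 1)) ≤
      ∫⁻ t, ENNReal.ofReal (ν.real (Ici t) ^ p) ∂ν := by
  set V := ν.real univ
  have hV : 0 ≤ V := measureReal_nonneg
  have hint : IntegrableOn (fun u ↦ (V - u) * u ^ (p - 1)) (Ioc 0 V) :=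
    (intervalIntegrable_iff_integrableOn_Ioc_of_le hV).1 <|
      (intervalIntegral.intervalIntegrable_rpow' (by linarith)).continuousOn_mul (by fun_prop)
  calc ENNReal.ofReal (V ^ (p + 1) / (p + 1))
    _ = ENNReal.ofReal p * ENNReal.ofReal (∫ u in Ioc 0 V, (V - u) * u ^ (p - 1)) := by
      rw [← intervalIntegral.integral_of_le hV, integral_sub_mul_rpow_sub_one hp hV,
        ← ENNReal.ofReal_mul hp.le]
      congr 1
      field_simp
    _ = ENNReal.ofReal p * ∫⁻ u in Ioc 0 V, ENNReal.ofReal ((V - u) * u ^ (p - 1)) := by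
      rw [ofReal_integral_eq_lintegral_ofReal hint]
      filter_upwards [ae_restrict_mem measurableSet_Ioc] with u hu
      exact mul_nonneg (sub_nonneg.2 hu.2) (Real.rpow_nonneg hu.1.le _)
    _ ≤ ENNReal.ofReal p *
        ∫⁻ u in Ioc 0 V, ν {t | u ≤ ν.real (Ici t)} * ENNReal.ofReal (u ^ (p - 1)) := by
      gcongr ENNReal.ofReal p * ?_
      refine setLIntegral_mono' measurableSet_Ioc fun u hu ↦ ?_
      rw [ENNReal.ofReal_mul (sub_nonneg.2 hu.2)]
      gcongr
      exact measureReal_univ_sub_le_measure_setOf_le_measureReal_Ici ν hu.1.le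
    _ ≤ ENNReal.ofReal p *
        ∫⁻ u in Ioi 0, ν {t | u ≤ ν.real (Ici t)} * ENNReal.ofReal (u ^ (p - 1)) := by
      gcongr
      exact Ioc_subset_Ioi_self
    _ = ∫⁻ t, ENNReal.ofReal (ν.real (Ici t) ^ p) ∂ν :=
      (lintegral_rpow_eq_lintegral_meas_le_mul ν (.of_forall fun _ ↦ measureReal_nonneg)
        (antitone_measureReal_Ici ν).measurable.aemeasurable hp).symm

lemma rpow_div_le_integral_measureReal_Ici_rpow {p : ℝ} (hp : 0 < p) :
    ν.real univ ^ (p + 1) / (p + 1) ≤ ∫ t, ν.real (Ici t) ^ p ∂ν := by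
  have hnonneg : 0 ≤ᵐ[ν] fun t ↦ ν.real (Ici t) ^ p := .of_forall fun t ↦ by positivity
  rw [← ENNReal.ofReal_le_ofReal_iff (integral_nonneg_of_ae hnonneg),
    ofReal_integral_eq_lintegral_ofReal (integrable_measureReal_Ici_rpow ν hp.le) hnonneg]
  exact ofReal_rpow_div_le_lintegral_measureReal_Ici_rpow ν hp

end FiniteMeasure

section RealMeasure

variable (ν : Measure ℝ) [IsFiniteMeasure ν] [NullSingletonClass ν]

lemma continuous_measureReal_Ici : Continuous fun t ↦ ν.real (Ici t) := by
  refine continuous_iff_continuousAt.2 fun t ↦ ?_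
  have hcont := (integrable_const (1 : ℝ) (μ := ν)).integrableOn (s := Ici (t - 1))
    |>.continuousOn_Ici_primitive_Ici
  simpa using hcont.continuousAt (Ici_mem_nhds (sub_one_lt t))

lemma rpow_div_le_measureReal_Ici_average_rpow [NeZero ν] {p : ℝ} (hp : 0 < p)
    {s : Set ℝ} (hs : IsClosed s) (hν : ∀ᵐ t ∂ν, t ∈ s)
    (hint : Integrable (fun t ↦ t) ν) (hconc : ConcaveOn ℝ s fun t ↦ ν.real (Ici t) ^ p) :
    ν.real univ ^ p / (p + 1) ≤ ν.real (Ici (⨍ t, t ∂ν)) ^ p := by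
  have hV : 0 < ν.real univ := measureReal_univ_pos
  have hcont := continuous_measureReal_Ici ν
  calc ν.real univ ^ p / (p + 1)
    _ = (ν.real univ)⁻¹ * (ν.real univ ^ (p + 1) / (p + 1)) := by
      rw [Real.rpow_add_one hV.ne']
      field_simp
    _ ≤ (ν.real univ)⁻¹ * ∫ t, ν.real (Ici t) ^ p ∂ν := by
      gcongr
      exact rpow_div_le_integral_measureReal_Ici_rpow ν hp
    _ = ⨍ t, ν.real (Ici t) ^ p ∂ν := (average_eq _ _).symm
    _ ≤ ν.real (Ici (⨍ t, t ∂ν)) ^ p :=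
      hconc.le_map_average (hcont.rpow_const fun _ ↦ .inr hp.le).continuousOn hs hν hint
        (integrable_measureReal_Ici_rpow ν hp.le)

end RealMeasure

lemma average_map_continuousLinearMap {E F : Type*} [NormedAddCommGroup E] [NormedSpace ℝ E]
    [CompleteSpace E] [MeasurableSpace E] [OpensMeasurableSpace E] [NormedAddCommGroup F]
    [NormedSpace ℝ F] [CompleteSpace F] [MeasurableSpace F] [BorelSpace F]
    [SecondCountableTopology F] {μ : Measure E} (hμ : Integrable (fun x ↦ x) μ) (f : E →L[ℝ] F) :
    ⨍ y, y ∂(μ.map f) = f (⨍ x, x ∂μ) := by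
  have hf : AEMeasurable f μ := f.measurable.aemeasurable
  rw [average_eq, average_eq, map_measureReal_apply f.measurable .univ, preimage_univ,
    integral_map hf (f := fun y ↦ y) aestronglyMeasurable_id, f.integral_comp_comm hμ, map_smul]

section Grunbaum

variable {E : Type*} [NormedAddCommGroup E] [NormedSpace ℝ E] [MeasurableSpace E] [BorelSpace E]
  [FiniteDimensional ℝ E] (μ : Measure E) [μ.IsAddHaarMeasure]

lemma addHaar_preimage_singleton_eq_zero {f : E →ₗ[ℝ] ℝ} (hf : f ≠ 0) (t : ℝ) :
    μ (f ⁻¹' {t}) = 0 := by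
  obtain ⟨c, -, hc⟩ := f.exists_map_addHaar_eq_smul_addHaar μ volume (f.surjective hf)
  rw [← Measure.map_apply f.continuous_of_finiteDimensional.measurable (measurableSet_singleton t),
    hc, Measure.smul_apply, measure_singleton, smul_zero]

variable {K : Set E}

lemma measureReal_rpow_div_le_measureReal_inter_preimage_Ici_rpow (hK : Convex ℝ K)
    (hKc : IsCompact K) (hK₀ : μ K ≠ 0) {f : E →L[ℝ] ℝ} (hf : f ≠ 0) :
    μ.real K ^ (finrank ℝ E : ℝ)⁻¹ / ((finrank ℝ E : ℝ)⁻¹ + 1) ≤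
      μ.real (K ∩ f ⁻¹' Ici (f (⨍ x in K, x ∂μ))) ^ (finrank ℝ E : ℝ)⁻¹ := by
  have : Nontrivial E := not_subsingleton_iff_nontrivial.1 fun _ ↦ hf (Subsingleton.elim _ _)
  have : IsFiniteMeasure (μ.restrict K) := ⟨by simpa using hKc.measure_lt_top⟩
  have : NeZero (μ.restrict K) := ⟨by simpa [Measure.restrict_eq_zero] using hK₀⟩
  set ν := (μ.restrict K).map f
  have hν {S : Set ℝ} (hS : MeasurableSet S) : ν.real S = μ.real (K ∩ f ⁻¹' S) := by
    rw [map_measureReal_apply f.measurable hS,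
      measureReal_restrict_apply (f.measurable hS), inter_comm]
  have : NeZero ν := ⟨(Measure.map_ne_zero_iff f.measurable.aemeasurable).2 (NeZero.ne _)⟩
  have : NullSingletonClass ν := ⟨fun t ↦ by
    rw [Measure.map_apply f.measurable (measurableSet_singleton t)]
    refine le_antisymm ((Measure.restrict_apply_le _ _).trans_eq ?_) zero_le
    exact addHaar_preimage_singleton_eq_zero μ (f := f.toLinearMap)
      (ContinuousLinearMap.coe_injective.ne hf) t⟩
  have hνK : ∀ᵐ t ∂ν, t ∈ f '' K :=
    (ae_map_iff f.measurable.aemeasurable (hKc.image f.continuous).measurableSet).2 <|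
      (ae_restrict_mem hKc.measurableSet).mono fun x hx ↦ mem_image_of_mem f hx
  have hconc : ConcaveOn ℝ (f '' K) fun t ↦ ν.real (Ici t) ^ (finrank ℝ E : ℝ)⁻¹ := by
    simpa only [hν measurableSet_Ici] using
      concaveOn_addHaar_inter_preimage_Ici_rpow μ hK hKc.measurableSet hKc.measure_ne_top f
  have hid : Integrable (fun x ↦ x) (μ.restrict K) := continuousOn_id.integrableOn_compact hKc
  have hfid : Integrable (fun t ↦ t) ν :=
    (integrable_map_measure aestronglyMeasurable_id f.measurable.aemeasurable).2
      (f.integrable_comp hid)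
  have hmain := rpow_div_le_measureReal_Ici_average_rpow ν (p := (finrank ℝ E : ℝ)⁻¹)
    (inv_pos.2 (Nat.cast_pos.2 Module.finrank_pos))
    (hKc.image f.continuous).isClosed hνK hfid hconc
  rwa [average_map_continuousLinearMap hid, hν .univ, hν measurableSet_Ici, preimage_univ,
    inter_univ] at hmain

theorem grunbaum_general (hK : Convex ℝ K) (hKc : IsCompact K) (hK₀ : (interior K).Nonempty)
    {f : E →L[ℝ] ℝ} (hf : f ≠ 0) :
    ENNReal.ofReal ((finrank ℝ E / (finrank ℝ E + 1)) ^ finrank ℝ E) * μ K ≤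
      μ (K ∩ {x | f (⨍ x in K, x ∂μ) ≤ f x}) := by
  have : Nontrivial E := not_subsingleton_iff_nontrivial.1 fun _ ↦ hf (Subsingleton.elim _ _)
  have hd : finrank ℝ E ≠ 0 := Module.finrank_pos.ne'
  have hradius := measureReal_rpow_div_le_measureReal_inter_preimage_Ici_rpow μ hK hKc
    (μ.measure_pos_of_nonempty_interior hK₀).ne' hf
  rw [← ENNReal.ofReal_toReal hKc.measure_ne_top, ← ENNReal.ofReal_mul (by positivity)]
  refine ENNReal.ofReal_le_of_le_toReal ?_
  calc (finrank ℝ E / (finrank ℝ E + 1)) ^ finrank ℝ E * μ.real K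
    _ = (μ.real K ^ (finrank ℝ E : ℝ)⁻¹ / ((finrank ℝ E : ℝ)⁻¹ + 1)) ^ finrank ℝ E := by
      nth_rw 1 [← Real.rpow_inv_natCast_pow (measureReal_nonneg (s := K)) hd,
        ← mul_pow]
      congr 1
      field_simp
      ring
    _ ≤ (μ.real (K ∩ f ⁻¹' Ici (f (⨍ x in K, x ∂μ))) ^ (finrank ℝ E : ℝ)⁻¹) ^ finrank ℝ E := by
      gcongr
    _ = μ.real (K ∩ f ⁻¹' Ici (f (⨍ x in K, x ∂μ))) :=
      Real.rpow_inv_natCast_pow measureReal_nonneg hd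

end Grunbaum

/-- **Grünbaum's inequality.** If `K ⊆ ℝⁿ` is a convex body with centroid at the
origin and `θ` is a unit vector, then `vol_n(K ∩ θ⁺) ≥ (n/(n+1))^n vol_n(K)`. -/
theorem grunbaum
    (n : ℕ) (hn : 1 ≤ n)
    (K : Set (EuclideanSpace ℝ (Fin n)))
    (hK_conv : Convex ℝ K) (hK_comp : IsCompact K) (hK_int : (interior K).Nonempty)
    (hK_cent : (volume K).toReal⁻¹ • (∫ x in K, x) = (0 : EuclideanSpace ℝ (Fin n)))
    (θ : EuclideanSpace ℝ (Fin n)) (hθ : ‖θ‖ = 1) :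
    ENNReal.ofReal (((n : ℝ) / (n + 1)) ^ n) * volume K ≤
      volume (K ∩ {x | 0 ≤ ⟪x, θ⟫}) := by
  have hf : innerSL ℝ θ ≠ 0 := norm_ne_zero_iff.1 (by simp [hθ])
  have hcentroid : ⨍ x in K, x = 0 := by rw [setAverage_eq, measureReal_def, hK_cent]
  simpa [hcentroid, real_inner_comm] using grunbaum_general volume hK_conv hK_comp hK_int hf
end
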